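/- arXiv:2201.02717 — 4 statements merged into one kernel-verified Lean document; each statement's English description precedes it below -/
import Mathlib

section
/- Let I ⊆ J be two homogeneous ideals of R with R/I of finite length, and suppose that all minimal prime ideals P of R satisfy dim(R/P) = dim R. If F(R,R,I)(y) = F(R,R,J)(y) for every complex number y, then J is contained in the tight closure I* of I. -/
open Filter Complex

noncomputable section

/-- The Frobenius bracket power `I^{[q]}` of an ideal. -/
def bracketPow {R : Type*} [CommSemiring R] (I : Ideal R) (q : ℕ) : Ideal R :=
  Ideal.span ((fun x : R => x ^ q) '' (I : Set R))

/-- `x` lies in the tight closure `I*` of `I`. -/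
def MemTightClosure {R : Type*} [CommRing R] (p : ℕ) (I : Ideal R) (x : R) : Prop :=
  ∃ c : R, (∀ P ∈ minimalPrimes R, c ∉ P) ∧
    ∃ N : ℕ, ∀ n : ℕ, N ≤ n → c * x ^ p ^ n ∈ bracketPow I (p ^ n)

/-- `λ_k((M/N)_j)`. -/
def quotPieceDim (k : Type*) {R M : Type*} [Field k] [CommRing R] [Algebra k R]
    [AddCommGroup M] [Module R M] [Module k M] [IsScalarTower k R M]
    (ℳ : ℤ → Submodule k M) (N : Submodule R M) (j : ℤ) : ℕ :=
  Module.finrank k ((ℳ j).map (N.mkQ.restrictScalars k))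

/-- `F_n(M,R,I,d)(y)`. -/
def FnGen (k : Type*) {R M : Type*} [Field k] [CommRing R] [Algebra k R]
    [AddCommGroup M] [Module R M] [Module k M] [IsScalarTower k R M]
    (ℳ : ℤ → Submodule k M) (I : Ideal R) (p d n : ℕ) (y : ℂ) : ℂ :=
  (1 / (p : ℂ) ^ n) ^ d *
    ∑' j : ℤ, (quotPieceDim k (R := R) ℳ (bracketPow I (p ^ n) • ⊤) j : ℂ) *
      Complex.exp (-Complex.I * y * (j : ℂ) / (p : ℂ) ^ n)


lemma exists_theta (k : Type) [Field k] (p : ℕ) (hp : p.Prime) [CharP k p] (n : ℕ) (c : k) (hc : c ≠ 0) :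
    ∃ θ : k →+ k, (∀ u v, θ (u * v ^ p ^ n) = θ u * v) ∧ θ c = 1 := by
  have := Fact.mk hp
  let F := (iterateFrobenius k p n).fieldRange
  obtain ⟨f, hf⟩ : ∃ f : Module.Dual F k, f c ≠ 0 := by
    by_contra! h
    exact hc ((Module.forall_dual_apply_eq_zero_iff F c).1 h)
  let e : k ≃+* F := RingHom.rangeRestrictFieldEquiv (iterateFrobenius k p n)
  let t : k →+ k := (e.symm : F →+* k).toAddMonoidHom.comp f.toAddMonoidHom
  have ht : ∀ u, t u = e.symm (f u) := fun _ => rfl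
  have htc : t c ≠ 0 := by
    rw [ht]; simpa using hf
  refine ⟨(AddMonoidHom.mulRight (t c)⁻¹).comp t, ?_, ?_⟩
  · intro u v
    have h1 : u * v ^ p ^ n = (e v) • u := by
      rw [Subfield.smul_def, smul_eq_mul, mul_comm]; rfl
    simp only [AddMonoidHom.comp_apply, AddMonoidHom.coe_mulRight]
    rw [h1, ht, map_smul, ht u]
    simp
    ring
  · simp [htc]

lemma psi_mul (k : Type) [Field k] (p : ℕ) (hp : p.Prime) [CharP k p] (n : ℕ) (σ : Type) (α : σ →₀ ℕ)
   (hα : ∀ i, α i < p ^ n) (θ : k →+ k) (hθ : ∀ u v, θ (u * v ^ p ^ n) = θ u * v)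
   (ψ : MvPolynomial σ k →+ MvPolynomial σ k) (hψ : ∀ f γ, (ψ f).coeff γ = θ (f.coeff (α + p ^ n • γ)))
   (a b : MvPolynomial σ k) : ψ (a * b ^ p ^ n) = ψ a * b := by
  have := Fact.mk hp
  classical
  induction b using MvPolynomial.induction_on' with
  | add f g hf hg => rw [add_pow_char_pow, mul_add, map_add, hf, hg, mul_add]
  | monomial ν v =>
    induction a using MvPolynomial.induction_on' with
    | add f g hf hg => rw [add_mul, map_add, hf, hg, map_add, add_mul]
    | monomial μ u =>
      ext γ
      rw [hψ, MvPolynomial.monomial_pow, MvPolynomial.monomial_mul, MvPolynomial.coeff_monomial,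
        MvPolynomial.coeff_mul_monomial', hψ, MvPolynomial.coeff_monomial]
      have hpos : 0 < p ^ n := pow_pos hp.pos n
      by_cases h1 : ν ≤ γ
      · have h3 : μ + p ^ n • ν = α + p ^ n • γ ↔ μ = α + p ^ n • (γ - ν) := by
          obtain ⟨δ, rfl⟩ := exists_add_of_le h1
          rw [add_tsub_cancel_left, smul_add, add_comm (p ^ n • ν), ← add_assoc]
          exact add_left_inj _
        simp only [h1, h3, if_true]
        split_ifs
        · exact hθ u v
        · simp
      · rw [if_neg h1, if_neg, map_zero]
        intro h
        apply h1
        intro i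
        have h2 := DFunLike.congr_fun h i
        simp at h2
        have h4 := hα i
        by_contra! h5
        have : p ^ n * (γ i + 1) ≤ p ^ n * ν i := Nat.mul_le_mul_left _ h5
        rw [mul_add] at this
        omega

lemma exists_psi (k : Type) [Field k] (σ : Type) (q : ℕ) (hq : 0 < q) (α : σ →₀ ℕ) (θ : k →+ k) :
    ∃ ψ : MvPolynomial σ k →+ MvPolynomial σ k,
      ∀ f γ, (ψ f).coeff γ = θ (f.coeff (α + q • γ)) := by
  have hinj : Function.Injective (fun γ : σ →₀ ℕ => α + q • γ) := by
    intro a b h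
    ext i
    have := DFunLike.congr_fun h i
    simp at this
    omega
  refine ⟨⟨⟨fun f => AddMonoidAlgebra.ofCoeff (Finsupp.mapRange θ (map_zero θ) (Finsupp.comapDomain (fun γ : σ →₀ ℕ => α + q • γ) (AddMonoidAlgebra.coeff f) hinj.injOn)), ?_⟩, ?_⟩, ?_⟩
  · ext γ; simp [MvPolynomial.coeff]
  · intro f g; ext γ; simp [MvPolynomial.coeff]
  · intro f γ
    simp [MvPolynomial.coeff]

/-- For a nonzero polynomial with small exponents there is a `p^{-n}`-linear map sending it to `1`. -/
lemma exists_trace (k : Type) [Field k] (p : ℕ) (hp : p.Prime) [CharP k p] (n : ℕ) (σ : Type)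
   (f : MvPolynomial σ k) (hf : f ≠ 0) (hdeg : ∀ m ∈ f.support, ∀ i, m i < p ^ n) :
   ∃ ψ : MvPolynomial σ k →+ MvPolynomial σ k, (∀ a b, ψ (a * b ^ p ^ n) = ψ a * b) ∧ ψ f = 1 := by
  classical
  obtain ⟨α, hα⟩ := MvPolynomial.support_nonempty.2 hf
  obtain ⟨θ, hθ, hθ1⟩ := exists_theta k p hp n (f.coeff α) (MvPolynomial.mem_support_iff.1 hα)
  obtain ⟨ψ, hψ⟩ := exists_psi k σ (p ^ n) (pow_pos hp.pos n) α θ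
  refine ⟨ψ, psi_mul k p hp n σ α (hdeg α hα) θ hθ ψ hψ, ?_⟩
  ext γ
  rw [hψ, MvPolynomial.coeff_one]
  split_ifs with h
  · subst h; simpa using hθ1
  · have : f.coeff (α + p ^ n • γ) = 0 := by
      by_contra h2
      apply h
      ext i
      have h3 := hdeg _ (MvPolynomial.mem_support_iff.2 h2) i
      simp at h3
      by_contra h4
      have : p ^ n * 1 ≤ p ^ n * γ i := Nat.mul_le_mul_left _ (by simp at h4; omega)
      omega
    rw [this, map_zero]


section
variable {A R : Type} [CommRing A] [CommRing R] [Algebra A R]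

lemma span_pow (p : ℕ) (hp : p.Prime) [CharP R p] {D : ℕ} (b : Fin D → R) (e : ℕ) (r : R) (s : ℕ)
    (h : r ∈ Submodule.span A (Set.range fun i => b i ^ s)) :
    r ^ p ^ e ∈ Submodule.span A (Set.range fun i => b i ^ (s * p ^ e)) := by
  have := Fact.mk hp
  rw [Submodule.mem_span_range_iff_exists_fun] at h ⊢
  obtain ⟨c, rfl⟩ := h
  refine ⟨fun i => c i ^ p ^ e, ?_⟩
  rw [sum_pow_char_pow]
  exact Finset.sum_congr rfl fun i _ => by rw [smul_pow, pow_mul]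

lemma smul_span_trans {D E : ℕ} (b : Fin D → R) (g : Fin E → R) (c c' : A) (r : R)
    (h : c • r ∈ Submodule.span A (Set.range b))
    (h' : ∀ i, c' • b i ∈ Submodule.span A (Set.range g)) :
    (c * c') • r ∈ Submodule.span A (Set.range g) := by
  rw [Submodule.mem_span_range_iff_exists_fun] at h
  obtain ⟨a, ha⟩ := h
  rw [mul_comm, mul_smul, ← ha, Finset.smul_sum]
  refine Submodule.sum_mem _ fun i _ => ?_
  rw [smul_comm]
  exact Submodule.smul_mem _ _ (h' i)

lemma span_swap [IsDomain A] {D : ℕ} (b g : Fin D → R) (hg : LinearIndependent A g) (c : A) (hc : c ≠ 0)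
    (h : ∀ i, c • g i ∈ Submodule.span A (Set.range b)) :
    ∃ c' : A, c' ≠ 0 ∧ ∀ i, c' • b i ∈ Submodule.span A (Set.range g) := by
  simp_rw [Submodule.mem_span_range_iff_exists_fun] at h
  choose M hM using h
  let N : Matrix (Fin D) (Fin D) A := Matrix.of M
  refine ⟨N.det, ?_, ?_⟩
  · intro h0
    obtain ⟨v, hv, hv0⟩ := Matrix.exists_vecMul_eq_zero_iff.2 h0
    apply hv
    have h1 : ∑ i, (c * v i) • g i = 0 := by
      calc ∑ i, (c * v i) • g i = ∑ i, v i • (c • g i) := by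
            refine Finset.sum_congr rfl fun i _ => ?_
            rw [mul_comm, mul_smul]
        _ = ∑ i, v i • ∑ j, M i j • b j := by simp_rw [hM]
        _ = ∑ j, (∑ i, v i * M i j) • b j := by
            simp_rw [Finset.smul_sum, Finset.sum_smul, mul_smul]
            rw [Finset.sum_comm]
        _ = 0 := by
            refine Finset.sum_eq_zero fun j _ => ?_
            have : ∑ i, v i * M i j = 0 := congrFun hv0 j
            rw [this, zero_smul]
    have h2 := Fintype.linearIndependent_iff.1 hg _ h1
    funext i
    simpa [hc] using h2 i
  · intro i
    have h1 : N.det • b i = ∑ j, N.adjugate i j • (c • g j) := by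
      simp_rw [← hM, Finset.smul_sum]
      rw [Finset.sum_comm]
      have h2 := Matrix.adjugate_mul N
      calc N.det • b i = ∑ l, ((N.adjugate * N) i l) • b l := by
            rw [h2]
            simp [Matrix.smul_apply, Matrix.one_apply]
        _ = _ := by
            refine Finset.sum_congr rfl fun l _ => ?_
            rw [Matrix.mul_apply, Finset.sum_smul]
            refine Finset.sum_congr rfl fun j _ => ?_
            rw [mul_smul]; rfl
    rw [h1]
    exact Submodule.sum_mem _ fun j _ => Submodule.smul_mem _ _ (Submodule.smul_mem _ _ (Submodule.subset_span ⟨j, rfl⟩))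

lemma exists_gamma_aux [IsDomain A] [Module.Finite A R] (p : ℕ) (hp : p.Prime) [CharP R p] :
    ∃ (e₀ D : ℕ) (b : Fin D → R) (c : A), c ≠ 0 ∧
      (∀ e, LinearIndependent A (fun i => b i ^ p ^ e)) ∧
      (∀ r : R, c • r ^ p ^ e₀ ∈ Submodule.span A (Set.range b)) := by
  classical
  let P : ℕ → Prop := fun D => ∃ (e₀ : ℕ) (b : Fin D → R) (c : A), c ≠ 0 ∧
      (∀ r : R, c • r ^ p ^ e₀ ∈ Submodule.span A (Set.range b))
  have hP : ∃ D, P D := by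
    obtain ⟨D, b, hb⟩ := Module.Finite.exists_fin (R := A) (M := R)
    exact ⟨D, 0, b, 1, one_ne_zero, fun r => by rw [hb]; trivial⟩
  obtain ⟨e₀, b, c, hc, hr⟩ := Nat.find_spec hP
  have hmin : ∀ D, P D → Nat.find hP ≤ D := fun D h => Nat.find_min' hP h
  generalize Nat.find hP = D at *
  refine ⟨e₀, D, b, c, hc, ?_, hr⟩
  intro e
  by_contra hli
  rw [Fintype.linearIndependent_iff] at hli
  push Not at hli
  obtain ⟨a, ha, i₀, hi₀⟩ := hli
  obtain ⟨D, rfl⟩ : ∃ D', D = D' + 1 := ⟨D - 1, by have := i₀.2; omega⟩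
  have : D + 1 ≤ D := by
    apply hmin
    refine ⟨e₀ + e, fun j => b (i₀.succAbove j) ^ p ^ e, c ^ p ^ e * a i₀, mul_ne_zero (pow_ne_zero _ hc) hi₀, ?_⟩
    intro r
    apply smul_span_trans (fun i => b i ^ p ^ e)
    · have := span_pow p hp b e _ 1 (by simpa using hr r)
      rw [one_mul, smul_pow, ← pow_mul, ← pow_add] at this
      exact this
    · intro i
      by_cases hi : i = i₀
      · subst hi
        rw [Fin.sum_univ_succAbove _ i] at ha
        rw [eq_neg_of_add_eq_zero_left ha]
        exact Submodule.neg_mem _ (Submodule.sum_mem _ fun j _ => Submodule.smul_mem _ _ (Submodule.subset_span ⟨j, rfl⟩))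
      · obtain ⟨j, rfl⟩ := Fin.exists_succAbove_eq hi
        exact Submodule.smul_mem _ _ (Submodule.subset_span ⟨j, rfl⟩)
  omega

lemma exists_gamma [IsDomain A] [Module.Finite A R] (p : ℕ) (hp : p.Prime) [CharP R p] :
    ∃ (e₀ D : ℕ) (b g : Fin D → R) (c : A), c ≠ 0 ∧ (∀ i, g i = b i ^ p ^ e₀) ∧
      (∀ e, LinearIndependent A (fun i => g i ^ p ^ e)) ∧
      (∀ (e : ℕ) (r : R), c ^ p ^ e • r ^ p ^ e₀ ∈ Submodule.span A (Set.range fun i => g i ^ p ^ e)) := by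
  obtain ⟨e₀, D, b, c, hc, hli, hb⟩ := exists_gamma_aux (A := A) (R := R) p hp
  have key : ∀ e, ∃ c' : A, c' ≠ 0 ∧ ∀ r : R, c' • r ^ p ^ e₀ ∈ Submodule.span A (Set.range fun i => b i ^ p ^ (e₀ + e)) := by
    intro e
    obtain ⟨c', hc', h'⟩ := span_swap b (fun i => b i ^ p ^ (e₀ + e)) (hli _) c hc (fun i => by
      have := hb (b i ^ p ^ e)
      rwa [← pow_mul, ← pow_add, add_comm] at this)
    exact ⟨c * c', mul_ne_zero hc hc', fun r => smul_span_trans b _ c c' _ (hb r) h'⟩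
  obtain ⟨c0, hc0, h0⟩ := key 0
  obtain ⟨c1, hc1, h1⟩ := key 1
  let g : Fin D → R := fun i => b i ^ p ^ e₀
  have hg : ∀ i e, g i ^ p ^ e = b i ^ p ^ (e₀ + e) := fun i e => by
    simp only [g]; rw [← pow_mul, ← pow_add]
  let d := c0 * c1
  have hd0 : ∀ r : R, d • r ^ p ^ e₀ ∈ Submodule.span A (Set.range g) := fun r => by
    simp only [d]; rw [mul_comm, mul_smul]; exact Submodule.smul_mem _ _ (h0 r)
  have hd1 : ∀ r : R, d • r ^ p ^ e₀ ∈ Submodule.span A (Set.range fun i => g i ^ p) := fun r => by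
    simp only [d]; rw [mul_smul]
    refine Submodule.smul_mem _ _ ?_
    have := h1 r
    simp_rw [← hg, pow_one] at this
    exact this
  refine ⟨e₀, D, b, g, d ^ 2, pow_ne_zero _ (mul_ne_zero hc0 hc1), fun _ => rfl, fun e => ?_, fun e => ?_⟩
  · simp_rw [hg]; exact hli _
  · induction e with
    | zero =>
      intro r
      simp only [pow_zero, pow_one]
      rw [pow_two, mul_smul]
      exact Submodule.smul_mem _ _ (hd0 r)
    | succ e ih =>
      intro r
      have h2 := smul_span_trans (fun i => g i ^ p ^ e) (fun i => g i ^ p ^ (e + 1)) _ (d ^ p ^ e) _ (ih r) (fun i => by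
        have := span_pow p hp g e _ p (hd1 (b i))
        rw [smul_pow] at this
        rw [pow_succ']
        exact this)
      have h3 : (d ^ 2) ^ p ^ (e + 1) = d ^ (2 * p ^ (e + 1) - (2 * p ^ e + p ^ e)) * ((d ^ 2) ^ p ^ e * d ^ p ^ e) := by
        rw [← pow_mul, ← pow_mul, ← pow_add, ← pow_add]
        congr 1
        have : 2 * p ^ e ≤ p ^ (e + 1) := by rw [pow_succ']; exact Nat.mul_le_mul_right _ hp.two_le
        omega
      rw [h3, mul_smul]
      exact Submodule.smul_mem _ _ h2
end

lemma sum_rearrange {A R : Type} [CommRing A] [CommRing R] [Algebra A R] {n D E : ℕ}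
    (u : Fin n → Fin D → A) (v : Fin n → Fin D → Fin E → A) (w : Fin E → R) :
    ∑ l, ∑ i, u l i • ∑ m, v l i m • w m = ∑ m, (∑ l, ∑ i, u l i * v l i m) • w m := by
  simp_rw [Finset.smul_sum, Finset.sum_smul, smul_smul]
  rw [Finset.sum_comm]
  simp_rw [Finset.sum_comm (s := (Finset.univ : Finset (Fin n)))]
  rw [Finset.sum_comm]

lemma mem_bracketPow {R : Type} [CommRing R] {I : Ideal R} {q : ℕ} {x : R} (h : x ∈ bracketPow I q) :
    ∃ (n : ℕ) (r f : Fin n → R), (∀ l, f l ∈ I) ∧ x = ∑ l, r l * f l ^ q := by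
  obtain ⟨n, r, g, h⟩ := Submodule.mem_span_set'.1 h
  have hg : ∀ l, ∃ y ∈ I, y ^ q = (g l : R) := fun l => (g l).2
  choose f hf hfg using hg
  refine ⟨n, r, f, hf, ?_⟩
  rw [← h]
  exact Finset.sum_congr rfl fun l _ => by rw [hfg, smul_eq_mul]

lemma pow_mem_bracketPow {R : Type} [CommRing R] {I : Ideal R} (q : ℕ) {x : R} (h : x ∈ I) :
    x ^ q ∈ bracketPow I q := Submodule.subset_span ⟨x, h, rfl⟩

lemma key_step {k R : Type} [Field k] [CommRing R] (s : ℕ) [Algebra (MvPolynomial (Fin s) k) R]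
    (p : ℕ) (hp : p.Prime) [CharP R p] [CharP k p] (e₀ D : ℕ) (b g : Fin D → R)
    (c : MvPolynomial (Fin s) k) (hgb : ∀ i, g i = b i ^ p ^ e₀)
    (hli : ∀ e, LinearIndependent (MvPolynomial (Fin s) k) (fun i => g i ^ p ^ e))
    (hspan : ∀ (e : ℕ) (r : R), c ^ p ^ e • r ^ p ^ e₀ ∈
      Submodule.span (MvPolynomial (Fin s) k) (Set.range fun i => g i ^ p ^ e))
    (I : Ideal R) (x : R) (e e' : ℕ)
    (hnot : ¬ (c ^ 2 • x ^ p ^ (e + e₀) ∈ bracketPow I (p ^ (e + e₀))))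
    (f : MvPolynomial (Fin s) k) (hdeg : ∀ i, f.degreeOf i < p ^ e')
    (hf : f • x ^ p ^ (e + e₀ + e') ∈ bracketPow I (p ^ (e + e₀ + e'))) : f = 0 := by
  have := Fact.mk hp
  by_contra hf0
  apply hnot
  let A := MvPolynomial (Fin s) k
  obtain ⟨n, r, y, hy, hsum⟩ := mem_bracketPow hf
  have hspan0 : ∀ r : R, ∃ a : Fin D → A, ∑ i, a i • g i = c • r ^ p ^ e₀ := by
    intro r
    have := hspan 0 r
    simp only [pow_zero, pow_one] at this
    exact (Submodule.mem_span_range_iff_exists_fun _).1 this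
  have hspan' : ∀ r : R, ∃ a : Fin D → A, ∑ i, a i • g i ^ p ^ (e₀ + e') = c ^ p ^ (e₀ + e') • r ^ p ^ e₀ :=
    fun r => (Submodule.mem_span_range_iff_exists_fun _).1 (hspan (e₀ + e') r)
  choose a ha using fun l => hspan' (r l)
  obtain ⟨ξ, hξ⟩ := hspan0 (x ^ p ^ e)
  choose φ hφ using fun l i => hspan0 (y l ^ p ^ e * b i)
  set Q := p ^ (e₀ + e') with hQ
  -- the exponent identity
  have hexp : p ^ (e + e₀ + e') * p ^ e₀ = p ^ e * p ^ e₀ * Q := by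
    rw [hQ, ← pow_add, ← pow_add, ← pow_add]; congr 1; omega
  have hmul : ∀ (z : R), (z ^ p ^ (e + e₀ + e')) ^ p ^ e₀ = ((z ^ p ^ e) ^ p ^ e₀) ^ Q := by
    intro z
    rw [← pow_mul, ← pow_mul, ← pow_mul, hexp, mul_assoc]
  have hξQ : (c • (x ^ p ^ e) ^ p ^ e₀) ^ Q = ∑ m, ξ m ^ Q • g m ^ Q := by
    rw [← hξ, hQ, sum_pow_char_pow]
    exact Finset.sum_congr rfl fun m _ => smul_pow _ _ _
  have hφQ : ∀ l i, (c • (y l ^ p ^ e * b i) ^ p ^ e₀) ^ Q = ∑ m, φ l i m ^ Q • g m ^ Q := by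
    intro l i
    rw [← hφ, hQ, sum_pow_char_pow]
    exact Finset.sum_congr rfl fun m _ => smul_pow _ _ _
  have hmain : ∑ m, (f ^ p ^ e₀ * (c * ξ m) ^ Q) • g m ^ Q
      = ∑ m, (∑ l, ∑ i, a l i * φ l i m ^ Q) • g m ^ Q := by
    calc ∑ m, (f ^ p ^ e₀ * (c * ξ m) ^ Q) • g m ^ Q
        = (f ^ p ^ e₀ * c ^ Q) • ∑ m, ξ m ^ Q • g m ^ Q := by
          rw [Finset.smul_sum]
          refine Finset.sum_congr rfl fun m _ => ?_
          rw [mul_pow, smul_smul, mul_assoc]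
      _ = (c ^ Q * c ^ Q) • (f • x ^ p ^ (e + e₀ + e')) ^ p ^ e₀ := by
          rw [← hξQ, smul_pow, smul_pow, hmul, smul_smul, smul_smul]
          congr 1; ring
      _ = (c ^ Q * c ^ Q) • ∑ l, r l ^ p ^ e₀ * ((y l ^ p ^ e) ^ p ^ e₀) ^ Q := by
          rw [hsum, sum_pow_char_pow]
          congr 1
          exact Finset.sum_congr rfl fun l _ => by rw [mul_pow, hmul]
      _ = ∑ l, ∑ i, a l i • (c • (y l ^ p ^ e * b i) ^ p ^ e₀) ^ Q := by
          rw [Finset.smul_sum]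
          refine Finset.sum_congr rfl fun l _ => ?_
          rw [mul_smul, ← smul_mul_assoc (c ^ Q) (r l ^ p ^ e₀), ← ha, Finset.sum_mul, Finset.smul_sum]
          refine Finset.sum_congr rfl fun i _ => ?_
          rw [mul_pow (y l ^ p ^ e), ← hgb, smul_pow, mul_pow, smul_mul_assoc, smul_comm, mul_comm (g i ^ Q)]
      _ = ∑ l, ∑ i, a l i • ∑ m, φ l i m ^ Q • g m ^ Q := by simp_rw [hφQ]
      _ = _ := by
          exact sum_rearrange a (fun l i m => φ l i m ^ Q) (fun m => g m ^ Q)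
  have hcoef : ∀ m, f ^ p ^ e₀ * (c * ξ m) ^ Q = ∑ l, ∑ i, a l i * φ l i m ^ Q := by
    have h := Fintype.linearIndependent_iff.1 (hli (e₀ + e'))
      (fun m => f ^ p ^ e₀ * (c * ξ m) ^ Q - ∑ l, ∑ i, a l i * φ l i m ^ Q) (by
        rw [← sub_eq_zero.2 hmain, ← Finset.sum_sub_distrib]
        exact Finset.sum_congr rfl fun m _ => sub_smul _ _ _)
    exact fun m => sub_eq_zero.1 (h m)
  obtain ⟨ψ, hψ, hψ1⟩ := exists_trace k p hp (e₀ + e') (Fin s) (f ^ p ^ e₀) (pow_ne_zero _ hf0) (by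
    intro m hm i
    calc m i ≤ (f ^ p ^ e₀).degreeOf i := MvPolynomial.monomial_le_degreeOf i hm
      _ ≤ p ^ e₀ * f.degreeOf i := MvPolynomial.degreeOf_pow_le _ _ _
      _ < p ^ (e₀ + e') := by
        rw [pow_add]; exact Nat.mul_lt_mul_of_pos_left (hdeg i) (pow_pos hp.pos _))
  have hres : ∀ m, c * ξ m = ∑ l, ∑ i, ψ (a l i) * φ l i m := by
    intro m
    have h := congrArg ψ (hcoef m)
    rw [hψ, hψ1, one_mul] at h
    rw [h]
    simp_rw [map_sum]
    exact Finset.sum_congr rfl fun l _ => Finset.sum_congr rfl fun i _ => hψ _ _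
  have hfin : c ^ 2 • x ^ p ^ (e + e₀) = ∑ l, ∑ i, ψ (a l i) • (c • (y l ^ p ^ e * b i) ^ p ^ e₀) := by
    calc c ^ 2 • x ^ p ^ (e + e₀) = c • (c • (x ^ p ^ e) ^ p ^ e₀) := by
          rw [smul_smul, pow_two, ← pow_mul, ← pow_add]
      _ = ∑ m, (c * ξ m) • g m := by
          rw [← hξ, Finset.smul_sum]; simp_rw [smul_smul]
      _ = _ := by
          simp_rw [hres, ← hφ]
          exact (sum_rearrange (fun l i => ψ (a l i)) φ g).symm
  rw [hfin]
  refine Submodule.sum_mem _ fun l _ => Submodule.sum_mem _ fun i _ => ?_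
  rw [smul_smul, Algebra.smul_def, mul_pow, ← pow_mul, ← pow_add, mul_comm (y l ^ _), ← mul_assoc]
  exact Ideal.mul_mem_left _ _ (pow_mem_bracketPow _ (hy l))


lemma bracketPow_homogeneous {k R : Type} [Field k] [CommRing R] [Algebra k R]
    (p : ℕ) (hp : p.Prime) [CharP R p] (𝒜 : ℤ → Submodule k R) [GradedAlgebra 𝒜]
    (I : Ideal R) (hI : Ideal.IsHomogeneous 𝒜 I) (n : ℕ) :
    Ideal.IsHomogeneous 𝒜 (bracketPow I (p ^ n)) := by
  classical
  have := Fact.mk hp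
  have h : bracketPow I (p ^ n) = Ideal.span ((fun x : R => x ^ p ^ n) '' {y | y ∈ I ∧ SetLike.IsHomogeneousElem 𝒜 y}) := by
    apply le_antisymm
    · refine Ideal.span_le.2 ?_
      rintro _ ⟨y, hy, rfl⟩
      change y ^ p ^ n ∈ _
      rw [← DirectSum.sum_support_decompose 𝒜 y, sum_pow_char_pow]
      refine Submodule.sum_mem _ fun i _ => Submodule.subset_span ⟨_, ⟨hI i hy, i, SetLike.coe_mem _⟩, rfl⟩
    · apply Ideal.span_mono
      apply Set.image_mono
      exact fun y hy => hy.1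
  rw [h]
  apply Ideal.homogeneous_span
  rintro _ ⟨y, ⟨_, i, hi⟩, rfl⟩
  exact ⟨p ^ n • i, SetLike.pow_mem_graded _ hi⟩

lemma tsum_quotPieceDim {k R : Type} [Field k] [CommRing R] [Algebra k R]
    (𝒜 : ℤ → Submodule k R) [GradedAlgebra 𝒜] (N : Ideal R) (hN : Ideal.IsHomogeneous 𝒜 N)
    [Module.Finite k (R ⧸ N)] :
    ∑' j : ℤ, (quotPieceDim k (R := R) 𝒜 N j : ℂ) = Module.finrank k (R ⧸ N) := by
  classical
  let V : ℤ → Submodule k (R ⧸ N) := fun j => (𝒜 j).map ((Submodule.mkQ N).restrictScalars k)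
  have hfin : Module.Finite k (R ⧸ N) := inferInstance
  let π : ℤ → (R ⧸ N) →ₗ[k] (R ⧸ N) := fun j =>
    (N.restrictScalars k).mapQ (N.restrictScalars k) (GradedAlgebra.proj 𝒜 j) (fun x hx => hN j hx)
  have hπ : ∀ j x, π j (Submodule.mkQ N x) = Submodule.mkQ N (GradedAlgebra.proj 𝒜 j x) := fun j x => rfl
  have hind : iSupIndep V := by
    rw [iSupIndep_def]
    intro j
    rw [Submodule.disjoint_def]
    rintro x ⟨y, hy, rfl⟩ hx
    have h1 : (⨆ i, ⨆ (_ : i ≠ j), V i) ≤ LinearMap.ker (π j) := by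
      refine iSup₂_le fun i hij => ?_
      rintro _ ⟨z, hz, rfl⟩
      rw [LinearMap.mem_ker, LinearMap.restrictScalars_apply, hπ, GradedAlgebra.proj_apply,
        DirectSum.decompose_of_mem_ne 𝒜 hz hij, map_zero]
    have h2 := h1 hx
    rw [LinearMap.mem_ker, LinearMap.restrictScalars_apply, hπ, GradedAlgebra.proj_apply,
        DirectSum.decompose_of_mem_same 𝒜 hy] at h2
    exact h2
  have htop : iSup V = ⊤ := by
    simp only [V]
    rw [← Submodule.map_iSup, (DirectSum.Decomposition.isInternal 𝒜).submodule_iSup_eq_top,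
      Submodule.map_top, LinearMap.range_eq_top]
    exact Submodule.mkQ_surjective N
  have hInternal : DirectSum.IsInternal V := DirectSum.isInternal_submodule_of_iSupIndep_of_iSup_eq_top hind htop
  have hVfin : {i | V i ≠ ⊥}.Finite := WellFoundedGT.finite_ne_bot_of_iSupIndep hind
  let _ : Fintype {i // V i ≠ ⊥} := hVfin.fintype
  let _ : Fintype {i | V i ≠ ⊥} := hVfin.fintype
  have hInternal2 := DirectSum.isInternal_ne_bot_iff.mpr hInternal
  have h1 := (LinearEquiv.ofBijective (DirectSum.coeLinearMap fun i : {i // V i ≠ ⊥} => V i) hInternal2).finrank_eq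
  rw [Module.finrank_directSum] at h1
  have hq : ∀ j, quotPieceDim k (R := R) 𝒜 N j = Module.finrank k (V j) := fun j => rfl
  rw [tsum_eq_sum (s := hVfin.toFinset)]
  · rw [← h1, Nat.cast_sum, ← Finset.sum_coe_sort]
    symm
    exact Fintype.sum_equiv hVfin.subtypeEquivToFinset _ _ (fun i ↦ rfl)
  · intro j hj
    have : V j = ⊥ := by simpa using hj
    rw [hq, this]
    simp

lemma finite_quot_bracketPow {k R : Type} [Field k] [CommRing R] [Algebra k R] [Algebra.FiniteType k R]
    (I : Ideal R) (hI : IsFiniteLength R (R ⧸ I)) (q : ℕ) :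
    Module.Finite k (R ⧸ bracketPow I q) := by
  rw [Module.finite_iff_krullDimLE_zero]
  have hart : IsArtinianRing (R ⧸ I) := by
    have h1 := (isFiniteLength_iff_isNoetherian_isArtinian.1 hI).2
    exact isArtinian_of_tower R h1
  apply Ring.KrullDimLE.mk₀
  intro P hP
  have hsurj : Function.Surjective (Ideal.Quotient.mk (bracketPow I q)) := Ideal.Quotient.mk_surjective
  let P' := P.comap (Ideal.Quotient.mk (bracketPow I q))
  have hP' : P'.IsPrime := Ideal.comap_isPrime _ _
  have hIP : I ≤ P' := by
    intro y hy
    refine hP'.mem_of_pow_mem q ?_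
    change Ideal.Quotient.mk (bracketPow I q) (y ^ q) ∈ P
    rw [Ideal.Quotient.eq_zero_iff_mem.2 (pow_mem_bracketPow q hy)]
    exact P.zero_mem
  have hmax' : P'.IsMaximal := by
    have h2 : (P'.map (Ideal.Quotient.mk I)).IsPrime :=
      Ideal.map_isPrime_of_surjective Ideal.Quotient.mk_surjective (by rwa [Ideal.mk_ker])
    have h3 : (P'.map (Ideal.Quotient.mk I)).IsMaximal := inferInstance
    have h4 := Ideal.comap_isMaximal_of_surjective (Ideal.Quotient.mk I) Ideal.Quotient.mk_surjective (K := P'.map (Ideal.Quotient.mk I))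
    rwa [Ideal.comap_map_of_surjective _ Ideal.Quotient.mk_surjective, ← RingHom.ker_eq_comap_bot, Ideal.mk_ker, sup_eq_left.2 hIP] at h4
  have h5 : P = P'.map (Ideal.Quotient.mk (bracketPow I q)) := (Ideal.map_comap_of_surjective _ hsurj P).symm
  rw [h5]
  refine (Ideal.map_eq_top_or_isMaximal_of_surjective _ hsurj hmax').resolve_left ?_
  rw [← h5]
  exact hP.ne_top

lemma FnGen_zero {k R : Type} [Field k] [CommRing R] [Algebra k R] [Algebra.FiniteType k R]
    (p : ℕ) (hp : p.Prime) [CharP R p] (𝒜 : ℤ → Submodule k R) [GradedAlgebra 𝒜] (d : ℕ)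
    (I : Ideal R) (hI : Ideal.IsHomogeneous 𝒜 I) (hIfl : IsFiniteLength R (R ⧸ I)) (n : ℕ) :
    FnGen k 𝒜 I p d n 0 = (1 / (p : ℂ) ^ n) ^ d * Module.finrank k (R ⧸ bracketPow I (p ^ n)) := by
  have := finite_quot_bracketPow (k := k) I hIfl (p ^ n)
  rw [← tsum_quotPieceDim 𝒜 _ (bracketPow_homogeneous p hp 𝒜 I hI n), FnGen, smul_eq_mul, Ideal.mul_top]
  simp


lemma dim_le_of_integral {A R : Type} [CommRing A] [CommRing R] (f : A →+* R) (hf : f.IsIntegral) :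
    ringKrullDim R ≤ ringKrullDim A := by
  let _ := f.toAlgebra
  have : Algebra.IsIntegral A R := ⟨hf⟩
  refine Order.krullDim_le_of_strictMono (PrimeSpectrum.comap (algebraMap A R)) ?_
  intro P Q h
  exact Ideal.IsIntegral.comap_lt_comap (R := A) (I := P.asIdeal) (J := Q.asIdeal) h

lemma le_dim_of_integral {A R : Type} [CommRing A] [CommRing R] [Algebra A R] [Algebra.IsIntegral A R]
    (hinj : Function.Injective (algebraMap A R)) (n : ℕ) (hn : (n : WithBot ℕ∞) ≤ ringKrullDim A) :
    (n : WithBot ℕ∞) ≤ ringKrullDim R := by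
  obtain ⟨l, hl⟩ := Order.le_krullDim_iff.1 hn
  have := (faithfulSMul_iff_algebraMap_injective A R).2 hinj
  obtain ⟨P, hP⟩ := Algebra.IsIntegral.comap_surjective A R l.head
  have : P.asIdeal.LiesOver l.head.asIdeal := ⟨by rw [← hP]; rfl⟩
  obtain ⟨L, hL, -⟩ := Ideal.exists_ltSeries_of_hasGoingUp (S := R) l P.asIdeal
  exact Order.le_krullDim_iff.2 ⟨L, by rw [hL, hl]⟩

lemma contraction_eq_bot {A R : Type} [CommRing A] [IsDomain A] [CommRing R] [Algebra A R]
    [Algebra.IsIntegral A R] (s : ℕ) (hA : ringKrullDim A = s) (P : Ideal R)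
    (hP : (s : WithBot ℕ∞) ≤ ringKrullDim (R ⧸ P)) (a : A) (ha : algebraMap A R a ∈ P) : a = 0 := by
  by_contra h0
  have h1 := ringKrullDim_quotient_succ_le_of_nonZeroDivisor (mem_nonZeroDivisors_of_ne_zero h0)
  let f : A ⧸ Ideal.span {a} →+* R ⧸ P := Ideal.Quotient.lift _ (algebraMap A (R ⧸ P)) (by
    intro b hb
    obtain ⟨t, rfl⟩ := Ideal.mem_span_singleton'.1 hb
    rw [map_mul, IsScalarTower.algebraMap_apply A R (R ⧸ P) a]
    rw [Ideal.Quotient.algebraMap_eq, Ideal.Quotient.eq_zero_iff_mem.2 ha, mul_zero])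
  have hf : f.IsIntegral := by
    have h2 : (f.comp (Ideal.Quotient.mk _)).IsIntegral := by
      have h3 : f.comp (Ideal.Quotient.mk _) = algebraMap A (R ⧸ P) := by ext; rfl
      rw [h3]
      exact fun x => Algebra.IsIntegral.isIntegral (R := A) x
    exact RingHom.IsIntegral.tower_top _ _ h2
  have h2 := dim_le_of_integral f hf
  have h3 : ((s + 1 : ℕ) : WithBot ℕ∞) ≤ s := by
    push_cast
    rw [← hA]
    exact (add_le_add_left (hA ▸ hP.trans h2) 1).trans h1
  have : s + 1 ≤ s := by exact_mod_cast h3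
  omega

lemma exists_monomials (k : Type) [Field k] (s q : ℕ) (hq : 0 < q) :
    ∃ M : ((Fin s → Fin q) → k) →ₗ[k] MvPolynomial (Fin s) k,
      Function.Injective M ∧ ∀ c i, (M c).degreeOf i < q := by
  classical
  let em : (Fin s → Fin q) → (Fin s →₀ ℕ) := fun α => Finsupp.equivFunOnFinite.symm fun i => (α i : ℕ)
  have hem : ∀ α i, em α i = (α i : ℕ) := fun _ _ => rfl
  have hinj : Function.Injective em := by
    intro α β h
    funext i
    have := DFunLike.congr_fun h i
    rw [hem, hem] at this
    exact Fin.ext this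
  let M : ((Fin s → Fin q) → k) →ₗ[k] MvPolynomial (Fin s) k :=
    ∑ α, (MvPolynomial.monomial (em α)).comp (LinearMap.proj α)
  have hM : ∀ c m, (M c).coeff m = ∑ α, if em α = m then c α else 0 := by
    intro c m
    simp only [M, LinearMap.sum_apply, MvPolynomial.coeff_sum]
    exact Finset.sum_congr rfl fun α _ => by simp [MvPolynomial.coeff_monomial]
  refine ⟨M, ?_, ?_⟩
  · rw [← LinearMap.ker_eq_bot, LinearMap.ker_eq_bot']
    intro c hc
    funext β
    have h := hM c (em β)
    rw [hc] at h
    simp [hinj.eq_iff] at h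
    exact h.symm
  · intro c i
    rw [MvPolynomial.degreeOf_lt_iff hq]
    intro m hm
    rw [MvPolynomial.mem_support_iff, hM] at hm
    obtain ⟨α, -, hα⟩ := Finset.exists_ne_zero_of_sum_ne_zero hm
    have : em α = m := by by_contra h; simp [h] at hα
    rw [← this, hem]
    exact (α i).2

lemma count_le {k R : Type} [Field k] [CommRing R] [Algebra k R] (s : ℕ)
    [Algebra (MvPolynomial (Fin s) k) R] [IsScalarTower k (MvPolynomial (Fin s) k) R]
    (q : ℕ) (hq : 0 < q) (I J : Ideal R) (hIJ : I ≤ J) [Module.Finite k (R ⧸ I)] (z : R) (hz : z ∈ J)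
    (h : ∀ f : MvPolynomial (Fin s) k, (∀ i, f.degreeOf i < q) → f • z ∈ I → f = 0) :
    q ^ s + Module.finrank k (R ⧸ J) ≤ Module.finrank k (R ⧸ I) := by
  obtain ⟨M, hM, hdeg⟩ := exists_monomials k s q hq
  let T : ((Fin s → Fin q) → k) →ₗ[k] (R ⧸ I) :=
    (I.mkQ.restrictScalars k) ∘ₗ ((LinearMap.toSpanSingleton (MvPolynomial (Fin s) k) R z).restrictScalars k) ∘ₗ M
  have hT : ∀ c, T c = Ideal.Quotient.mk I (M c • z) := fun c => rfl
  have hTinj : Function.Injective T := by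
    rw [← LinearMap.ker_eq_bot, LinearMap.ker_eq_bot']
    intro c hc
    rw [hT, Ideal.Quotient.eq_zero_iff_mem] at hc
    have := h _ (hdeg c) hc
    exact hM (by rw [this, map_zero])
  let F : (R ⧸ I) →ₗ[k] (R ⧸ J) := (Ideal.Quotient.factorₐ k hIJ).toLinearMap
  have hF : Function.Surjective F := Ideal.Quotient.factor_surjective hIJ
  have hr := LinearMap.finrank_range_add_finrank_ker F
  rw [LinearMap.range_eq_top.2 hF, finrank_top] at hr
  have hle : LinearMap.range T ≤ LinearMap.ker F := by
    rintro _ ⟨c, rfl⟩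
    rw [LinearMap.mem_ker, hT]
    change Ideal.Quotient.mk J (M c • z) = 0
    rw [Ideal.Quotient.eq_zero_iff_mem, Algebra.smul_def]
    exact Ideal.mul_mem_left _ _ hz
  have h2 := Submodule.finrank_mono hle
  rw [LinearMap.finrank_range_of_inj hTinj, Module.finrank_fintype_fun_eq_card] at h2
  simp at h2
  omega


/-- **Equality of Frobenius–Poincaré functions forces containment in the tight closure**
when `R` is equidimensional: if `I ⊆ J` are homogeneous, `R/I` has finite length, every
minimal prime `P` of `R` satisfies `dim R/P = dim R`, and `F(R,R,I) = F(R,R,J)`, then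
`J ⊆ I*`. -/
theorem frobenius_poincare_tight_closure_converse
    (k R : Type) [Field k] [CommRing R] [Algebra k R] [Algebra.FiniteType k R]
    (p : ℕ) (hp : p.Prime) [CharP R p]
    (𝒜 : ℤ → Submodule k R) [GradedAlgebra 𝒜]
    (h𝒜neg : ∀ t : ℤ, t < 0 → 𝒜 t = ⊥)
    (h𝒜zero : ∀ x ∈ 𝒜 0, ∃ c : k, algebraMap k R c = x)
    (d : ℕ) (hd : ringKrullDim R = d)
    (hequi : ∀ P ∈ minimalPrimes R, ringKrullDim (R ⧸ P) = ringKrullDim R)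
    (I J : Ideal R) (hIJ : I ≤ J)
    (hI : Ideal.IsHomogeneous 𝒜 I) (hJ : Ideal.IsHomogeneous 𝒜 J)
    (hIfl : IsFiniteLength R (R ⧸ I))
    (heq : ∀ y : ℂ, ∃ L : ℂ,
      Tendsto (fun n : ℕ => FnGen k 𝒜 I p d n y) atTop (nhds L) ∧
      Tendsto (fun n : ℕ => FnGen k 𝒜 J p d n y) atTop (nhds L)) :
    ∀ x ∈ J, MemTightClosure p I x := by
  classical
  intro x hx
  have hFact := Fact.mk hp
  have hnt : Nontrivial R := by
    by_contra h
    rw [not_nontrivial_iff_subsingleton] at h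
    rw [ringKrullDim_eq_bot_of_subsingleton] at hd
    exact absurd hd (by simp)
  have hchar : CharP k p := (algebraMap k R).charP (algebraMap k R).injective p
  have hJfl : IsFiniteLength R (R ⧸ J) :=
    hIfl.of_surjective (f := Submodule.factor hIJ) (Submodule.factor_surjective hIJ)
  obtain ⟨s, g, ginj, gfin⟩ := exists_finite_inj_algHom_of_fg k R
  let _ : Algebra (MvPolynomial (Fin s) k) R := g.toRingHom.toAlgebra
  have hmap : ∀ a, algebraMap (MvPolynomial (Fin s) k) R a = g a := fun _ => rfl
  have : IsScalarTower k (MvPolynomial (Fin s) k) R :=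
    IsScalarTower.of_algebraMap_eq fun a => (g.commutes a).symm
  have : Module.Finite (MvPolynomial (Fin s) k) R := gfin
  have hAdim : ringKrullDim (MvPolynomial (Fin s) k) = s := by
    rw [MvPolynomial.ringKrullDim_of_isNoetherianRing]; simp
  have hds : d ≤ s := by
    have h := dim_le_of_integral (algebraMap (MvPolynomial (Fin s) k) R)
      (fun x => Algebra.IsIntegral.isIntegral x)
    rw [hd, hAdim] at h
    exact_mod_cast h
  have hsR : (s : WithBot ℕ∞) ≤ ringKrullDim R := le_dim_of_integral (A := MvPolynomial (Fin s) k) ginj s hAdim.ge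
  obtain ⟨e₀, D, b, γ, c, hc, hgb, hli, hspan⟩ :=
    exists_gamma (A := MvPolynomial (Fin s) k) (R := R) p hp
  refine ⟨algebraMap (MvPolynomial (Fin s) k) R (c ^ 2), ?_, e₀, ?_⟩
  · intro P hP hcP
    exact pow_ne_zero 2 hc (contraction_eq_bot s hAdim P (by rw [hequi P hP]; exact hsR) _ hcP)
  intro n hn
  obtain ⟨e, rfl⟩ : ∃ e, n = e + e₀ := ⟨n - e₀, by omega⟩
  rw [← Algebra.smul_def]
  by_contra hnot
  have hcount : ∀ e', (p ^ e') ^ s + Module.finrank k (R ⧸ bracketPow J (p ^ (e + e₀ + e'))) ≤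
      Module.finrank k (R ⧸ bracketPow I (p ^ (e + e₀ + e'))) := by
    intro e'
    have := finite_quot_bracketPow (k := k) I hIfl (p ^ (e + e₀ + e'))
    refine count_le s (p ^ e') (pow_pos hp.pos _) _ _ (Ideal.span_mono (Set.image_mono hIJ))
      (x ^ p ^ (e + e₀ + e')) (pow_mem_bracketPow _ hx) ?_
    intro f hdeg hf
    exact key_step s p hp e₀ D b γ c hgb hli hspan I x e e' hnot f hdeg hf
  obtain ⟨L, hLI, hLJ⟩ := heq 0
  have hlim := hLI.sub hLJ
  rw [sub_self] at hlim
  have hppos : (0 : ℝ) < p := by exact_mod_cast hp.pos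
  have hε : (0 : ℝ) < (1 / (p : ℝ) ^ (e + e₀)) ^ d := by positivity
  obtain ⟨N, hN⟩ := (Metric.tendsto_atTop.1 hlim) _ hε
  have h1 := hN (e + e₀ + N) (by omega)
  rw [FnGen_zero p hp 𝒜 d I hI hIfl, FnGen_zero p hp 𝒜 d J hJ hJfl, ← mul_sub, dist_zero_right,
    norm_mul, norm_pow, norm_div, norm_pow, norm_one, Complex.norm_natCast] at h1
  have h2 := hcount N
  generalize Module.finrank k (R ⧸ bracketPow J (p ^ (e + e₀ + N))) = v at h1 h2
  generalize Module.finrank k (R ⧸ bracketPow I (p ^ (e + e₀ + N))) = u at h1 h2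
  have h3 : ((p : ℝ) ^ N) ^ d ≤ ‖(u : ℂ) - (v : ℂ)‖ := by
    have h4 : (p ^ N) ^ d ≤ u - v :=
      (Nat.pow_le_pow_right (pow_pos hp.pos _) hds).trans (by omega)
    rw [← Nat.cast_sub (by omega), Complex.norm_natCast]
    exact_mod_cast h4
  have h5 : (1 / (p : ℝ) ^ (e + e₀)) ^ d ≤ (1 / (p : ℝ) ^ (e + e₀ + N)) ^ d * ‖(u : ℂ) - (v : ℂ)‖ := by
    calc (1 / (p : ℝ) ^ (e + e₀)) ^ d = (1 / (p : ℝ) ^ (e + e₀ + N)) ^ d * ((p : ℝ) ^ N) ^ d := by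
          rw [← mul_pow, pow_add _ (e + e₀) N]
          congr 1
          field_simp
      _ ≤ _ := by gcongr
  exact absurd h1 (not_lt.2 h5)

end
end

section
/- Let R be a standard graded k-algebra of Krull dimension d ≥ 1, I a homogeneous ideal with R/I of finite length, and M a finitely generated ℕ-graded R-module. For each n define g_n : ℝ → ℝ by g_n(x) = p^{-n(d−1)} λ_k((M/I^{[p^n]}M)_{⌊xp^n⌋}), and suppose g_n converges pointwise to a compactly supported function g (the Hilbert–Kunz density function). Then for every complex number y, the holomorphic Fourier transform ∫_ℝ g(x) e^{−iyx} dx equals the Frobenius–Poincaré function value F(M,R,I,d)(y). -/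
open Filter Complex MeasureTheory

noncomputable section

/-- Projection to the degree `j` component. -/
def prj {k M : Type} [Field k] [AddCommGroup M] [Module k M]
    (ℳ : ℤ → Submodule k M) [DirectSum.Decomposition ℳ] (j : ℤ) : M →ₗ[k] M :=
  (ℳ j).subtype ∘ₗ DirectSum.component k ℤ (fun i => ℳ i) j ∘ₗ
    (DirectSum.decomposeLinearEquiv ℳ).toLinearMap

section Proj
variable {k M : Type} [Field k] [AddCommGroup M] [Module k M]
    (ℳ : ℤ → Submodule k M) [DirectSum.Decomposition ℳ]

lemma prj_eq (j : ℤ) (m : M) : prj ℳ j m = (DirectSum.decompose ℳ m j : M) := rfl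

lemma prj_mem (j : ℤ) (m : M) : prj ℳ j m ∈ ℳ j := by
  rw [prj_eq]; exact Subtype.property _

lemma prj_same {j : ℤ} {m : M} (h : m ∈ ℳ j) : prj ℳ j m = m := by
  rw [prj_eq, DirectSum.decompose_of_mem_same ℳ h]

lemma prj_ne {i j : ℤ} {m : M} (h : m ∈ ℳ i) (hij : i ≠ j) : prj ℳ j m = 0 := by
  rw [prj_eq, DirectSum.decompose_of_mem_ne ℳ h hij]

lemma prj_bound (m : M) : ∃ D : ℤ, ∀ j, D < j → prj ℳ j m = 0 := by
  classical
  induction m using DirectSum.Decomposition.inductionOn ℳ with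
  | zero => exact ⟨0, fun j _ => map_zero _⟩
  | @homogeneous i m => exact ⟨i, fun j hj => prj_ne ℳ m.2 hj.ne⟩
  | add m m' h h' =>
    obtain ⟨D, hD⟩ := h
    obtain ⟨D', hD'⟩ := h'
    refine ⟨max D D', fun j hj => ?_⟩
    rw [map_add, hD j (lt_of_le_of_lt (le_max_left _ _) hj),
      hD' j (lt_of_le_of_lt (le_max_right _ _) hj), add_zero]

lemma prj_bound_finset (T : Finset M) : ∃ D : ℤ, ∀ j, D < j → ∀ m ∈ Submodule.span k (T : Set M),
    prj ℳ j m = 0 := by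
  classical
  choose D hD using prj_bound ℳ
  obtain ⟨B, hB⟩ := (T.image D).bddAbove
  refine ⟨B, fun j hj m hm => ?_⟩
  have : Submodule.span k (T : Set M) ≤ LinearMap.ker (prj ℳ j) := by
    rw [Submodule.span_le]
    intro t ht
    exact hD t j (lt_of_le_of_lt (hB (by simpa using ⟨t, ht, rfl⟩)) hj)
  exact this hm

lemma prj_smul {R : Type} [CommRing R] [Module R M] (x : R)
    (hx : ∀ j, ∀ m ∈ ℳ j, x • m ∈ ℳ (j + 1)) (j : ℤ) (m : M) :
    prj ℳ (j + 1) (x • m) = x • prj ℳ j m := by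
  classical
  induction m using DirectSum.Decomposition.inductionOn ℳ with
  | zero => simp
  | @homogeneous i m =>
    by_cases h : i = j
    · subst h
      rw [prj_same ℳ m.2, prj_same ℳ (hx _ _ m.2)]
    · rw [prj_ne ℳ m.2 h, prj_ne ℳ (hx _ _ m.2) (by omega), smul_zero]
  | add m m' h h' => rw [smul_add, map_add, map_add, h, h', smul_add]

end Proj

/-- Eventually polynomial functions on the integers. -/
def EvPoly (f : ℤ → ℚ) : Prop := ∃ P : Polynomial ℚ, ∃ J : ℤ, ∀ j, J ≤ j → f j = P.eval (j : ℚ)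

lemma poly_antidiff (P : Polynomial ℚ) :
    ∃ Q : Polynomial ℚ, ∀ x : ℚ, Q.eval (x + 1) - Q.eval x = P.eval x := by
  induction P using Polynomial.induction_on' with
  | add p q hp hq =>
    obtain ⟨Q, hQ⟩ := hp
    obtain ⟨Q', hQ'⟩ := hq
    refine ⟨Q + Q', fun x => ?_⟩
    rw [Polynomial.eval_add, Polynomial.eval_add, Polynomial.eval_add, ← hQ, ← hQ']; ring
  | monomial n a =>
    refine ⟨Polynomial.C (a / (n + 1)) * Polynomial.bernoulli (n + 1), fun x => ?_⟩
    have := Polynomial.bernoulli_eval_one_add (n + 1) x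
    rw [add_comm 1 x] at this
    have hn : (n : ℚ) + 1 ≠ 0 := by positivity
    simp only [Polynomial.eval_mul, Polynomial.eval_C, this, Polynomial.eval_monomial]
    push_cast
    field_simp
    ring

lemma EvPoly.of_diff (f u v : ℤ → ℚ) (hu : EvPoly u) (hv : EvPoly v)
    (h : ∀ j, f (j + 1) - f j = u (j + 1) - v j) : EvPoly f := by
  obtain ⟨P, J, hP⟩ := hu
  obtain ⟨P', J', hP'⟩ := hv
  obtain ⟨Q, hQ⟩ := poly_antidiff (P.comp (Polynomial.X + 1) - P')
  set J₀ := max J J'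
  refine ⟨Q + Polynomial.C (f J₀ - Q.eval (J₀ : ℚ)), J₀, fun j hj => ?_⟩
  induction j, hj using Int.leInduction with
  | base => simp
  | succ j hj ih =>
    have h1 := h j
    rw [hP (j + 1) (by omega), hP' j (by omega)] at h1
    have h2 := hQ j
    simp only [Polynomial.eval_sub, Polynomial.eval_comp, Polynomial.eval_add, Polynomial.eval_X,
      Polynomial.eval_one, Polynomial.eval_C] at h2 ih ⊢
    push_cast at h1 ⊢
    linarith

section Alg
variable {k R M : Type} [Field k] [CommRing R] [Algebra k R]
    [AddCommGroup M] [Module R M] [Module k M] [IsScalarTower k R M]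
    (ℳ : ℤ → Submodule k M) [DirectSum.Decomposition ℳ] (X : Finset R)

/-- Elements of `N` are `k`-combinations of generators modulo `(X) N`. -/
lemma fg_decomp (hk : ∀ r : R, ∃ c : k, r - algebraMap k R c ∈ Ideal.span (X : Set R))
    (T : Finset M) (m : M) (hm : m ∈ Submodule.span R (T : Set M)) :
    ∃ a ∈ Submodule.span k (T : Set M),
      m - a ∈ Ideal.span (X : Set R) • Submodule.span R (T : Set M) := by
  induction hm using Submodule.span_induction with
  | mem t ht => exact ⟨t, Submodule.subset_span ht, by simp⟩
  | zero => exact ⟨0, zero_mem _, by simp⟩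
  | add m m' _ _ h h' =>
    obtain ⟨a, ha, h⟩ := h
    obtain ⟨a', ha', h'⟩ := h'
    refine ⟨a + a', add_mem ha ha', ?_⟩
    have := add_mem h h'
    convert this using 1; abel
  | smul r m hm h =>
    obtain ⟨a, ha, h⟩ := h
    obtain ⟨c, hc⟩ := hk r
    refine ⟨c • a, Submodule.smul_mem _ _ ha, ?_⟩
    have h1 := Submodule.smul_mem_smul hc hm
    have h2 := Submodule.smul_mem _ (algebraMap k R c) h
    have := add_mem h1 h2
    convert this using 1
    rw [sub_smul, smul_sub, algebraMap_smul, algebraMap_smul]; abel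

variable (hx : ∀ x ∈ X, ∀ j, ∀ m ∈ ℳ j, x • m ∈ ℳ (j + 1))
include hx

/-- Components of elements of `(X) N`. -/
lemma prj_ideal_smul (N : Submodule R M) (P : ℤ → Submodule k M) (j : ℤ)
    (hP : ∀ x ∈ X, ∀ n ∈ N, x • prj ℳ j n ∈ P (j + 1)) (m : M)
    (hm : m ∈ Ideal.span (X : Set R) • N) : prj ℳ (j + 1) m ∈ P (j + 1) := by
  rw [← Submodule.span_eq N, Submodule.span_smul_span] at hm
  have key : ∀ z ∈ Submodule.span R (⋃ s ∈ (X : Set R), ⋃ t ∈ (N : Set M), {s • t}), 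
      ∀ r : R, prj ℳ (j + 1) (r • z) ∈ P (j + 1) := by
    intro z hz
    induction hz using Submodule.span_induction with
    | mem t ht =>
      simp only [Set.mem_iUnion, Set.mem_singleton_iff] at ht
      obtain ⟨x, hxX, n, hn, rfl⟩ := ht
      intro r
      rw [smul_comm, prj_smul ℳ x (hx x hxX)]
      exact hP x hxX _ (N.smul_mem r hn)
    | zero => intro r; simp
    | add a b _ _ ha hb => intro r; rw [smul_add, map_add]; exact add_mem (ha r) (hb r)
    | smul s a _ ha => intro r; rw [smul_smul]; exact ha _
  have hm' : m ∈ Submodule.span R (⋃ s ∈ (X : Set R), ⋃ t ∈ (N : Set M), {s • t}) := by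
    convert hm using 2
    ext z; simp [Set.mem_smul, eq_comm]
  simpa using key m hm' 1

/-- `(X)^q M` lives in degrees at least `q`. -/
lemma prj_pow_eq_zero (hneg : ∀ t : ℤ, t < 0 → ℳ t = ⊥) (q : ℕ) :
    ∀ j : ℤ, j < q → ∀ m ∈ (Ideal.span (X : Set R)) ^ q • (⊤ : Submodule R M), prj ℳ j m = 0 := by
  induction q with
  | zero =>
    intro j hj m _
    have := prj_mem ℳ j m
    rw [hneg j (by simpa using hj)] at this
    simpa using this
  | succ q ih =>
    intro j hj m hm
    rw [pow_succ', Submodule.mul_smul] at hm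
    have := prj_ideal_smul ℳ X hx _ (fun _ => ⊥) (j - 1) (fun x _ n hn => by
      rw [ih (j - 1) (by push_cast at hj; omega) n hn]; simp) m hm
    simpa using this

variable (hk : ∀ r : R, ∃ c : k, r - algebraMap k R c ∈ Ideal.span (X : Set R))
include hk

/-- Large degree parts lie in high powers. -/
lemma piece_le_pow [Module.Finite R M] : ∃ D : ℕ, ∀ (t : ℕ) (j : ℤ), (D : ℤ) + t ≤ j →
    ∀ m ∈ ℳ j, m ∈ (Ideal.span (X : Set R)) ^ t • (⊤ : Submodule R M) := by
  obtain ⟨T, hT⟩ := Module.Finite.fg_top (R := R) (M := M)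
  obtain ⟨D, hD⟩ := prj_bound_finset ℳ T
  refine ⟨D.toNat, fun t => ?_⟩
  induction t with
  | zero => intro j _ m _; simp
  | succ t ih =>
    intro j hj m hm
    push_cast at hj
    obtain ⟨a, ha, h⟩ := fg_decomp X hk T m (by rw [hT]; trivial)
    have h0 := hD j (by omega) a ha
    have h1 := prj_ideal_smul ℳ X hx _
      (fun _ => ((Ideal.span (X : Set R)) ^ (t + 1) • (⊤ : Submodule R M)).restrictScalars k)
      (j - 1) (fun x hxX n hn => by
        rw [Submodule.restrictScalars_mem, pow_succ', Submodule.mul_smul]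
        exact Submodule.smul_mem_smul (Ideal.subset_span hxX)
          (ih (j - 1) (by omega) _ (prj_mem ℳ _ _))) _ h
    rw [sub_add_cancel, map_sub, h0, sub_zero, prj_same ℳ hm] at h1
    exact h1

lemma piece_finite [Module.Finite R M] (hneg : ∀ t : ℤ, t < 0 → ℳ t = ⊥) (j : ℤ) :
    FiniteDimensional k (ℳ j) := by
  obtain ⟨T, hT⟩ := Module.Finite.fg_top (R := R) (M := M)
  by_cases hj : j < 0
  · rw [hneg j hj]; infer_instance
  have : (-1 : ℤ) ≤ j := by omega
  induction j, this using Int.leInduction with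
  | base => omega
  | succ j hj ih =>
    have ih' : FiniteDimensional k (ℳ j) := by
      by_cases h : j < 0
      · rw [hneg j h]; infer_instance
      · exact ih h
    let S : Submodule k M := (Submodule.span k (T : Set M)).map (prj ℳ (j + 1)) ⊔
      ⨆ x : X, (ℳ j).map (LinearMap.lsmul R M (x : R)|>.restrictScalars k)
    have hS : FiniteDimensional k S := by
      have := FiniteDimensional.span_finset k T
      infer_instance
    refine Submodule.finiteDimensional_of_le (S₂ := S) fun m hm => ?_
    obtain ⟨a, ha, h⟩ := fg_decomp X hk T m (by rw [hT]; trivial)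
    have h1 := prj_ideal_smul ℳ X hx _ (fun _ => S) j (fun x hxX n hn => by
      refine Submodule.mem_sup_right ?_
      refine Submodule.mem_iSup_of_mem ⟨x, hxX⟩ ?_
      exact ⟨_, prj_mem ℳ j n, rfl⟩) _ h
    have h2 : prj ℳ (j + 1) a ∈ S := Submodule.mem_sup_left ⟨a, ha, rfl⟩
    rw [map_sub, prj_same ℳ hm] at h1
    simpa using add_mem h1 h2

omit hx hk in
lemma finrank_split (A : Submodule k M) [FiniteDimensional k A] {V : Type} [AddCommGroup V]
    [Module k V] (L : M →ₗ[k] V) :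
    Module.finrank k (A.map L) + Module.finrank k ↥(A ⊓ LinearMap.ker L) = Module.finrank k A := by
  have h := LinearMap.finrank_range_add_finrank_ker (L.domRestrict A)
  rw [LinearMap.range_domRestrict] at h
  rw [← h]
  congr 1
  have : (LinearMap.ker (L.domRestrict A)).map A.subtype = A ⊓ LinearMap.ker L := by
    ext m
    simp [LinearMap.mem_ker]
    tauto
  rw [← this]
  exact LinearEquiv.finrank_eq (Submodule.equivMapOfInjective _ A.injective_subtype _).symm

/-- Hilbert function of a submodule. -/
def hf (N : Submodule R M) (j : ℤ) : ℚ := Module.finrank k ↥(N.restrictScalars k ⊓ ℳ j)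

lemma hilbert_poly [IsNoetherianRing R] [Module.Finite R M]
    (hneg : ∀ t : ℤ, t < 0 → ℳ t = ⊥) (Y : Finset R) : Y ⊆ X → ∀ N N' : Submodule R M,
    N' ≤ N → (∀ j, ∀ n ∈ N, prj ℳ j n ∈ N) → (∀ j, ∀ n ∈ N', prj ℳ j n ∈ N') →
    (∀ x ∈ X, x ∉ Y → ∀ n ∈ N, x • n ∈ N') → EvPoly (fun j => hf ℳ N j - hf ℳ N' j) := by
  classical
  have hfin := piece_finite ℳ X hx hk hneg
  induction Y using Finset.induction_on with
  | empty =>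
    intro _ N N' hle hN hN' hkill
    obtain ⟨T, hT⟩ := IsNoetherian.noetherian N
    obtain ⟨D, hD⟩ := prj_bound_finset ℳ T
    refine ⟨0, D + 1, fun j hj => ?_⟩
    have : N.restrictScalars k ⊓ ℳ j = N'.restrictScalars k ⊓ ℳ j := by
      refine le_antisymm (fun m hm => ⟨?_, hm.2⟩) (inf_le_inf_right _ hle)
      obtain ⟨a, ha, h⟩ := fg_decomp X hk T m (by rw [hT]; exact hm.1)
      rw [hT] at h
      have h1 : m - a ∈ N' := by
        have : Ideal.span (X : Set R) • N ≤ N' := by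
          rw [← Submodule.span_eq N, Submodule.span_smul_span, Submodule.span_le]
          rintro _ ⟨x, hxX, n, hn, rfl⟩
          exact hkill x hxX (by simp) n hn
        exact this h
      have h2 := hN' j _ h1
      rw [map_sub, hD j (by omega) a ha, prj_same ℳ hm.2, sub_zero] at h2
      exact h2
    simp only [hf]
    rw [this]
    simp
  | insert a Y haY ih =>
    intro hYX N N' hle hN hN' hkill
    have haX : a ∈ X := hYX (Finset.mem_insert_self _ _)
    have ih := ih (fun y hy => hYX (Finset.mem_insert_of_mem hy))
    let la : M →ₗ[R] M := LinearMap.lsmul R M a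
    have hla : ∀ m, la m = a • m := fun _ => rfl
    let K : Submodule R M := N ⊓ N'.comap la
    let N'' : Submodule R M := N.map la ⊔ N'
    have haN' : ∀ n ∈ N', a • n ∈ N' := fun n hn => N'.smul_mem _ hn
    have hN'K : N' ≤ K := le_inf hle fun n hn => haN' n hn
    have hKN : K ≤ N := inf_le_left
    have hN'N'' : N' ≤ N'' := le_sup_right
    have hN''N : N'' ≤ N := by
      refine sup_le ?_ hle
      rintro _ ⟨n, hn, rfl⟩
      exact N.smul_mem _ hn
    have hKh : ∀ j, ∀ n ∈ K, prj ℳ j n ∈ K := by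
      intro j n hn
      refine ⟨hN j n hn.1, ?_⟩
      have := hN' (j + 1) _ hn.2
      rw [hla, prj_smul ℳ a (hx a haX)] at this
      exact this
    have hN''h : ∀ j, ∀ n ∈ N'', prj ℳ j n ∈ N'' := by
      intro j n hn
      obtain ⟨_, ⟨u, hu, rfl⟩, v, hv, rfl⟩ := Submodule.mem_sup.1 hn
      rw [map_add]
      refine add_mem (Submodule.mem_sup_left ?_) (Submodule.mem_sup_right (hN' j v hv))
      have := prj_smul ℳ a (hx a haX) (j - 1) u
      rw [sub_add_cancel] at this
      rw [hla, this]
      exact ⟨_, hN _ _ hu, rfl⟩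
    have e1 := ih N N'' hN''N hN hN''h (by
      intro x hxX hxY n hn
      by_cases h : x = a
      · subst h; exact Submodule.mem_sup_left ⟨n, hn, rfl⟩
      · exact hN'N'' (hkill x hxX (by simp [h, hxY]) n hn))
    have e2 := ih K N' hN'K hKh hN' (by
      intro x hxX hxY n hn
      by_cases h : x = a
      · subst h; exact hn.2
      · exact hkill x hxX (by simp [h, hxY]) n hn.1)
    refine EvPoly.of_diff _ _ _ e1 e2 fun j => ?_
    have key : hf ℳ N j - hf ℳ K j = hf ℳ N'' (j + 1) - hf ℳ N' (j + 1) := by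
      have := hfin j
      have := hfin (j + 1)
      let Q : M →ₗ[k] M ⧸ N' := N'.mkQ.restrictScalars k
      have hQ : ∀ m, Q m = 0 ↔ m ∈ N' := fun m => Submodule.Quotient.mk_eq_zero N'
      let La : M →ₗ[k] M := la.restrictScalars k
      have s1 := finrank_split (N.restrictScalars k ⊓ ℳ j) (Q ∘ₗ La)
      have s2 := finrank_split (N''.restrictScalars k ⊓ ℳ (j + 1)) Q
      have i1 : N.restrictScalars k ⊓ ℳ j ⊓ LinearMap.ker (Q ∘ₗ La)
          = K.restrictScalars k ⊓ ℳ j := by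
        ext m
        have : Q (La m) = 0 ↔ la m ∈ N' := hQ _
        simp only [Submodule.mem_inf, LinearMap.mem_ker, LinearMap.comp_apply, this, K,
          Submodule.restrictScalars_mem, Submodule.mem_comap]
        tauto
      have i2 : N''.restrictScalars k ⊓ ℳ (j + 1) ⊓ LinearMap.ker Q
          = N'.restrictScalars k ⊓ ℳ (j + 1) := by
        ext m
        simp only [Submodule.mem_inf, LinearMap.mem_ker, hQ, Submodule.restrictScalars_mem]
        exact ⟨fun h => ⟨h.2, h.1.2⟩, fun h => ⟨⟨hN'N'' h.1, h.2⟩, h.1⟩⟩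
      have i3 : (N.restrictScalars k ⊓ ℳ j).map (Q ∘ₗ La)
          = (N''.restrictScalars k ⊓ ℳ (j + 1)).map Q := by
        apply le_antisymm
        · rintro _ ⟨m, hm, rfl⟩
          exact ⟨La m, ⟨Submodule.mem_sup_left ⟨m, hm.1, rfl⟩, hx a haX j m hm.2⟩, rfl⟩
        · rintro _ ⟨m, hm, rfl⟩
          obtain ⟨_, ⟨u, hu, rfl⟩, v, hv, huv⟩ := Submodule.mem_sup.1 hm.1
          refine ⟨prj ℳ j u, ⟨hN _ _ hu, prj_mem ℳ j u⟩, ?_⟩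
          have h1 : prj ℳ (j + 1) m = a • prj ℳ j u + prj ℳ (j + 1) v := by
            rw [← huv, map_add, hla, prj_smul ℳ a (hx a haX)]
          rw [prj_same ℳ hm.2] at h1
          have h2 : Q (prj ℳ (j + 1) v) = 0 := (hQ _).2 (hN' _ _ hv)
          rw [h1, map_add, h2, add_zero]
          rfl
      rw [i1] at s1
      rw [i2] at s2
      rw [i3] at s1
      simp only [hf]
      rw [← s1, ← s2]
      push_cast
      ring
    linarith

end Alg

lemma tendsto_floor_mul_div (x : ℝ) :
    Tendsto (fun t : ℝ => (⌊x * t⌋ : ℝ) / t) atTop (nhds x) := by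
  have h1 : Tendsto (fun t : ℝ => x - t⁻¹) atTop (nhds x) := by
    simpa using (tendsto_const_nhds (x := x)).sub tendsto_inv_atTop_zero
  refine tendsto_of_tendsto_of_tendsto_of_le_of_le' h1 tendsto_const_nhds ?_ ?_
  · filter_upwards [eventually_gt_atTop 0] with t ht
    rw [le_div_iff₀ ht, sub_mul, inv_mul_cancel₀ ht.ne']
    linarith [Int.lt_floor_add_one (x * t)]
  · filter_upwards [eventually_gt_atTop 0] with t ht
    rw [div_le_iff₀ ht]
    exact Int.floor_le _

lemma integral_floor (q L : ℕ) (hq : 0 < q) (φ : ℤ → ℂ) (h0 : ∀ j, j < 0 → φ j = 0)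
    (hL : ∀ j : ℤ, (L : ℤ) ≤ j → φ j = 0) :
    ∫ x : ℝ, φ ⌊x * (q : ℝ)⌋ = (1 / (q : ℂ)) * ∑' j : ℤ, φ j := by
  have hq' : (0 : ℝ) < q := by exact_mod_cast hq
  have hsupp : ∀ j ∉ Finset.Ico (0 : ℤ) L, φ j = 0 := by
    intro j hj
    rw [Finset.mem_Ico] at hj
    by_cases h : j < 0
    · exact h0 j h
    · exact hL j (by omega)
  rw [tsum_eq_sum hsupp]
  have e : (fun x : ℝ => φ ⌊x * (q : ℝ)⌋) = fun x => ∑ j ∈ Finset.Ico (0 : ℤ) L,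
      (Set.Ico ((j : ℝ) / q) ((j + 1 : ℝ) / q)).indicator (fun _ => φ j) x := by
    funext x
    have hiff : ∀ j : ℤ, x ∈ Set.Ico ((j : ℝ) / q) ((j + 1 : ℝ) / q) ↔ ⌊x * (q : ℝ)⌋ = j := by
      intro j
      rw [Int.floor_eq_iff, Set.mem_Ico, div_le_iff₀ hq', lt_div_iff₀ hq']
    simp only [Set.indicator_apply, hiff]
    rw [Finset.sum_ite_eq]
    split_ifs with h
    · rfl
    · exact hsupp _ h
  rw [e, integral_finsetSum, Finset.mul_sum]
  · refine Finset.sum_congr rfl fun j _ => ?_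
    rw [integral_indicator_const _ measurableSet_Ico]
    have : volume.real (Set.Ico ((j : ℝ) / q) ((j + 1 : ℝ) / q)) = 1 / q := by
      rw [Measure.real, Real.volume_Ico, ENNReal.toReal_ofReal]
      · ring
      · rw [← sub_div]; simp
    rw [this, Complex.real_smul]
    push_cast
    rfl
  · intro j _
    rw [integrable_indicator_iff measurableSet_Ico]
    exact integrableOn_const (by simp)

lemma analysis_part (p d : ℕ) (hp : 2 ≤ p) (hd1 : 1 ≤ d) (φ : ℕ → ℤ → ℕ) (L : ℕ) (C : ℝ)
    (hC0 : 0 ≤ C)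
    (h0 : ∀ n j, j < 0 → φ n j = 0) (hL : ∀ (n : ℕ) (j : ℤ), ((L * p ^ n : ℕ) : ℤ) ≤ j → φ n j = 0)
    (hC : ∀ (n : ℕ) (j : ℤ), 0 ≤ j → (φ n j : ℝ) ≤ C * ((j : ℝ) + 1) ^ (d - 1))
    (g : ℝ → ℝ)
    (hg : ∀ x : ℝ, Tendsto (fun n : ℕ => (1 / (p : ℝ) ^ n) ^ (d - 1) *
          (φ n ⌊x * (p : ℝ) ^ n⌋ : ℝ)) atTop (nhds (g x)))
    (y : ℂ) (FP : ℂ)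
    (hFP : Tendsto (fun n : ℕ => (1 / (p : ℂ) ^ n) ^ d * ∑' j : ℤ, (φ n j : ℂ) *
      Complex.exp (-Complex.I * y * (j : ℂ) / (p : ℂ) ^ n)) atTop (nhds FP)) :
    Integrable (fun x : ℝ => (g x : ℂ) * Complex.exp (-Complex.I * y * (x : ℂ))) volume ∧
    ∫ x : ℝ, (g x : ℂ) * Complex.exp (-Complex.I * y * (x : ℂ)) = FP := by
  have hp1 : (1 : ℝ) < p := by exact_mod_cast hp
  have hq : ∀ n : ℕ, (1 : ℝ) ≤ (p : ℝ) ^ n := fun n => one_le_pow₀ hp1.le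
  let ψ : ℕ → ℤ → ℂ := fun n j => (1 / (p : ℂ) ^ n) ^ (d - 1) * ((φ n j : ℂ) *
      Complex.exp (-Complex.I * y * (j : ℂ) / (p : ℂ) ^ n))
  let G : ℕ → ℝ → ℂ := fun n x => ψ n ⌊x * (p : ℝ) ^ n⌋
  let B : ℝ := C * ((L : ℝ) + 1) ^ (d - 1) * Real.exp (‖y‖ * L)
  let bound : ℝ → ℝ := (Set.Icc (0 : ℝ) L).indicator (fun _ => B)
  have hmeas : ∀ n, AEStronglyMeasurable (G n) volume := by
    intro n
    have h1 : Measurable (fun x : ℝ => ⌊x * (p : ℝ) ^ n⌋) :=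
      Int.measurable_floor.comp (measurable_id.mul_const _)
    have h2 : Measurable (ψ n) := measurable_from_top
    exact (h2.comp h1).aestronglyMeasurable
  have hbi : Integrable bound volume := by
    rw [integrable_indicator_iff measurableSet_Icc]
    exact integrableOn_const (by simp)
  have hB0 : 0 ≤ B := by positivity
  have hGb : ∀ n x, ‖G n x‖ ≤ bound x := by
    intro n x
    set j := ⌊x * (p : ℝ) ^ n⌋ with hj
    have hqn := hq n
    have hb0 : 0 ≤ bound x := Set.indicator_nonneg (fun _ _ => hB0) _
    have hGx : G n x = (1 / (p : ℂ) ^ n) ^ (d - 1) * ((φ n j : ℂ) *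
      Complex.exp (-Complex.I * y * (j : ℂ) / (p : ℂ) ^ n)) := rfl
    by_cases hj0 : j < 0
    · rw [hGx, h0 n j hj0]; simpa using hb0
    by_cases hjL : ((L * p ^ n : ℕ) : ℤ) ≤ j
    · rw [hGx, hL n j hjL]; simpa using hb0
    push Not at hj0 hjL
    have hj0' : (0 : ℝ) ≤ j := by exact_mod_cast hj0
    have hjL' : (j : ℝ) + 1 ≤ L * (p : ℝ) ^ n := by
      have : j + 1 ≤ ((L * p ^ n : ℕ) : ℤ) := by omega
      exact_mod_cast this
    have hx0 : 0 ≤ x := by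
      have : (j : ℝ) ≤ x * (p : ℝ) ^ n := Int.floor_le _
      by_contra hneg
      push Not at hneg
      nlinarith
    have hxL : x ≤ L := by
      have : x * (p : ℝ) ^ n < j + 1 := Int.lt_floor_add_one _
      by_contra hneg
      push Not at hneg
      nlinarith
    have hbx : bound x = B := Set.indicator_of_mem (Set.mem_Icc.2 ⟨hx0, hxL⟩) _
    rw [hbx, hGx, norm_mul, norm_mul]
    have n1 : ‖(1 / (p : ℂ) ^ n) ^ (d - 1)‖ = (1 / (p : ℝ) ^ n) ^ (d - 1) := by simp
    have n2 : ‖(φ n j : ℂ)‖ = φ n j := by simp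
    have n3 : ‖Complex.exp (-Complex.I * y * (j : ℂ) / (p : ℂ) ^ n)‖ ≤ Real.exp (‖y‖ * L) := by
      refine (Complex.norm_exp_le_exp_norm _).trans (Real.exp_le_exp.2 ?_)
      have : ‖-Complex.I * y * (j : ℂ) / (p : ℂ) ^ n‖ = ‖y‖ * ((j : ℝ) / (p : ℝ) ^ n) := by
        simp [abs_of_nonneg hj0', mul_div_assoc]
      rw [this]
      refine mul_le_mul_of_nonneg_left ?_ (norm_nonneg _)
      rw [div_le_iff₀ (by linarith)]
      linarith
    rw [n1, n2, ← mul_assoc]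
    refine mul_le_mul ?_ n3 (norm_nonneg _) (by positivity)
    have h1 : (φ n j : ℝ) ≤ C * (((L : ℝ) + 1) * (p : ℝ) ^ n) ^ (d - 1) := by
      refine (hC n j hj0).trans (mul_le_mul_of_nonneg_left ?_ hC0)
      exact pow_le_pow_left₀ (by linarith) (by nlinarith) _
    calc (1 / (p : ℝ) ^ n) ^ (d - 1) * (φ n j : ℝ)
        ≤ (1 / (p : ℝ) ^ n) ^ (d - 1) * (C * (((L : ℝ) + 1) * (p : ℝ) ^ n) ^ (d - 1)) :=
          mul_le_mul_of_nonneg_left h1 (by positivity)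
      _ = C * ((L : ℝ) + 1) ^ (d - 1) * ((1 / (p : ℝ) ^ n) * (p : ℝ) ^ n) ^ (d - 1) := by
          rw [mul_pow, mul_pow]; ring
      _ = C * ((L : ℝ) + 1) ^ (d - 1) := by
          rw [one_div, inv_mul_cancel₀ (by positivity)]; simp
  have hlim : ∀ x, Tendsto (fun n => G n x) atTop
      (nhds ((g x : ℂ) * Complex.exp (-Complex.I * y * (x : ℂ)))) := by
    intro x
    have t1 : Tendsto (fun n : ℕ => (((1 / (p : ℝ) ^ n) ^ (d - 1) *
          (φ n ⌊x * (p : ℝ) ^ n⌋ : ℝ) : ℝ) : ℂ)) atTop (nhds (g x : ℂ)) :=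
      (Complex.continuous_ofReal.tendsto _).comp (hg x)
    have t2 : Tendsto (fun n : ℕ => (⌊x * (p : ℝ) ^ n⌋ : ℝ) / (p : ℝ) ^ n) atTop (nhds x) :=
      (tendsto_floor_mul_div x).comp (tendsto_pow_atTop_atTop_of_one_lt hp1)
    have t3 : Tendsto (fun n : ℕ => Complex.exp (-Complex.I * y *
        (((⌊x * (p : ℝ) ^ n⌋ : ℝ) / (p : ℝ) ^ n : ℝ) : ℂ))) atTop
        (nhds (Complex.exp (-Complex.I * y * (x : ℂ)))) := by
      have hc : Continuous (fun t : ℝ => Complex.exp (-Complex.I * y * (t : ℂ))) := by fun_prop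
      exact (hc.tendsto x).comp t2
    refine (t1.mul t3).congr fun n => ?_
    simp only [G, ψ]
    push_cast
    rw [mul_assoc, mul_div_assoc]
  have hlim' : Tendsto (fun n => ∫ x, G n x) atTop
      (nhds (∫ x : ℝ, (g x : ℂ) * Complex.exp (-Complex.I * y * (x : ℂ)))) :=
    tendsto_integral_of_dominated_convergence bound hmeas hbi
      (fun n => Eventually.of_forall (hGb n)) (Eventually.of_forall hlim)
  have hint : ∀ n, ∫ x, G n x = (1 / (p : ℂ) ^ n) ^ d * ∑' j : ℤ, (φ n j : ℂ) *
      Complex.exp (-Complex.I * y * (j : ℂ) / (p : ℂ) ^ n) := by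
    intro n
    have := integral_floor (p ^ n) (L * p ^ n) (by positivity) (ψ n)
      (fun j hj => by simp [ψ, h0 n j hj]) (fun j hj => by simp only [ψ, hL n j hj]; simp)
    push_cast at this
    simp only [G]
    rw [this]
    simp only [ψ]
    rw [tsum_mul_left, ← mul_assoc, ← pow_succ']
    congr 2
    omega
  refine ⟨?_, tendsto_nhds_unique hlim' (hFP.congr fun n => (hint n).symm)⟩
  refine hbi.mono' (aestronglyMeasurable_of_tendsto_ae atTop hmeas (Eventually.of_forall hlim)) ?_
  exact Eventually.of_forall fun x => le_of_tendsto ((hlim x).norm) (Eventually.of_forall fun n => hGb n x)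

lemma poly_growth (p e : ℕ) (hp : 2 ≤ p) (f : ℤ → ℕ) (hf : EvPoly (fun j => (f j : ℚ))) (B : ℝ)
    (hB : ∀ m : ℕ, (f ((p : ℤ) ^ m) : ℝ) ≤ B * ((p : ℝ) ^ m) ^ e) :
    ∃ C : ℝ, 0 ≤ C ∧ ∀ j : ℤ, 0 ≤ j → (f j : ℝ) ≤ C * ((j : ℝ) + 1) ^ e := by
  obtain ⟨P, J, hP⟩ := hf
  have hp1 : (1 : ℝ) < p := by exact_mod_cast hp
  let Pr : Polynomial ℝ := P.map (algebraMap ℚ ℝ)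
  have hPr : ∀ j, J ≤ j → (f j : ℝ) = Pr.eval (j : ℝ) := by
    intro j hj
    have h := congrArg (fun q : ℚ => (q : ℝ)) (hP j hj)
    simp only [Rat.cast_natCast] at h
    rw [h]
    have := Polynomial.eval_map_apply (p := P) (algebraMap ℚ ℝ) (j : ℚ)
    simpa [Pr] using this.symm
  have hdeg : Pr.degree ≤ (Polynomial.X ^ e : Polynomial ℝ).degree := by
    by_contra hcon
    push Not at hcon
    have ht := Polynomial.abs_div_tendsto_atTop_atTop_of_degree_gt Pr (Polynomial.X ^ e) hcon
      (by simp)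
    have ht2 := ht.comp (tendsto_pow_atTop_atTop_of_one_lt hp1)
    have ht3 : Tendsto (fun m : ℕ => (p : ℤ) ^ m) atTop atTop :=
      tendsto_pow_atTop_atTop_of_one_lt (by exact_mod_cast hp)
    obtain ⟨m, h1, h2⟩ := ((ht2.eventually_gt_atTop B).and (ht3.eventually_ge_atTop J)).exists
    have h3 := hB m
    have h4 := hPr _ h2
    push_cast at h4
    simp only [Function.comp, ← h4, Polynomial.eval_pow, Polynomial.eval_X] at h1
    rw [abs_of_nonneg (by positivity), lt_div_iff₀ (by positivity)] at h1
    linarith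
  have hO := Polynomial.isBigO_atTop_of_degree_le Pr _ hdeg
  have hO2 : (fun j : ℕ => (f j : ℝ)) =O[atTop] fun j : ℕ => ((j : ℝ) + 1) ^ e := by
    have h1 := hO.comp_tendsto (tendsto_natCast_atTop_atTop (R := ℝ))
    have h2 : (fun j : ℕ => (f j : ℝ)) =O[atTop] fun j : ℕ => (j : ℝ) ^ e := by
      refine h1.congr' ?_ ?_
      · filter_upwards [eventually_ge_atTop J.toNat] with j hj
        have := hPr j (by omega)
        simp only [Function.comp]
        rw [this]; simp
      · exact Eventually.of_forall fun j => by simp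
    refine h2.trans (Asymptotics.IsBigO.of_bound 1 (Eventually.of_forall fun j => ?_))
    rw [one_mul, Real.norm_of_nonneg (by positivity), Real.norm_of_nonneg (by positivity)]
    exact pow_le_pow_left₀ (by positivity) (by linarith) _
  obtain ⟨C, hC, h⟩ := Asymptotics.bound_of_isBigO_nat_atTop hO2
  refine ⟨C, hC.le, fun j hj => ?_⟩
  lift j to ℕ using hj
  have := h (x := j) (by positivity)
  rw [Real.norm_of_nonneg (by positivity), Real.norm_of_nonneg (by positivity)] at this
  exact_mod_cast this

lemma span_pow_le_span_pow {R : Type} [CommRing R] (X : Finset R) (t : ℕ) :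
    (Ideal.span (X : Set R)) ^ (X.card * t) ≤ Ideal.span ((fun x => x ^ t) '' (X : Set R)) ∨
      X = ∅ := by
  classical
  induction X using Finset.induction_on with
  | empty => right; rfl
  | insert a X ha ih =>
    left
    have e : Ideal.span ((insert a X : Finset R) : Set R) =
        Ideal.span {a} ⊔ Ideal.span (X : Set R) := by
      rw [Finset.coe_insert, Ideal.span_insert]
    have e2 : Ideal.span ((fun x => x ^ t) '' ((insert a X : Finset R) : Set R)) =
        Ideal.span {a ^ t} ⊔ Ideal.span ((fun x => x ^ t) '' (X : Set R)) := by
      rw [Finset.coe_insert, Set.image_insert_eq, Ideal.span_insert]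
    rw [e, e2, Finset.card_insert_of_notMem ha, add_mul, one_mul, add_comm]
    rcases ih with ih | rfl
    · refine Ideal.sup_pow_add_le_pow_sup_pow.trans (sup_le_sup ?_ ih)
      rw [Ideal.span_singleton_pow]
    · simp [Ideal.span_singleton_pow]

/-- **The Frobenius–Poincaré function is the holomorphic Fourier transform of the
Hilbert–Kunz density function.**  Here `R` is standard graded of dimension `d ≥ 1`,
`g_n(x) = p^{-n(d-1)} λ_k((M/I^{[p^n]}M)_{⌊xp^n⌋})` converges pointwise to the compactly
supported density function `g`, and `∫_ℝ g(x) e^{-iyx} dx = F(M,R,I,d)(y)`. -/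
theorem frobenius_poincare_fourier_of_density
    (k R M : Type) [Field k] [CommRing R] [Algebra k R] [Algebra.FiniteType k R]
    (p : ℕ) (hp : p.Prime) [CharP R p]
    (𝒜 : ℤ → Submodule k R) [GradedAlgebra 𝒜]
    (h𝒜neg : ∀ t : ℤ, t < 0 → 𝒜 t = ⊥)
    (h𝒜zero : ∀ x ∈ 𝒜 0, ∃ c : k, algebraMap k R c = x)
    (hstd : Algebra.adjoin k ((𝒜 1 : Submodule k R) : Set R) = ⊤)
    (d : ℕ) (hd1 : 1 ≤ d) (hd : ringKrullDim R = d)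
    (I : Ideal R) (hI : Ideal.IsHomogeneous 𝒜 I) (hIfl : IsFiniteLength R (R ⧸ I))
    [AddCommGroup M] [Module R M] [Module k M] [IsScalarTower k R M] [Module.Finite R M]
    (ℳ : ℤ → Submodule k M) [DirectSum.Decomposition ℳ]
    (hℳneg : ∀ t : ℤ, t < 0 → ℳ t = ⊥)
    (hℳ : ∀ (a b : ℤ), ∀ r ∈ 𝒜 a, ∀ x ∈ ℳ b, r • x ∈ ℳ (a + b))
    (g : ℝ → ℝ)
    (hgconv : ∀ x : ℝ,
      Tendsto (fun n : ℕ => (1 / (p : ℝ) ^ n) ^ (d - 1) *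
          (quotPieceDim k (R := R) ℳ (bracketPow I (p ^ n) • ⊤) ⌊x * (p : ℝ) ^ n⌋ : ℝ))
        atTop (nhds (g x)))
    (hgsupp : HasCompactSupport g)
    (y : ℂ) (FP : ℂ)
    (hFP : Tendsto (fun n : ℕ => FnGen k ℳ I p d n y) atTop (nhds FP)) :
    Integrable (fun x : ℝ => (g x : ℂ) * Complex.exp (-Complex.I * y * (x : ℂ))) volume ∧
    ∫ x : ℝ, (g x : ℂ) * Complex.exp (-Complex.I * y * (x : ℂ)) = FP := by
  classical
  have hnoeth : IsNoetherianRing R := Algebra.FiniteType.isNoetherianRing k R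
  have hp2 : 2 ≤ p := hp.two_le
  obtain ⟨X, hX1, hXspan⟩ : ∃ X : Finset R, (X : Set R) ⊆ (𝒜 1 : Submodule k R) ∧
      Ideal.span ((𝒜 1 : Submodule k R) : Set R) = Ideal.span (X : Set R) :=
    (Submodule.fg_span_iff_fg_span_finset_subset _).1 (IsNoetherian.noetherian _)
  have hk : ∀ r : R, ∃ c : k, r - algebraMap k R c ∈ Ideal.span (X : Set R) := by
    intro r
    have hr : r ∈ Algebra.adjoin k ((𝒜 1 : Submodule k R) : Set R) := by rw [hstd]; trivial
    induction hr using Algebra.adjoin_induction with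
    | mem x hx => exact ⟨0, by rw [map_zero, sub_zero, ← hXspan]; exact Ideal.subset_span hx⟩
    | algebraMap c => exact ⟨c, by simp⟩
    | add a b _ _ ha hb =>
      obtain ⟨c, hc⟩ := ha
      obtain ⟨c', hc'⟩ := hb
      refine ⟨c + c', ?_⟩
      have := add_mem hc hc'
      convert this using 1
      rw [map_add]; ring
    | mul a b _ _ ha hb =>
      obtain ⟨c, hc⟩ := ha
      obtain ⟨c', hc'⟩ := hb
      refine ⟨c * c', ?_⟩
      have := add_mem (Ideal.mul_mem_left _ b hc) (Ideal.mul_mem_left _ (algebraMap k R c) hc')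
      convert this using 1
      rw [map_mul]; ring
  have hxM : ∀ x ∈ X, ∀ j, ∀ m ∈ ℳ j, x • m ∈ ℳ (j + 1) := by
    intro x hx j m hm
    rw [add_comm]
    exact hℳ 1 j x (hX1 hx) m hm
  have hxR : ∀ x ∈ X, ∀ j, ∀ m ∈ 𝒜 j, x • m ∈ 𝒜 (j + 1) := by
    intro x hx j m hm
    rw [add_comm]
    exact SetLike.mul_mem_graded (hX1 hx) hm
  have hIh : ∀ (j : ℤ) (a : R), a ∈ I → prj 𝒜 j a ∈ I := fun j a ha => hI j ha
  set φ : ℕ → ℤ → ℕ := fun n j => quotPieceDim k (R := R) ℳ (bracketPow I (p ^ n) • ⊤) j with hφ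
  -- vanishing criterion
  have hvan : ∀ (n : ℕ) (j : ℤ), (∀ m ∈ ℳ j, m ∈ bracketPow I (p ^ n) • (⊤ : Submodule R M)) →
      φ n j = 0 := by
    intro n j h
    have : (ℳ j).map ((bracketPow I (p ^ n) • (⊤ : Submodule R M)).mkQ.restrictScalars k) = ⊥ := by
      rw [eq_bot_iff]
      rintro _ ⟨m, hm, rfl⟩
      exact (Submodule.Quotient.mk_eq_zero _).2 (h m hm)
    simp only [hφ, quotPieceDim]
    rw [this, finrank_bot]
  have hneg0 : ∀ n j, j < 0 → φ n j = 0 := by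
    intro n j hj
    refine hvan n j fun m hm => ?_
    rw [hℳneg j hj, Submodule.mem_bot] at hm
    rw [hm]; exact zero_mem _
  have hfin := piece_finite ℳ X hxM hk hℳneg
  by_cases hItop : I = ⊤
  · have hall : ∀ n j, φ n j = 0 := by
      intro n j
      refine hvan n j fun m _ => ?_
      have h1 : (1 : R) ∈ bracketPow I (p ^ n) :=
        Ideal.subset_span ⟨1, by rw [hItop]; trivial, one_pow _⟩
      simpa using Submodule.smul_mem_smul h1 (Submodule.mem_top (x := m))
    exact analysis_part p d hp2 hd1 φ 0 0 le_rfl (fun n j _ => hall n j) (fun n j _ => hall n j)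
      (fun n j _ => by simp [hall]) g hgconv y FP hFP
  -- `I` is contained in the irrelevant ideal
  have hIX : I ≤ Ideal.span (X : Set R) := by
    intro a ha
    obtain ⟨c, hc⟩ := hk a
    have h1 := prj_pow_eq_zero 𝒜 X hxR h𝒜neg 1 0 (by norm_num) (a - algebraMap k R c) (by
      simpa using hc)
    have h2 : algebraMap k R c ∈ 𝒜 0 := by
      rw [Algebra.algebraMap_eq_smul_one]
      exact Submodule.smul_mem _ _ SetLike.GradedOne.one_mem
    rw [map_sub, prj_same 𝒜 h2, sub_eq_zero] at h1
    have h3 := hIh 0 a ha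
    rw [h1] at h3
    by_cases hc0 : c = 0
    · simpa [hc0] using hc
    · exact absurd (Ideal.eq_top_of_isUnit_mem I h3 ((IsUnit.mk0 c hc0).map _)) hItop
  -- powers of generators lie in `I`
  have hpow : ∀ x ∈ X, ∃ s : ℕ, x ^ s ∈ I := by
    intro x hx
    have hart : IsArtinian R (R ⧸ I) := (isFiniteLength_iff_isNoetherian_isArtinian.1 hIfl).2
    obtain ⟨s, b, hb⟩ := IsArtinian.exists_pow_succ_smul_dvd x (Ideal.Quotient.mk I 1)
    obtain ⟨b, rfl⟩ := Ideal.Quotient.mk_surjective b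
    have h1 : x ^ (s + 1) * b - x ^ s ∈ I := by
      rw [← Ideal.Quotient.eq]
      have e1 : x ^ s.succ • (Ideal.Quotient.mk I b) = Ideal.Quotient.mk I (x ^ (s + 1) * b) := rfl
      have e2 : x ^ s • (Ideal.Quotient.mk I 1) = Ideal.Quotient.mk I (x ^ s * 1) := rfl
      rw [e1, e2, mul_one] at hb
      exact hb
    have h2 := hIh s _ h1
    have h3 := prj_pow_eq_zero 𝒜 X hxR h𝒜neg (s + 1) s (by push_cast; omega) (x ^ (s + 1) * b) (by
      rw [← smul_eq_mul]
      exact Submodule.smul_mem_smul (Ideal.pow_mem_pow (Ideal.subset_span hx) _) trivial)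
    have h4 : x ^ s ∈ 𝒜 (s : ℤ) := by
      have := SetLike.pow_mem_graded s (hX1 hx)
      simpa using this
    rw [map_sub, h3, prj_same 𝒜 h4, zero_sub] at h2
    exact ⟨s, by simpa using h2⟩
  obtain ⟨s, hs⟩ : ∃ s : ℕ, ∀ x ∈ X, x ^ s ∈ I := by
    choose! s hs using hpow
    refine ⟨X.sup s, fun x hx => ?_⟩
    exact Ideal.pow_mem_of_pow_mem I (hs x hx) (Finset.le_sup hx)
  obtain ⟨D, hD⟩ := piece_le_pow ℳ X hxM hk
  -- vanishing in large degrees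
  have hlarge : ∀ (n : ℕ) (j : ℤ), (((D + X.card * s + 1) * p ^ n : ℕ) : ℤ) ≤ j → φ n j = 0 := by
    intro n j hj
    refine hvan n j fun m hm => ?_
    have hpn : 1 ≤ p ^ n := Nat.one_le_pow _ _ hp.pos
    have hDn : D + (X.card * (s * p ^ n) + 1) ≤ (D + X.card * s + 1) * p ^ n := by nlinarith
    have h1 := hD (X.card * (s * p ^ n) + 1) j (by
      refine le_trans ?_ hj
      exact_mod_cast hDn) m hm
    refine Submodule.smul_mono_left ?_ h1
    rcases span_pow_le_span_pow X (s * p ^ n) with h | h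
    · refine (Ideal.pow_le_pow_right (Nat.le_succ _)).trans (h.trans ?_)
      rw [Ideal.span_le]
      rintro _ ⟨x, hx, rfl⟩
      refine Ideal.subset_span ⟨x ^ s, hs x hx, ?_⟩
      simp only [pow_mul]
    · subst h
      simp
  have hevp : EvPoly (fun j => (Module.finrank k (ℳ j) : ℚ)) := by
    have := hilbert_poly ℳ X hxM hk hℳneg X (le_refl _) ⊤ ⊥ bot_le (fun _ _ _ => trivial)
      (fun j n hn => by rw [Submodule.mem_bot] at hn ⊢; rw [hn, map_zero])
      (fun x hx hx' => absurd hx hx')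
    convert this using 2 with j
    have t1 : (⊤ : Submodule R M).restrictScalars k ⊓ ℳ j = ℳ j := by
      rw [Submodule.restrictScalars_top, top_inf_eq]
    have t2 : (⊥ : Submodule R M).restrictScalars k ⊓ ℳ j = ⊥ := by
      rw [Submodule.restrictScalars_bot, bot_inf_eq]
    simp only [hf]
    rw [t1, t2, finrank_bot]
    simp
  obtain ⟨B0, hB0⟩ := (hgconv (1 / p)).bddAbove_range
  have hpR : (0 : ℝ) < p := by exact_mod_cast hp.pos
  obtain ⟨C, hC0, hC⟩ := poly_growth p (d - 1) hp2 (fun j => Module.finrank k (ℳ j)) hevp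
    (B0 * (p : ℝ) ^ (d - 1)) (by
    intro m
    have h1 := hB0 ⟨m + 1, rfl⟩
    have hfl : ⌊(1 / (p : ℝ)) * (p : ℝ) ^ (m + 1)⌋ = (p : ℤ) ^ m := by
      have : (1 / (p : ℝ)) * (p : ℝ) ^ (m + 1) = (((p : ℤ) ^ m : ℤ) : ℝ) := by
        push_cast
        rw [pow_succ]
        field_simp
      rw [this, Int.floor_intCast]
    simp only [hfl] at h1
    have hfull : quotPieceDim k (R := R) ℳ (bracketPow I (p ^ (m + 1)) • ⊤) ((p : ℤ) ^ m)
        = Module.finrank k (ℳ ((p : ℤ) ^ m)) := by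
      have := hfin ((p : ℤ) ^ m)
      have h2 := finrank_split (ℳ ((p : ℤ) ^ m))
        ((bracketPow I (p ^ (m + 1)) • (⊤ : Submodule R M)).mkQ.restrictScalars k)
      have h3 : ℳ ((p : ℤ) ^ m) ⊓ LinearMap.ker
          ((bracketPow I (p ^ (m + 1)) • (⊤ : Submodule R M)).mkQ.restrictScalars k) = ⊥ := by
        rw [eq_bot_iff]
        rintro z ⟨hz1, hz2⟩
        have hz3 : z ∈ bracketPow I (p ^ (m + 1)) • (⊤ : Submodule R M) :=
          (Submodule.Quotient.mk_eq_zero _).1 hz2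
        have hle : bracketPow I (p ^ (m + 1)) ≤ (Ideal.span (X : Set R)) ^ (p ^ (m + 1)) := by
          rw [bracketPow, Ideal.span_le]
          rintro _ ⟨a, ha, rfl⟩
          exact Ideal.pow_mem_pow (hIX ha) _
        have hlt : ((p : ℤ) ^ m) < ((p ^ (m + 1) : ℕ) : ℤ) := by
          have : p ^ m < p ^ (m + 1) := Nat.pow_lt_pow_right hp.one_lt (Nat.lt_succ_self m)
          exact_mod_cast this
        have hz4 := prj_pow_eq_zero ℳ X hxM hℳneg (p ^ (m + 1)) ((p : ℤ) ^ m) hlt z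
          (Submodule.smul_mono_left hle hz3)
        rw [prj_same ℳ hz1] at hz4
        simpa using hz4
      rw [h3, finrank_bot, add_zero] at h2
      exact h2
    rw [hfull, one_div, inv_pow, inv_mul_le_iff₀ (by positivity)] at h1
    refine h1.trans (le_of_eq ?_)
    rw [pow_succ, mul_pow]
    ring)
  refine analysis_part p d hp2 hd1 φ _ C hC0 hneg0 hlarge (fun n j hj => ?_) g hgconv y FP hFP
  refine le_trans ?_ (hC j hj)
  have := hfin j
  exact_mod_cast Submodule.finrank_map_le _ _

end
end

section
/- Let R be a finitely generated ℕ-graded k-algebra (k any field) and M a finitely generated ℤ-graded R-module of Krull dimension d. Then: (1) the limit e_M = d!·lim_{n→∞} n^{-d} Σ_{j≤n} λ_k(M_j) exists; and (2) lim_{t→1⁻} (1−t)^d H_M(t) = e_M, where H_M(t) = Σ_{j∈ℤ} λ_k(M_j) t^j is the Hilbert series of M evaluated at real t ∈ (0,1). -/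
open Filter

noncomputable section

namespace HSM

lemma cesaro_pow (d : ℕ) (G : ℕ → ℝ) (L : ℝ)
    (hG : Tendsto (fun n : ℕ => G n / (n : ℝ) ^ d) atTop (nhds L)) :
    Tendsto (fun n : ℕ => (∑ m ∈ Finset.range n, G m) / (n : ℝ) ^ (d + 1)) atTop
      (nhds (L / (d + 1))) := by
  set g : ℕ → ℝ := fun m => ((m : ℝ) + 1) ^ (d + 1) - (m : ℝ) ^ (d + 1) with hg
  have hgpos : ∀ m, 0 < g m := by
    intro m
    have : (m : ℝ) ^ (d + 1) < ((m : ℝ) + 1) ^ (d + 1) := by gcongr; linarith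
    simp only [hg]; linarith
  have hsum : ∀ n, ∑ m ∈ Finset.range n, g m = (n : ℝ) ^ (d + 1) := by
    intro n
    have := Finset.sum_range_sub (fun m : ℕ => (m : ℝ) ^ (d + 1)) n
    simpa [hg] using this
  have hglim : Tendsto (fun n : ℕ => g n / (n : ℝ) ^ d) atTop (nhds ((d : ℝ) + 1)) := by
    have h1 : Tendsto (fun n : ℕ => ((n : ℝ) + 1) / n) atTop (nhds 1) := by
      have : Tendsto (fun n : ℕ => 1 + 1 / (n : ℝ)) atTop (nhds (1 + 0)) :=
        tendsto_const_nhds.add tendsto_one_div_atTop_nhds_zero_nat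
      rw [add_zero] at this
      refine this.congr' ?_
      filter_upwards [eventually_gt_atTop 0] with n hn
      have : (n : ℝ) ≠ 0 := by positivity
      field_simp
    have h2 : Tendsto (fun n : ℕ => ∑ i ∈ Finset.range (d + 1), (((n : ℝ) + 1) / n) ^ i) atTop
        (nhds (∑ i ∈ Finset.range (d + 1), (1 : ℝ) ^ i)) :=
      tendsto_finsetSum _ fun i _ => h1.pow i
    simp only [one_pow, Finset.sum_const, Finset.card_range, nsmul_eq_mul, mul_one] at h2
    push_cast at h2
    refine h2.congr' ?_
    filter_upwards [eventually_gt_atTop 0] with n hn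
    have hn0 : (n : ℝ) ≠ 0 := by positivity
    have := (geom_sum₂_mul ((n : ℝ) + 1) n (d + 1)).symm
    simp only [hg]
    rw [this, show ((n : ℝ) + 1 - n) = 1 by ring, mul_one, Finset.sum_div]
    refine Finset.sum_congr rfl fun i hi => ?_
    have hi' : i ≤ d := by simp at hi; omega
    obtain ⟨e, rfl⟩ := Nat.exists_eq_add_of_le hi'
    have : i + e + 1 - 1 - i = e := by omega
    rw [this, div_pow, pow_add]
    field_simp
  have hlo : (fun n => G n - L / (d + 1) * g n) =o[atTop] g := by
    rw [Asymptotics.isLittleO_iff_tendsto (fun n hn => absurd hn (hgpos n).ne')]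
    have hd : (d : ℝ) + 1 ≠ 0 := by positivity
    have := (hG.div hglim hd).sub_const (L / (d + 1))
    rw [sub_self] at this
    refine this.congr' ?_
    filter_upwards [eventually_gt_atTop 0] with n hn
    have hn0 : (n : ℝ) ^ d ≠ 0 := by positivity
    have := (hgpos n).ne'
    simp only [Pi.div_apply]
    field_simp
  have h3 := hlo.sum_range (fun n => (hgpos n).le) (by
    simp only [hsum]
    exact (tendsto_pow_atTop (by omega)).comp tendsto_natCast_atTop_atTop)
  simp only [hsum, Finset.sum_sub_distrib, ← Finset.mul_sum] at h3
  have h4 := h3.tendsto_div_nhds_zero.add_const (L / (d + 1))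
  rw [zero_add] at h4
  refine h4.congr' ?_
  filter_upwards [eventually_gt_atTop 0] with n hn
  have hn0 : (n : ℝ) ^ (d + 1) ≠ 0 := by positivity
  field_simp
  ring

def cum (h : ℤ → ℝ) (n : ℤ) : ℝ := ∑' j : ℤ, if j ≤ n then h j else 0
def ser (h : ℤ → ℝ) (t : ℝ) : ℝ := ∑' j : ℤ, h j * t ^ j

def LB (h : ℤ → ℝ) : Prop := ∃ b : ℤ, ∀ j < b, h j = 0

lemma LB.shift {h : ℤ → ℝ} (hb : LB h) (a : ℤ) : LB fun j => h (j - a) := by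
  obtain ⟨b, hb⟩ := hb
  exact ⟨b + a, fun j hj => hb _ (by omega)⟩

lemma cum_summable {h : ℤ → ℝ} (hb : LB h) (n : ℤ) :
    Summable fun j : ℤ => if j ≤ n then h j else 0 := by
  obtain ⟨b, hb⟩ := hb
  refine summable_of_ne_finset_zero (s := Finset.Icc b n) fun j hj => ?_
  split_ifs with h1
  · apply hb; simp at hj; omega
  · rfl

lemma cum_shift (h : ℤ → ℝ) (a n : ℤ) : cum (fun j => h (j - a)) n = cum h (n - a) := by
  unfold cum
  rw [← (Equiv.subRight a).tsum_eq (fun j => if j ≤ n - a then h j else 0)]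
  simp

lemma cum_add {f g : ℤ → ℝ} (hf : LB f) (hg : LB g) (n : ℤ) :
    cum (fun j => f j + g j) n = cum f n + cum g n := by
  unfold cum
  rw [← (cum_summable hf n).tsum_add (cum_summable hg n)]
  congr 1; ext j; split_ifs <;> simp

lemma cum_mono {h : ℤ → ℝ} (h0 : ∀ j, 0 ≤ h j) (hb : LB h) : Monotone (cum h) := by
  intro m n hmn
  refine (cum_summable hb m).tsum_le_tsum (fun j => ?_) (cum_summable hb n)
  have := h0 j
  split_ifs
  · exact le_rfl
  · omega
  · exact this
  · exact le_rfl

lemma le_cum {h : ℤ → ℝ} (h0 : ∀ j, 0 ≤ h j) (hb : LB h) (n : ℤ) : h n ≤ cum h n := by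
  have := (cum_summable hb n).le_tsum n (fun j _ => by have := h0 j; split_ifs <;> simp [this])
  rw [if_pos le_rfl] at this
  exact this

lemma ser_shift (h : ℤ → ℝ) (a : ℤ) {t : ℝ} (ht : t ≠ 0) :
    ser (fun j => h (j - a)) t = t ^ a * ser h t := by
  unfold ser
  rw [← (Equiv.subRight a).tsum_eq (fun j => h j * t ^ j), ← tsum_mul_left]
  congr 1; ext j
  simp only [Equiv.subRight_apply]
  rw [zpow_sub₀ ht]
  field_simp

lemma ser_shift_summable {h : ℤ → ℝ} (a : ℤ) {t : ℝ} (ht : t ≠ 0)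
    (hs : Summable fun j => h j * t ^ j) : Summable fun j => h (j - a) * t ^ j := by
  have := ((Equiv.subRight a).summable_iff.mpr hs).mul_left (t ^ a)
  refine this.congr fun j => ?_
  simp only [Equiv.subRight_apply, Function.comp]
  rw [zpow_sub₀ ht]
  field_simp

lemma ser_summable {h : ℤ → ℝ} (h0 : ∀ j, 0 ≤ h j) (hb : LB h) {d : ℕ} {L : ℝ}
    (hL : Tendsto (fun n : ℤ => cum h n / (n : ℝ) ^ d) atTop (nhds L)) {t : ℝ}
    (ht : t ∈ Set.Ioo (0 : ℝ) 1) : Summable fun j => h j * t ^ j := by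
  refine Summable.of_nat_of_neg ?_ ?_
  · rw [← Nat.map_cast_int_atTop, tendsto_map'_iff] at hL
    have h1 := hL.isBigO_one ℝ
    have h2 : (fun n : ℕ => h n * t ^ (n : ℤ)) =O[atTop] fun n : ℕ => (n : ℝ) ^ d * t ^ n := by
      have h3 : (fun n : ℕ => h n) =O[atTop] fun n : ℕ => (n : ℝ) ^ d := by
        have h4 : (fun n : ℕ => h n) =O[atTop] fun n : ℕ => cum h n := by
          refine Asymptotics.IsBigO.of_bound 1 (Eventually.of_forall fun n => ?_)
          have := le_cum h0 hb n
          rw [Real.norm_of_nonneg (h0 _), Real.norm_of_nonneg ((h0 _).trans this), one_mul]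
          exact this
        have h5 := h1.mul (Asymptotics.isBigO_refl (fun n : ℕ => (n : ℝ) ^ d) atTop)
        refine h4.trans (h5.congr' ?_ ?_)
        · filter_upwards [eventually_gt_atTop 0] with n hn
          have : (n : ℝ) ^ d ≠ 0 := by positivity
          simp [this]
        · simp
      simpa using h3.mul (Asymptotics.isBigO_refl (fun n : ℕ => t ^ n) atTop)
    refine summable_of_isBigO_nat (summable_pow_mul_geometric_of_norm_lt_one d ?_) h2
    rw [Real.norm_of_nonneg ht.1.le]; exact ht.2
  · obtain ⟨b, hb⟩ := hb
    refine summable_of_ne_finset_zero (s := Finset.range (b.natAbs + 1)) fun j hj => ?_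
    rw [hb, zero_mul]
    simp at hj; omega

lemma tendsto_shift_div (a : ℤ) (d : ℕ) :
    Tendsto (fun n : ℤ => ((n - a : ℤ) : ℝ) ^ d / (n : ℝ) ^ d) atTop (nhds 1) := by
  have h1 : Tendsto (fun n : ℤ => 1 - (a : ℝ) / (n : ℝ)) atTop (nhds (1 - 0)) :=
    tendsto_const_nhds.sub (tendsto_const_nhds.div_atTop tendsto_intCast_atTop_atTop)
  have h2 := h1.pow d
  simp only [sub_zero, one_pow] at h2
  refine h2.congr' ?_
  filter_upwards [eventually_gt_atTop 0] with n hn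
  have : (n : ℝ) ≠ 0 := by exact_mod_cast hn.ne'
  rw [← div_pow]
  congr 1
  push_cast; field_simp

lemma tendsto_cum_shift {F : ℤ → ℝ} {d : ℕ} {L : ℝ} (a : ℤ)
    (hL : Tendsto (fun n : ℤ => F n / (n : ℝ) ^ d) atTop (nhds L)) :
    Tendsto (fun n : ℤ => F (n - a) / (n : ℝ) ^ d) atTop (nhds L) := by
  have h1 : Tendsto (fun n : ℤ => n - a) atTop atTop := tendsto_atTop_add_const_right _ (-a) tendsto_id
  have h2 := (hL.comp h1).mul (tendsto_shift_div a d)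
  rw [mul_one] at h2
  refine h2.congr' ?_
  filter_upwards [eventually_gt_atTop a] with n hn
  have : ((n - a : ℤ) : ℝ) ^ d ≠ 0 := by
    apply pow_ne_zero; exact_mod_cast (by omega)
  simp only [Function.comp]
  field_simp

def Good (d : ℕ) (h : ℤ → ℝ) : Prop :=
  (∀ j, 0 ≤ h j) ∧ LB h ∧ ∃ L : ℝ,
    Tendsto (fun n : ℤ => cum h n / (n : ℝ) ^ d) atTop (nhds L) ∧
    Tendsto (fun t : ℝ => (1 - t) ^ d * ser h t) (nhdsWithin 1 (Set.Ioo 0 1))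
      (nhds (d.factorial * L))

lemma Good.add {d : ℕ} {f g : ℤ → ℝ} (hf : Good d f) (hg : Good d g) :
    Good d fun j => f j + g j := by
  obtain ⟨f0, fb, L, fL, fS⟩ := hf
  obtain ⟨g0, gb, K, gL, gS⟩ := hg
  refine ⟨fun j => add_nonneg (f0 j) (g0 j), ?_, L + K, ?_, ?_⟩
  · obtain ⟨b, hb⟩ := fb
    obtain ⟨c, hc⟩ := gb
    exact ⟨min b c, fun j hj => by
      show f j + g j = 0
      rw [hb j (by omega), hc j (by omega), add_zero]⟩
  · refine (fL.add gL).congr fun n => ?_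
    rw [cum_add fb gb, add_div]
  · rw [mul_add]
    refine (fS.add gS).congr' ?_
    filter_upwards [self_mem_nhdsWithin] with t ht
    unfold ser
    simp only [add_mul]
    rw [(ser_summable f0 fb fL ht).tsum_add (ser_summable g0 gb gL ht), mul_add]

lemma Good.shift {d : ℕ} {f : ℤ → ℝ} (hf : Good d f) (a : ℤ) : Good d fun j => f (j - a) := by
  obtain ⟨f0, fb, L, fL, fS⟩ := hf
  refine ⟨fun j => f0 _, fb.shift a, L, ?_, ?_⟩
  · simp only [cum_shift]
    exact tendsto_cum_shift a fL
  · have h1 : Tendsto (fun t : ℝ => t ^ a) (nhdsWithin 1 (Set.Ioo 0 1)) (nhds (1 ^ a)) :=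
      ((continuousAt_zpow₀ (1 : ℝ) a (Or.inl one_ne_zero)).tendsto).mono_left nhdsWithin_le_nhds
    have h2 := h1.mul fS
    rw [one_zpow, one_mul] at h2
    refine h2.congr' ?_
    filter_upwards [self_mem_nhdsWithin] with t ht
    rw [ser_shift f a ht.1.ne']; ring

lemma Good.of_finite {h : ℤ → ℝ} (h0 : ∀ j, 0 ≤ h j) (s : Finset ℤ) (hs : ∀ j ∉ s, h j = 0)
    (d : ℕ) : Good d h := by
  have hcum : ∀ᶠ n : ℤ in atTop, cum h n = ∑ j ∈ s, h j := by
    obtain ⟨B, hB⟩ := s.bddAbove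
    filter_upwards [eventually_ge_atTop B] with n hn
    unfold cum
    rw [tsum_eq_sum (s := s)]
    · refine Finset.sum_congr rfl fun j hj => if_pos ((hB hj).trans hn)
    · intro j hj; simp [hs j hj]
  have hser : ∀ t, ser h t = ∑ j ∈ s, h j * t ^ j := by
    intro t
    unfold ser
    rw [tsum_eq_sum (s := s)]
    intro j hj; simp [hs j hj]
  have hserlim : Tendsto (ser h) (nhdsWithin 1 (Set.Ioo 0 1)) (nhds (∑ j ∈ s, h j)) := by
    have : Tendsto (fun t : ℝ => ∑ j ∈ s, h j * t ^ j) (nhdsWithin 1 (Set.Ioo 0 1))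
        (nhds (∑ j ∈ s, h j * 1 ^ j)) := by
      refine tendsto_finsetSum _ fun j _ => tendsto_const_nhds.mul ?_
      exact ((continuousAt_zpow₀ (1 : ℝ) j (Or.inl one_ne_zero)).tendsto).mono_left
        nhdsWithin_le_nhds
    simp only [one_zpow, mul_one] at this
    exact this.congr fun t => (hser t).symm
  refine ⟨h0, ?_, ?_⟩
  · obtain ⟨B, hB⟩ := s.bddBelow
    exact ⟨B, fun j hj => hs j fun hjs => absurd (hB hjs) (by omega)⟩
  rcases Nat.eq_zero_or_pos d with rfl | hd
  · refine ⟨∑ j ∈ s, h j, ?_, by simpa using hserlim⟩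
    refine tendsto_const_nhds.congr' ?_
    filter_upwards [hcum] with n hn
    simp [hn]
  · refine ⟨0, ?_, ?_⟩
    · have : Tendsto (fun n : ℤ => (∑ j ∈ s, h j) / (n : ℝ) ^ d) atTop (nhds 0) :=
        tendsto_const_nhds.div_atTop ((tendsto_pow_atTop hd.ne').comp tendsto_intCast_atTop_atTop)
      refine this.congr' ?_
      filter_upwards [hcum] with n hn
      rw [hn]
    · have : Tendsto (fun t : ℝ => (1 - t) ^ d) (nhdsWithin 1 (Set.Ioo 0 1))
          (nhds ((1 - 1) ^ d)) :=
        (Continuous.tendsto (by fun_prop) 1).mono_left nhdsWithin_le_nhds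
      simpa [hd.ne'] using this.mul hserlim

lemma tendsto_one_sub_div (a : ℕ) (ha : 0 < a) :
    Tendsto (fun t : ℝ => (1 - t) / (1 - t ^ a)) (nhdsWithin 1 (Set.Ioo 0 1))
      (nhds (1 / a)) := by
  have h1 : Tendsto (fun t : ℝ => 1 / ∑ i ∈ Finset.range a, t ^ i)
      (nhdsWithin 1 (Set.Ioo 0 1)) (nhds (1 / ∑ i ∈ Finset.range a, (1 : ℝ) ^ i)) := by
    refine tendsto_const_nhds.div ?_ (by simp; omega)
    exact (Continuous.tendsto (by fun_prop) 1).mono_left nhdsWithin_le_nhds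
  simp only [one_pow, Finset.sum_const, Finset.card_range, nsmul_eq_mul, mul_one] at h1
  refine h1.congr' ?_
  filter_upwards [self_mem_nhdsWithin] with t ht
  have h2 := mul_neg_geom_sum t a
  have h3 : (1 - t) ≠ 0 := by linarith [ht.2]
  rw [← h2]
  field_simp

lemma cum_step {h g : ℤ → ℝ} (h0 : ∀ j, 0 ≤ h j) (hb : LB h) {a : ℕ} (ha : 0 < a)
    (hg : LB g) (hh : ∀ j, h j = g j + h (j - a)) {d : ℕ} {L : ℝ}
    (hL : Tendsto (fun n : ℤ => cum g n / (n : ℝ) ^ d) atTop (nhds L)) :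
    Tendsto (fun n : ℤ => cum h n / (n : ℝ) ^ (d + 1)) atTop (nhds (L / (d + 1) / a)) := by
  have hF : ∀ n, cum h n = cum g n + cum h (n - a) := by
    intro n
    rw [← cum_shift h a n, ← cum_add hg (hb.shift a)]
    congr 1; ext j; exact hh j
  set T : ℤ → ℝ := fun n => ∑ i ∈ Finset.range a, cum h (n - i) with hT
  have hTs : ∀ n, T n = T (n - 1) + cum g n := by
    intro n
    obtain ⟨a, rfl⟩ := Nat.exists_eq_succ_of_ne_zero ha.ne'
    simp only [hT]
    rw [Finset.sum_range_succ' (fun i : ℕ => cum h (n - i)),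
      Finset.sum_range_succ (fun i : ℕ => cum h (n - 1 - i))]
    have := hF n
    have e1 : ∀ i : ℕ, n - 1 - (i : ℤ) = n - ((i + 1 : ℕ) : ℤ) := by intro i; push_cast; ring
    simp only [e1]
    simp only [Nat.cast_zero, sub_zero]
    rw [this]
    simp only [Nat.succ_eq_add_one]
    ring
  have hTn : ∀ n : ℕ, T n = T 0 - cum g 0 + ∑ m ∈ Finset.range (n + 1), cum g m := by
    intro n
    induction n with
    | zero => simp
    | succ n ih =>
      rw [hTs, Finset.sum_range_succ, ← add_assoc, ← ih]
      push_cast; simp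
  have hTlim : Tendsto (fun n : ℤ => T n / (n : ℝ) ^ (d + 1)) atTop (nhds (L / (d + 1))) := by
    have hL' := hL
    rw [← Nat.map_cast_int_atTop, tendsto_map'_iff] at hL'
    have h1 := cesaro_pow d (fun m : ℕ => cum g m) L (hL'.congr fun n => by simp)
    have h2 : Tendsto (fun n : ℤ => (T (n - 1)) / (n : ℝ) ^ (d + 1)) atTop
        (nhds (L / (d + 1))) := by
      rw [← Nat.map_cast_int_atTop, tendsto_map'_iff]
      have h3 : Tendsto (fun n : ℕ => (T 0 - cum g 0) / (n : ℝ) ^ (d + 1)) atTop (nhds 0) :=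
        tendsto_const_nhds.div_atTop
          ((tendsto_pow_atTop (by omega)).comp tendsto_natCast_atTop_atTop)
      have h4 := h3.add h1
      rw [zero_add] at h4
      refine h4.congr' ?_
      filter_upwards [eventually_gt_atTop 0] with n hn
      obtain ⟨n, rfl⟩ := Nat.exists_eq_succ_of_ne_zero hn.ne'
      simp only [Function.comp]
      rw [← add_div, ← hTn]
      simp
    have := tendsto_cum_shift (F := fun n => T (n - 1)) (-1) h2
    simpa using this
  have hlow : Tendsto (fun n : ℤ => T n / (n : ℝ) ^ (d + 1) / a) atTop
      (nhds (L / (d + 1) / a)) := hTlim.div_const _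
  have hup : Tendsto (fun n : ℤ => T (n - (-a)) / (n : ℝ) ^ (d + 1) / a) atTop
      (nhds (L / (d + 1) / a)) := (tendsto_cum_shift (-a : ℤ) hTlim).div_const _
  have ha' : (0 : ℝ) < a := by exact_mod_cast ha
  refine tendsto_of_tendsto_of_tendsto_of_le_of_le' hlow hup ?_ ?_
  · filter_upwards [eventually_gt_atTop 0] with n hn
    have hn' : (0 : ℝ) < (n : ℝ) ^ (d + 1) := by
      have : (0 : ℝ) < n := by exact_mod_cast hn
      positivity
    rw [div_right_comm, div_le_div_iff_of_pos_right hn', div_le_iff₀ ha']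
    calc T n ≤ ∑ i ∈ Finset.range a, cum h n :=
          Finset.sum_le_sum fun i _ => cum_mono h0 hb (by omega)
      _ = _ := by simp [mul_comm]
  · filter_upwards [eventually_gt_atTop 0] with n hn
    have hn' : (0 : ℝ) < (n : ℝ) ^ (d + 1) := by
      have : (0 : ℝ) < n := by exact_mod_cast hn
      positivity
    rw [div_right_comm, div_le_div_iff_of_pos_right hn', le_div_iff₀ ha']
    calc cum h n * a = ∑ i ∈ Finset.range a, cum h n := by simp [mul_comm]
      _ ≤ _ := Finset.sum_le_sum fun i hi => cum_mono h0 hb (by simp at hi; omega)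

lemma Good.step {h g : ℤ → ℝ} (h0 : ∀ j, 0 ≤ h j) (hb : LB h) {a : ℕ} (ha : 0 < a)
    (hh : ∀ j, h j = g j + h (j - a)) {d : ℕ} (hg : Good d g) : Good (d + 1) h := by
  obtain ⟨g0, gb, L, gL, gS⟩ := hg
  have hL := cum_step h0 hb ha gb hh gL
  refine ⟨h0, hb, _, hL, ?_⟩
  have h1 := gS.mul (tendsto_one_sub_div a ha)
  have h2 : (d.factorial : ℝ) * L * (1 / a) = ((d + 1).factorial : ℝ) * (L / (d + 1) / a) := by
    rw [Nat.factorial_succ]; push_cast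
    have : (d : ℝ) + 1 ≠ 0 := by positivity
    field_simp
  rw [h2] at h1
  refine h1.congr' ?_
  filter_upwards [self_mem_nhdsWithin] with t ht
  have hs := ser_summable h0 hb hL ht
  have hsg := ser_summable g0 gb gL ht
  have h3 : ser h t = ser g t + t ^ a * ser h t := by
    rw [← zpow_natCast, ← ser_shift h a ht.1.ne']
    unfold ser
    rw [← hsg.tsum_add (ser_shift_summable (a : ℤ) ht.1.ne' hs)]
    congr 1; ext j; rw [← add_mul, ← hh]
  have h4 : 1 - t ^ a ≠ 0 := by
    have := pow_lt_one₀ ht.1.le ht.2 ha.ne'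
    linarith
  have h5 : ser g t = (1 - t ^ a) * ser h t := by linarith
  rw [h5]
  field_simp
  ring

end HSM

namespace HSM
open DirectSum Pointwise

section alg
variable {k R M : Type} [Field k] [CommRing R] [Algebra k R]
    {𝒜 : ℤ → Submodule k R} [GradedAlgebra 𝒜]
    [AddCommGroup M] [Module R M] [Module k M] [IsScalarTower k R M]
    (ℳ : ℤ → Submodule k M) [DirectSum.Decomposition ℳ]

def cp (j : ℤ) (m : M) : M := (decompose ℳ m j : M)

lemma cp_mem (j : ℤ) (m : M) : cp ℳ j m ∈ ℳ j := (decompose ℳ m j).2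

lemma cp_add (j : ℤ) (m n : M) : cp ℳ j (m + n) = cp ℳ j m + cp ℳ j n := by
  simp [cp, decompose_add]

lemma cp_zero (j : ℤ) : cp ℳ j 0 = 0 := by simp [cp]

lemma cp_ksmul (j : ℤ) (c : k) (m : M) : cp ℳ j (c • m) = c • cp ℳ j m := by
  simp only [cp, decompose_smul]; rfl

lemma cp_same {j : ℤ} {m : M} (hm : m ∈ ℳ j) : cp ℳ j m = m := decompose_of_mem_same ℳ hm

lemma cp_smul (hℳ : ∀ (a b : ℤ), ∀ r ∈ 𝒜 a, ∀ x ∈ ℳ b, r • x ∈ ℳ (a + b))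
    {a : ℤ} {r : R} (hr : r ∈ 𝒜 a) (j : ℤ) (m : M) :
    cp ℳ j (r • m) = r • cp ℳ (j - a) m := by
  induction m using DirectSum.Decomposition.inductionOn ℳ with
  | zero => simp [cp_zero]
  | add m n hm hn => rw [smul_add, cp_add, cp_add, hm, hn, smul_add]
  | @homogeneous i m =>
    have h1 := hℳ a i r hr m m.2
    by_cases h : a + i = j
    · subst h
      rw [cp_same ℳ h1, show a + i - a = i by ring, cp_same ℳ m.2]
    · unfold cp
      rw [decompose_of_mem_ne ℳ h1 h, decompose_of_mem_ne ℳ m.2 (by omega), smul_zero]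

lemma exists_lb (hneg : ∀ t : ℤ, t < 0 → 𝒜 t = ⊥)
    (hℳ : ∀ (a b : ℤ), ∀ r ∈ 𝒜 a, ∀ x ∈ ℳ b, r • x ∈ ℳ (a + b)) [Module.Finite R M] :
    ∃ b : ℤ, ∀ j < b, ℳ j = ⊥ := by
  classical
  obtain ⟨S, hS⟩ := Module.Finite.fg_top (R := R) (M := M)
  obtain ⟨b, hb⟩ := (S.biUnion fun s => (decompose ℳ s).support).bddBelow
  refine ⟨b, ?_⟩
  have key : ∀ m : M, ∀ j < b, cp ℳ j m = 0 := by
    intro m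
    have hm : m ∈ Submodule.span R (S : Set M) := hS ▸ Submodule.mem_top
    induction hm using Submodule.span_induction with
    | mem s hs =>
      intro j hj
      by_contra hne
      have : j ∈ S.biUnion fun s => (decompose ℳ s).support := by
        rw [Finset.mem_biUnion]
        refine ⟨s, hs, ?_⟩
        rw [DFinsupp.mem_support_iff]
        intro h0
        exact hne (by simp [cp, h0])
      have := hb this
      omega
    | zero => intro j _; exact cp_zero ℳ j
    | add x y _ _ hx hy => intro j hj; rw [cp_add, hx j hj, hy j hj, add_zero]
    | smul r x _ hx =>
      induction r using DirectSum.Decomposition.inductionOn 𝒜 with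
      | zero => intro j _; rw [zero_smul, cp_zero]
      | add r s hr hs => intro j hj; rw [add_smul, cp_add, hr j hj, hs j hj, add_zero]
      | @homogeneous i r =>
        intro j hj
        rw [cp_smul ℳ hℳ r.2]
        rcases lt_or_ge i 0 with hi | hi
        · have : (r : R) = 0 := by
            exact (Submodule.mem_bot k).1 (hneg i hi ▸ r.2 : (r : R) ∈ (⊥ : Submodule k R))
          rw [this, zero_smul]
        · rw [hx _ (by omega), smul_zero]
  intro j hj
  rw [eq_bot_iff]
  intro m hm
  rw [Submodule.mem_bot, ← cp_same ℳ hm]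
  exact key m j hj

def Hom (N : Submodule R M) : Prop := ∀ m ∈ N, ∀ j, cp ℳ j m ∈ N

def Nj (N : Submodule R M) (j : ℤ) : Submodule k (ℳ j) :=
  (N.restrictScalars k).comap (ℳ j).subtype

lemma mem_Nj (N : Submodule R M) (j : ℤ) (m : ℳ j) : m ∈ Nj ℳ N j ↔ (m : M) ∈ N := Iff.rfl

def hf (N : Submodule R M) (j : ℤ) : ℕ := Module.finrank k (ℳ j ⧸ Nj ℳ N j)

def colon (N : Submodule R M) (r : R) : Submodule R M := N.comap (LinearMap.lsmul R M r)

def plus (N : Submodule R M) (r : R) : Submodule R M := N ⊔ LinearMap.range (LinearMap.lsmul R M r)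

lemma mem_colon (N : Submodule R M) (r : R) (m : M) : m ∈ colon N r ↔ r • m ∈ N := Iff.rfl

lemma mem_plus (N : Submodule R M) (r : R) (m : M) :
    m ∈ plus N r ↔ ∃ n ∈ N, ∃ m', n + r • m' = m := by
  simp [plus, Submodule.mem_sup]

lemma le_colon (N : Submodule R M) (r : R) : N ≤ colon N r := fun _ hm => N.smul_mem r hm

lemma le_plus (N : Submodule R M) (r : R) : N ≤ plus N r := le_sup_left

lemma Hom.colon (hℳ : ∀ (a b : ℤ), ∀ r ∈ 𝒜 a, ∀ x ∈ ℳ b, r • x ∈ ℳ (a + b))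
    {N : Submodule R M} (hN : Hom ℳ N) {a : ℤ} {r : R} (hr : r ∈ 𝒜 a) :
    Hom ℳ (colon N r) := by
  intro m hm j
  rw [mem_colon] at hm ⊢
  have := hN _ hm (j + a)
  rwa [cp_smul ℳ hℳ hr, add_sub_cancel_right] at this

lemma Hom.plus (hℳ : ∀ (a b : ℤ), ∀ r ∈ 𝒜 a, ∀ x ∈ ℳ b, r • x ∈ ℳ (a + b))
    {N : Submodule R M} (hN : Hom ℳ N) {a : ℤ} {r : R} (hr : r ∈ 𝒜 a) :
    Hom ℳ (plus N r) := by
  intro m hm j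
  rw [mem_plus] at hm ⊢
  obtain ⟨n, hn, m', rfl⟩ := hm
  exact ⟨_, hN n hn j, _, by rw [cp_add, cp_smul ℳ hℳ hr]⟩

lemma exact_fin (hℳ : ∀ (a b : ℤ), ∀ r ∈ 𝒜 a, ∀ x ∈ ℳ b, r • x ∈ ℳ (a + b))
    {N : Submodule R M} (hN : Hom ℳ N) {a : ℤ} {r : R} (hr : r ∈ 𝒜 a) (j : ℤ)
    (h1 : Module.Finite k (ℳ j ⧸ Nj ℳ (plus N r) j))
    (h2 : Module.Finite k (ℳ (j - a) ⧸ Nj ℳ (colon N r) (j - a))) :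
    Module.Finite k (ℳ j ⧸ Nj ℳ N j) ∧
      hf ℳ N j = hf ℳ (plus N r) j + hf ℳ (colon N r) (j - a) := by
  have : SMulCommClass R k M := IsScalarTower.to_smulCommClass'
  let μ : ℳ (j - a) →ₗ[k] ℳ j :=
    { toFun := fun m => ⟨r • (m : M), by
        have := hℳ a (j - a) r hr m m.2
        rwa [show a + (j - a) = j by ring] at this⟩
      map_add' := fun x y => by ext; simp
      map_smul' := fun c x => Subtype.ext (smul_comm r c (x : M)) }
  let φ : ℳ (j - a) →ₗ[k] ℳ j ⧸ Nj ℳ N j := (Nj ℳ N j).mkQ.comp μ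
  have hker : LinearMap.ker φ = Nj ℳ (colon N r) (j - a) := by
    ext m
    simp only [φ, LinearMap.mem_ker, LinearMap.comp_apply, Submodule.mkQ_apply,
      Submodule.Quotient.mk_eq_zero]
    rfl
  have hrange : LinearMap.range φ = (Nj ℳ (plus N r) j).map (Nj ℳ N j).mkQ := by
    ext x
    constructor
    · rintro ⟨m, rfl⟩
      refine ⟨μ m, ?_, rfl⟩
      show (r • (m : M)) ∈ plus N r
      rw [mem_plus]
      exact ⟨0, N.zero_mem, m, by simp⟩
    · rintro ⟨y, hy, rfl⟩
      obtain ⟨n, hn, m', hm'⟩ := (mem_plus N r _).1 ((mem_Nj ℳ _ _ _).1 hy)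
      refine ⟨⟨cp ℳ (j - a) m', cp_mem ℳ _ _⟩, ?_⟩
      simp only [φ, LinearMap.comp_apply, Submodule.mkQ_apply]
      rw [eq_comm, Submodule.Quotient.eq, mem_Nj]
      have h3 : (y : M) = cp ℳ j n + r • cp ℳ (j - a) m' := by
        rw [← cp_smul ℳ hℳ hr, ← cp_add, hm', cp_same ℳ y.2]
      have h4 : ((y - μ ⟨cp ℳ (j - a) m', cp_mem ℳ _ _⟩ : ℳ j) : M) = cp ℳ j n := by
        show (y : M) - r • cp ℳ (j - a) m' = _
        rw [h3]; abel
      rw [h4]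
      exact hN n hn j
  have e1 : (ℳ (j - a) ⧸ Nj ℳ (colon N r) (j - a)) ≃ₗ[k] LinearMap.range φ :=
    (Submodule.quotEquivOfEq _ _ hker.symm).trans φ.quotKerEquivRange
  have hle : Nj ℳ N j ≤ Nj ℳ (plus N r) j := fun m hm => le_plus N r hm
  have e2 : ((ℳ j ⧸ Nj ℳ N j) ⧸ LinearMap.range φ) ≃ₗ[k] (ℳ j ⧸ Nj ℳ (plus N r) j) :=
    (Submodule.quotEquivOfEq _ _ hrange).trans
      (Submodule.quotientQuotientEquivQuotient _ _ hle)
  have : Module.Finite k (LinearMap.range φ) := Module.Finite.equiv e1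
  have : Module.Finite k ((ℳ j ⧸ Nj ℳ N j) ⧸ LinearMap.range φ) := Module.Finite.equiv e2.symm
  have : Module.Finite k (ℳ j ⧸ Nj ℳ N j) := Module.Finite.of_submodule_quotient (LinearMap.range φ)
  refine ⟨this, ?_⟩
  unfold hf
  rw [← Submodule.finrank_quotient_add_finrank (LinearMap.range φ), e2.finrank_eq, e1.finrank_eq]

lemma base_case (hneg : ∀ t : ℤ, t < 0 → 𝒜 t = ⊥)
    (hzero : ∀ x ∈ 𝒜 0, ∃ c : k, algebraMap k R c = x) [Module.Finite R M]
    {N : Submodule R M} (hN : Hom ℳ N)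
    (hk : ∀ a : ℤ, 0 < a → ∀ r ∈ 𝒜 a, ∀ m : M, r • m ∈ N) :
    (∀ j, Module.Finite k (ℳ j ⧸ Nj ℳ N j)) ∧
      ∃ s : Finset ℤ, ∀ j ∉ s, hf ℳ N j = 0 := by
  classical
  have h1 : ∀ r : R, ∃ c : k, ∀ m : M, r • m - c • m ∈ N := by
    intro r
    induction r using DirectSum.Decomposition.inductionOn 𝒜 with
    | zero => exact ⟨0, fun m => by simp⟩
    | add r s hr hs =>
      obtain ⟨c, hc⟩ := hr
      obtain ⟨e, he⟩ := hs
      refine ⟨c + e, fun m => ?_⟩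
      have := N.add_mem (hc m) (he m)
      convert this using 1
      rw [add_smul, add_smul]; abel
    | @homogeneous i r =>
      rcases lt_trichotomy i 0 with hi | hi | hi
      · have : (r : R) = 0 := by
          exact (Submodule.mem_bot k).1 (hneg i hi ▸ r.2 : (r : R) ∈ (⊥ : Submodule k R))
        exact ⟨0, fun m => by simp [this]⟩
      · subst hi
        obtain ⟨c, hc⟩ := hzero r r.2
        exact ⟨c, fun m => by rw [← hc, algebraMap_smul, sub_self]; exact N.zero_mem⟩
      · exact ⟨0, fun m => by rw [zero_smul, sub_zero]; exact hk i hi r r.2 m⟩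
  obtain ⟨S, hS⟩ := Module.Finite.fg_top (R := R) (M := M)
  have h2 : ∀ m : M, ∀ j, (Nj ℳ N j).mkQ (decompose ℳ m j) ∈
      Submodule.span k ((fun s => (Nj ℳ N j).mkQ (decompose ℳ s j)) '' (S : Set M)) := by
    intro m
    have hm : m ∈ Submodule.span R (S : Set M) := hS ▸ Submodule.mem_top
    induction hm using Submodule.span_induction with
    | mem s hs => intro j; exact Submodule.subset_span ⟨s, hs, rfl⟩
    | zero => intro j; simp
    | add x y _ _ hx hy =>
      intro j
      rw [decompose_add, DirectSum.add_apply, map_add]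
      exact Submodule.add_mem _ (hx j) (hy j)
    | smul r x _ hx =>
      intro j
      obtain ⟨c, hc⟩ := h1 r
      have h3 : (Nj ℳ N j).mkQ (decompose ℳ (r • x) j) = c • (Nj ℳ N j).mkQ (decompose ℳ x j) := by
        rw [← map_smul, Submodule.mkQ_apply, Submodule.mkQ_apply, Submodule.Quotient.eq, mem_Nj]
        have := hN _ (hc x) j
        convert this using 1
        simp only [cp, decompose_sub, decompose_smul]; rfl
      rw [h3]
      exact Submodule.smul_mem _ _ (hx j)
  have h4 : ∀ j, Submodule.span k
      ((fun s => (Nj ℳ N j).mkQ (decompose ℳ s j)) '' (S : Set M)) = ⊤ := by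
    intro j
    rw [eq_top_iff]
    rintro x -
    obtain ⟨y, rfl⟩ := (Nj ℳ N j).mkQ_surjective x
    have := h2 y j
    rwa [decompose_coe, DirectSum.of_eq_same] at this
  refine ⟨fun j => ⟨⟨S.image fun s => (Nj ℳ N j).mkQ (decompose ℳ s j), ?_⟩⟩,
    S.biUnion fun s => (decompose ℳ s).support, fun j hj => ?_⟩
  · rw [Finset.coe_image]; exact h4 j
  · have h5 : (⊤ : Submodule k (ℳ j ⧸ Nj ℳ N j)) ≤ ⊥ := by
      rw [← h4 j, Submodule.span_le]
      rintro _ ⟨s, hs, rfl⟩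
      have : decompose ℳ s j = 0 := by
        by_contra h0
        exact hj (Finset.mem_biUnion.2 ⟨s, hs, DFinsupp.mem_support_iff.2 h0⟩)
      simp [this]
    have : Subsingleton (ℳ j ⧸ Nj ℳ N j) :=
      (Submodule.subsingleton_iff k).1 (subsingleton_of_bot_eq_top (le_antisymm bot_le h5))
    exact Module.finrank_zero_of_subsingleton

lemma dim_step [Module.Finite R M] {N : Submodule R M} {r : R}
    (hr : colon N r = N) :
    Module.supportDim R (M ⧸ plus N r) + 1 ≤ Module.supportDim R (M ⧸ N) := by
  have reg : IsSMulRegular (M ⧸ N) r := by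
    rw [isSMulRegular_iff_right_eq_zero_of_smul]
    intro x hx
    obtain ⟨m, rfl⟩ := N.mkQ_surjective x
    rw [← map_smul, Submodule.mkQ_apply, Submodule.Quotient.mk_eq_zero, ← mem_colon, hr] at hx
    rwa [Submodule.mkQ_apply, Submodule.Quotient.mk_eq_zero]
  refine le_trans ?_ (Module.supportDim_quotSMulTop_succ_le_of_notMem_minimalPrimes
    (fun _ => reg.notMem_of_mem_minimalPrimes))
  gcongr
  let f : (M ⧸ N) →ₗ[R] (M ⧸ plus N r) := Submodule.factor (le_plus N r)
  have hf : r • (⊤ : Submodule R (M ⧸ N)) ≤ LinearMap.ker f := by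
    intro x hx
    obtain ⟨y, -, rfl⟩ := (Submodule.mem_smul_pointwise_iff_exists _ _ _).1 hx
    obtain ⟨m, rfl⟩ := N.mkQ_surjective y
    rw [LinearMap.mem_ker, ← map_smul]
    show (plus N r).mkQ (r • m) = 0
    rw [Submodule.mkQ_apply, Submodule.Quotient.mk_eq_zero, mem_plus]
    exact ⟨0, N.zero_mem, m, by simp⟩
  refine Module.supportDim_le_of_surjective (Submodule.liftQ _ f hf) ?_
  intro z
  obtain ⟨m, rfl⟩ := (plus N r).mkQ_surjective z
  exact ⟨Submodule.Quotient.mk (N.mkQ m), rfl⟩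

lemma finite_top (j : ℤ) : Module.Finite k (ℳ j ⧸ Nj ℳ (⊤ : Submodule R M) j) ∧
    hf ℳ (⊤ : Submodule R M) j = 0 := by
  have : Subsingleton (ℳ j ⧸ Nj ℳ (⊤ : Submodule R M) j) :=
    Submodule.Quotient.subsingleton_iff.2 rfl
  exact ⟨inferInstance, Module.finrank_zero_of_subsingleton⟩

theorem main_claim [IsNoetherianRing R] [Module.Finite R M] (hneg : ∀ t : ℤ, t < 0 → 𝒜 t = ⊥)
    (hzero : ∀ x ∈ 𝒜 0, ∃ c : k, algebraMap k R c = x)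
    (hℳ : ∀ (a b : ℤ), ∀ r ∈ 𝒜 a, ∀ x ∈ ℳ b, r • x ∈ ℳ (a + b)) (d : ℕ) :
    ∀ N : Submodule R M, Hom ℳ N → Module.supportDim R (M ⧸ N) ≤ d →
      (∀ j, Module.Finite k (ℳ j ⧸ Nj ℳ N j)) ∧ Good d fun j => (hf ℳ N j : ℝ) := by
  obtain ⟨b, hb⟩ := exists_lb ℳ hneg hℳ
  have hbf : ∀ N : Submodule R M, ∀ j < b,
      Module.Finite k (ℳ j ⧸ Nj ℳ N j) ∧ hf ℳ N j = 0 := by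
    intro N j hj
    have := hb j hj
    have : Subsingleton (ℳ j) := by rw [this]; infer_instance
    exact ⟨inferInstance, Module.finrank_zero_of_subsingleton⟩
  have hLB : ∀ N : Submodule R M, LB fun j => (hf ℳ N j : ℝ) := fun N =>
    ⟨b, fun j hj => by simp [(hbf N j hj).2]⟩
  have core : ∀ d : ℕ, (∀ (N : Submodule R M) (a : ℕ) (r : R), Hom ℳ N →
      Module.supportDim R (M ⧸ N) ≤ d → 0 < a → r ∈ 𝒜 a → colon N r = N →
      (∀ j, Module.Finite k (ℳ j ⧸ Nj ℳ (plus N r) j)) ∧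
      ((∀ j : ℤ, hf ℳ N j = hf ℳ (plus N r) j + hf ℳ N (j - a)) →
        Good d fun j => (hf ℳ N j : ℝ))) →
      ∀ N : Submodule R M, Hom ℳ N → Module.supportDim R (M ⧸ N) ≤ d →
      (∀ j, Module.Finite k (ℳ j ⧸ Nj ℳ N j)) ∧ Good d fun j => (hf ℳ N j : ℝ) := by
    intro d Hreg N
    induction N using WellFoundedGT.induction with
    | ind N ih =>
    intro hN hdim
    by_cases hall : ∀ a : ℤ, 0 < a → ∀ r ∈ 𝒜 a, ∀ m : M, r • m ∈ N
    · obtain ⟨h1, s, hs⟩ := base_case ℳ hneg hzero hN hall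
      exact ⟨h1, Good.of_finite (fun j => by positivity) s (fun j hj => by simp [hs j hj]) d⟩
    push Not at hall
    obtain ⟨a, ha, r, hr, m, hm⟩ := hall
    lift a to ℕ using ha.le
    have ha' : 0 < a := by exact_mod_cast ha
    by_cases hcol : colon N r = N
    · obtain ⟨h1, h2⟩ := Hreg N a r hN hdim ha' hr hcol
      have hfin : ∀ n : ℕ, ∀ j < b + n, Module.Finite k (ℳ j ⧸ Nj ℳ N j) := by
        intro n
        induction n with
        | zero => intro j hj; exact (hbf N j (by simpa using hj)).1
        | succ n ihn =>
          intro j hj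
          exact (exact_fin ℳ hℳ hN hr j (h1 j)
            (by rw [hcol]; exact ihn _ (by push_cast at hj; omega))).1
      have hfin' : ∀ j, Module.Finite k (ℳ j ⧸ Nj ℳ N j) := fun j =>
        hfin (j - b + 1).toNat j (by omega)
      refine ⟨hfin', h2 fun j => ?_⟩
      have := (exact_fin ℳ hℳ hN hr j (h1 j) (by rw [hcol]; exact hfin' _)).2
      rwa [hcol] at this
    · have hlt1 : N < colon N r := lt_of_le_of_ne (le_colon N r) (Ne.symm hcol)
      have hlt2 : N < plus N r := by
        refine lt_of_le_of_ne (le_plus N r) fun h => hm ?_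
        rw [h, mem_plus]
        exact ⟨0, N.zero_mem, m, by simp⟩
      have hd : ∀ N' : Submodule R M, N ≤ N' → Module.supportDim R (M ⧸ N') ≤ d := by
        intro N' hle
        refine le_trans (Module.supportDim_le_of_surjective (Submodule.factor hle) ?_) hdim
        exact Submodule.factor_surjective hle
      obtain ⟨f1, g1⟩ := ih _ hlt1 (hN.colon ℳ hℳ hr) (hd _ hlt1.le)
      obtain ⟨f2, g2⟩ := ih _ hlt2 (hN.plus ℳ hℳ hr) (hd _ hlt2.le)
      have key := fun j => exact_fin ℳ hℳ hN hr j (f2 j) (f1 _)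
      refine ⟨fun j => (key j).1, ?_⟩
      have := g2.add (g1.shift a)
      convert this using 2 with j
      rw [(key j).2]; push_cast; rfl
  induction d with
  | zero =>
    refine core 0 fun N a r hN hdim ha hr hcol => ?_
    have h1 := (dim_step hcol).trans hdim
    have h2 : Module.supportDim R (M ⧸ plus N r) = ⊥ := by
      generalize Module.supportDim R (M ⧸ plus N r) = x at h1
      cases x with
      | bot => rfl
      | coe x =>
        exfalso
        have h3 : ((x + 1 : ℕ∞) : WithBot ℕ∞) ≤ ((0 : ℕ∞) : WithBot ℕ∞) := by exact_mod_cast h1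
        rw [WithBot.coe_le_coe] at h3
        simp at h3
    rw [Module.supportDim_eq_bot_iff_subsingleton, Submodule.Quotient.subsingleton_iff] at h2
    rw [h2]
    refine ⟨fun j => (finite_top ℳ j).1, fun hj => ?_⟩
    have h3 : ∀ n : ℕ, ∀ j < b + n, hf ℳ N j = 0 := by
      intro n
      induction n with
      | zero => intro j hj; exact (hbf N j (by simpa using hj)).2
      | succ n ihn =>
        intro j hj'
        rw [hj, (finite_top ℳ j).2, ihn _ (by push_cast at hj'; omega)]
    exact Good.of_finite (fun j => by positivity) ∅
      (fun j _ => by simp [h3 (j - b + 1).toNat j (by omega)]) 0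
  | succ d IH =>
    refine core (d + 1) fun N a r hN hdim ha hr hcol => ?_
    have h1 := (dim_step hcol).trans hdim
    have h2 : Module.supportDim R (M ⧸ plus N r) ≤ d := by
      generalize Module.supportDim R (M ⧸ plus N r) = x at h1
      cases x with
      | bot => exact bot_le
      | coe x =>
        have h3 : ((x + 1 : ℕ∞) : WithBot ℕ∞) ≤ ((d + 1 : ℕ∞) : WithBot ℕ∞) := by
          exact_mod_cast h1
        rw [WithBot.coe_le_coe] at h3
        have h4 : x ≤ d := by simpa using h3
        exact_mod_cast h4
    obtain ⟨h3, h4⟩ := IH _ (hN.plus ℳ hℳ hr) h2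
    refine ⟨h3, fun hj => ?_⟩
    exact Good.step (fun j => by positivity) (hLB N) ha
      (fun j => by rw [hj j]; push_cast; rfl) h4

end alg
end HSM

/-- **Existence of the Hilbert–Samuel multiplicity and its computation from the Hilbert
series.**  For a finitely generated `ℤ`-graded module `M` of Krull dimension `d` over a
finitely generated `ℕ`-graded `k`-algebra `R`:
(1) `e_M = d!·lim_n n^{-d} Σ_{j ≤ n} λ_k(M_j)` exists, and
(2) `lim_{t→1⁻} (1-t)^d H_M(t) = e_M` over real `t ∈ (0,1)`. -/
theorem hilbert_samuel_multiplicity_exists_and_hilbert_series_limit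
    (k R M : Type) [Field k] [CommRing R] [Algebra k R] [Algebra.FiniteType k R]
    (𝒜 : ℤ → Submodule k R) [GradedAlgebra 𝒜]
    (h𝒜neg : ∀ t : ℤ, t < 0 → 𝒜 t = ⊥)
    (h𝒜zero : ∀ x ∈ 𝒜 0, ∃ c : k, algebraMap k R c = x)
    [AddCommGroup M] [Module R M] [Module k M] [IsScalarTower k R M] [Module.Finite R M]
    (ℳ : ℤ → Submodule k M) [DirectSum.Decomposition ℳ]
    (hℳ : ∀ (a b : ℤ), ∀ r ∈ 𝒜 a, ∀ x ∈ ℳ b, r • x ∈ ℳ (a + b))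
    (d : ℕ) (hd : ringKrullDim (R ⧸ Module.annihilator R M) = d) :
    ∃ e : ℝ,
      Tendsto (fun n : ℕ => (d.factorial : ℝ) / (n : ℝ) ^ d *
          ∑' j : ℤ, (if j ≤ (n : ℤ) then (Module.finrank k (ℳ j) : ℝ) else 0))
        atTop (nhds e) ∧
      Tendsto (fun t : ℝ => (1 - t) ^ d * ∑' j : ℤ, (Module.finrank k (ℳ j) : ℝ) * t ^ j)
        (nhdsWithin 1 (Set.Ioo 0 1)) (nhds e) := by
  have : IsNoetherianRing R := Algebra.FiniteType.isNoetherianRing k R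
  have hdim : Module.supportDim R (M ⧸ (⊥ : Submodule R M)) ≤ d := by
    rw [Module.supportDim_eq_of_equiv (Submodule.quotEquivOfEqBot (⊥ : Submodule R M) rfl),
      Module.supportDim_eq_ringKrullDim_quotient_annihilator, hd]
  obtain ⟨-, -, -, L, h1, h2⟩ := HSM.main_claim ℳ h𝒜neg h𝒜zero hℳ d ⊥
    (fun m hm j => by
      rw [Submodule.mem_bot] at hm ⊢
      rw [hm, HSM.cp_zero]) hdim
  have hf : ∀ j, HSM.hf ℳ (⊥ : Submodule R M) j = Module.finrank k (ℳ j) := by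
    intro j
    have hb : HSM.Nj ℳ (⊥ : Submodule R M) j = ⊥ := by
      rw [eq_bot_iff]
      intro m hm
      exact Subtype.ext ((Submodule.mem_bot R).1 hm)
    exact (Submodule.quotEquivOfEqBot _ hb).finrank_eq
  simp only [hf] at h1 h2
  refine ⟨d.factorial * L, ?_, h2⟩
  rw [← Nat.map_cast_int_atTop, tendsto_map'_iff] at h1
  refine (h1.const_mul (d.factorial : ℝ)).congr fun n => ?_
  simp only [Function.comp, HSM.cum, Int.cast_natCast]
  ring

end
end

section
/- Let R be a finitely generated ℕ-graded k-algebra of Krull dimension d and let f_1, …, f_d be a homogeneous system of parameters of R of degrees δ_1, …, δ_d. Then the Hilbert–Samuel multiplicity of R with respect to the ideal (f_1, …, f_d), namely d!·lim_{n→∞} n^{-d} λ_k(R/(f_1,…,f_d)^n), equals δ_1 δ_2 ⋯ δ_d · e_R, where e_R = d!·lim_{n→∞} n^{-d} Σ_{j≤n} λ_k(R_j) is the Hilbert–Samuel multiplicity of R. -/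
open Filter
noncomputable section

namespace HS

def cnt {d : ℕ} (w : Fin d → ℕ) (n : ℕ) : ℕ :=
  Set.ncard {α : Fin d → ℕ | ∑ i, w i * α i ≤ n}

lemma cnt_finite {d : ℕ} (w : Fin d → ℕ) (hw : ∀ i, 0 < w i) (n : ℕ) :
    {α : Fin d → ℕ | ∑ i, w i * α i ≤ n}.Finite := by
  refine (Set.Finite.pi' (t := fun _ : Fin d => Set.Iic n) (fun _ => Set.finite_Iic n)).subset ?_
  intro α hα i
  have h1 : w i * α i ≤ ∑ i, w i * α i :=
    Finset.single_le_sum (f := fun i => w i * α i) (fun _ _ => Nat.zero_le _) (Finset.mem_univ i)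
  have h2 : α i ≤ w i * α i := Nat.le_mul_of_pos_left _ (hw i)
  exact (h2.trans h1).trans hα

lemma cnt_zero (w : Fin 0 → ℕ) (n : ℕ) : cnt w n = 1 := by
  simp [cnt]

def bump {d : ℕ} (α : Fin (d + 1) → ℕ) : Fin (d + 1) → ℕ := Fin.cons (α 0 + 1) (Fin.tail α)

lemma cnt_succ {d : ℕ} (w : Fin (d + 1) → ℕ) (hw : ∀ i, 0 < w i) (n : ℕ) :
    cnt w n = cnt (Fin.tail w) n + if w 0 ≤ n then cnt w (n - w 0) else 0 := by
  have hS : {α : Fin (d + 1) → ℕ | ∑ i, w i * α i ≤ n} =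
      (Fin.cons 0 '' {α : Fin d → ℕ | ∑ i, Fin.tail w i * α i ≤ n}) ∪
      (bump '' {α : Fin (d + 1) → ℕ | ∑ i, w i * α i + w 0 ≤ n}) := by
    ext α
    simp only [Set.mem_ofPred_eq, Set.mem_union, Set.mem_image]
    constructor
    · intro h
      rw [Fin.sum_univ_succ] at h
      rcases Nat.eq_zero_or_pos (α 0) with h0 | h0
      · left
        refine ⟨Fin.tail α, ?_, ?_⟩
        · rw [h0] at h; simpa [Fin.tail] using h
        · rw [← h0, Fin.cons_self_tail]
      · right
        refine ⟨Fin.cons (α 0 - 1) (Fin.tail α), ?_, ?_⟩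
        · rw [Fin.sum_univ_succ]
          simp only [Fin.cons_zero, Fin.cons_succ, Fin.tail]
          obtain ⟨m, hm⟩ : ∃ m, α 0 = m + 1 := ⟨α 0 - 1, by omega⟩
          rw [hm] at h ⊢
          simp only [Nat.add_sub_cancel]
          rw [mul_add, mul_one] at h
          omega
        · unfold bump
          simp only [Fin.cons_zero, Fin.tail_cons]
          rw [Nat.sub_add_cancel h0, Fin.cons_self_tail]
    · rintro (⟨β, hβ, rfl⟩ | ⟨β, hβ, rfl⟩)
      · rw [Fin.sum_univ_succ]; simpa [Fin.tail] using hβ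
      · rw [Fin.sum_univ_succ] at hβ ⊢
        simp only [bump, Fin.cons_zero, Fin.cons_succ, Fin.tail, mul_add, mul_one]
        omega
  have hbi : Function.Injective (bump (d := d)) := by
    intro α β h
    have h0 := congrFun h 0
    have ht := congrArg Fin.tail h
    simp only [bump, Fin.cons_zero, Fin.tail_cons] at h0 ht
    rw [← Fin.cons_self_tail α, ← Fin.cons_self_tail β, ht]
    congr 1; omega
  have hfin1 := cnt_finite (Fin.tail w) (fun i => hw _) n
  have hfin2 : {α : Fin (d + 1) → ℕ | ∑ i, w i * α i + w 0 ≤ n}.Finite :=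
    (cnt_finite w hw n).subset (fun α hα => le_trans (Nat.le_add_right _ _) hα)
  unfold cnt
  rw [hS, Set.ncard_union_eq _ (hfin1.image _) (hfin2.image _),
    Set.ncard_image_of_injective _ (Fin.cons_right_injective _),
    Set.ncard_image_of_injective _ hbi]
  · congr 1
    split_ifs with h
    · congr 1; ext α; simp only [Set.mem_ofPred_eq]; omega
    · have : {α : Fin (d + 1) → ℕ | ∑ i, w i * α i + w 0 ≤ n} = ∅ := by
        ext α; simp only [Set.mem_ofPred_eq, Set.mem_empty_iff_false, iff_false]; omega
      rw [this, Set.ncard_empty]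
  · rw [Set.disjoint_left]
    rintro _ ⟨β, _, rfl⟩ ⟨γ, _, h⟩
    have := congrFun h 0
    simp [bump] at this

lemma pow_diff_le (x w : ℝ) (d : ℕ) (hx : 0 ≤ x) (hw : 0 ≤ w) :
    (x + w) ^ (d + 1) ≤ x ^ (d + 1) + (d + 1) * w * (x + w) ^ d := by
  induction d with
  | zero => simp
  | succ d ih =>
    have h1 : x ^ (d + 1) ≤ (x + w) ^ (d + 1) := by gcongr; linarith
    push_cast
    calc (x + w) ^ (d + 1 + 1) = (x + w) ^ (d + 1) * (x + w) := by ring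
      _ ≤ (x ^ (d + 1) + (d + 1) * w * (x + w) ^ d) * (x + w) := by gcongr
      _ = x ^ (d + 1 + 1) + x ^ (d + 1) * w + (d + 1) * w * (x + w) ^ (d + 1) := by ring
      _ ≤ x ^ (d + 1 + 1) + (x + w) ^ (d + 1) * w + (d + 1) * w * (x + w) ^ (d + 1) := by gcongr
      _ = _ := by ring

lemma le_pow_diff (x w : ℝ) (d : ℕ) (hx : 0 ≤ x) (hw : 0 ≤ w) :
    x ^ (d + 1) + (d + 1) * w * x ^ d ≤ (x + w) ^ (d + 1) := by
  induction d with
  | zero => simp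
  | succ d ih =>
    push_cast
    calc x ^ (d + 1 + 1) + (d + 1 + 1) * w * x ^ (d + 1)
        ≤ (x ^ (d + 1) + (d + 1) * w * x ^ d) * (x + w) := by
          have : 0 ≤ (d + 1) * w * x ^ d * w := by positivity
          have e : (x ^ (d + 1) + (d + 1) * w * x ^ d) * (x + w) =
            x ^ (d + 1 + 1) + (d + 1 + 1) * w * x ^ (d + 1) + (d + 1) * w * x ^ d * w := by ring
          linarith
      _ ≤ (x + w) ^ (d + 1) * (x + w) := by gcongr
      _ = _ := by ring

lemma cnt_lower : ∀ {d : ℕ} (w : Fin d → ℕ) (_ : ∀ i, 0 < w i) (n : ℕ),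
    (n : ℝ) ^ d ≤ d.factorial * (∏ i, (w i : ℝ)) * cnt w n := by
  intro d
  induction d with
  | zero => intro w _ n; simp [cnt_zero]
  | succ d ih =>
    intro w hw n
    induction n using Nat.strong_induction_on with
    | _ n ihn =>
      have h1 := ih (Fin.tail w) (fun i => hw _) n
      have hP : ∏ i, (w i : ℝ) = w 0 * ∏ i, (Fin.tail w i : ℝ) := by
        rw [Fin.prod_univ_succ]; rfl
      have hw0 : (0:ℝ) < w 0 := by exact_mod_cast hw 0
      have h2 : ((d + 1 : ℝ) * w 0) * (n : ℝ) ^ d ≤ ((d + 1 : ℝ) * w 0) *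
          (d.factorial * (∏ i, (Fin.tail w i : ℝ)) * cnt (Fin.tail w) n) := by gcongr
      rw [cnt_succ w hw, Nat.factorial_succ]
      split_ifs with h
      · have h3 := ihn (n - w 0) (by have := hw 0; omega)
        obtain ⟨m, rfl⟩ : ∃ m, n = m + w 0 := ⟨n - w 0, by omega⟩
        rw [Nat.add_sub_cancel] at h3 ⊢
        have h4 := pow_diff_le m (w 0) d (by positivity) (by positivity)
        rw [hP, Nat.factorial_succ] at h3
        rw [hP]
        push_cast at *
        nlinarith
      · have h4 : (n:ℝ) ≤ w 0 := by exact_mod_cast (by omega : n ≤ w 0)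
        have h5 : (n:ℝ)^(d+1) ≤ ((d + 1 : ℝ) * w 0) * (n : ℝ) ^ d := by
          rw [pow_succ, mul_comm]
          gcongr
          have : (0:ℝ) ≤ d * w 0 := by positivity
          nlinarith
        rw [hP]; push_cast
        nlinarith

lemma cnt_upper : ∀ {d : ℕ} (w : Fin d → ℕ) (_ : ∀ i, 0 < w i) (n : ℕ),
    d.factorial * (∏ i, (w i : ℝ)) * cnt w n ≤ ((n : ℝ) + ∑ i, (w i : ℝ)) ^ d := by
  intro d
  induction d with
  | zero => intro w _ n; simp [cnt_zero]
  | succ d ih =>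
    intro w hw n
    induction n using Nat.strong_induction_on with
    | _ n ihn =>
      have h1 := ih (Fin.tail w) (fun i => hw _) n
      have hP : ∏ i, (w i : ℝ) = w 0 * ∏ i, (Fin.tail w i : ℝ) := by
        rw [Fin.prod_univ_succ]; rfl
      have hS : ∑ i, (w i : ℝ) = w 0 + ∑ i, (Fin.tail w i : ℝ) := by
        rw [Fin.sum_univ_succ]; rfl
      have hw0 : (0:ℝ) < w 0 := by exact_mod_cast hw 0
      have h2 : ((d + 1 : ℝ) * w 0) * (d.factorial * (∏ i, (Fin.tail w i : ℝ)) *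
          cnt (Fin.tail w) n) ≤ ((d + 1 : ℝ) * w 0) *
          ((n : ℝ) + ∑ i, (Fin.tail w i : ℝ)) ^ d := by gcongr
      have hs0 : 0 ≤ ∑ i, (Fin.tail w i : ℝ) := Finset.sum_nonneg (fun _ _ => by positivity)
      have h4 := le_pow_diff ((n : ℝ) + ∑ i, (Fin.tail w i : ℝ)) (w 0) d (by positivity)
        (by positivity)
      rw [cnt_succ w hw, Nat.factorial_succ]
      split_ifs with h
      · have h3 := ihn (n - w 0) (by have := hw 0; omega)
        obtain ⟨m, rfl⟩ : ∃ m, n = m + w 0 := ⟨n - w 0, by omega⟩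
        rw [Nat.add_sub_cancel] at h3 ⊢
        rw [hP, hS, Nat.factorial_succ] at h3
        rw [hP, hS]
        push_cast at *
        rw [show (m : ℝ) + w 0 + (w 0 + ∑ i, (Fin.tail w i : ℝ)) =
          m + w 0 + ∑ i, (Fin.tail w i : ℝ) + w 0 by ring]
        rw [show (m : ℝ) + (w 0 + ∑ i, (Fin.tail w i : ℝ)) =
          m + w 0 + ∑ i, (Fin.tail w i : ℝ) by ring] at h3
        nlinarith
      · rw [hP, hS]; push_cast
        rw [show (n : ℝ) + (w 0 + ∑ i, (Fin.tail w i : ℝ)) =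
          n + ∑ i, (Fin.tail w i : ℝ) + w 0 by ring]
        have : 0 ≤ ((n : ℝ) + ∑ i, (Fin.tail w i : ℝ)) ^ (d + 1) := by positivity
        nlinarith

/-- asymptotics, with shift; formulated along a sequence `u` with `u n / n → 1`. -/
lemma cnt_tendsto {d : ℕ} (w : Fin d → ℕ) (hw : ∀ i, 0 < w i) (u : ℕ → ℕ)
    (hu : Tendsto (fun n : ℕ => (u n : ℝ) / n) atTop (nhds 1)) :
    Tendsto (fun n : ℕ => (d.factorial : ℝ) / (n : ℝ) ^ d * cnt w (u n)) atTop
      (nhds (∏ i, (w i : ℝ))⁻¹) := by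
  have hP : 0 < ∏ i, (w i : ℝ) := Finset.prod_pos (fun i _ => by exact_mod_cast hw i)
  have hl : Tendsto (fun n : ℕ => (∏ i, (w i : ℝ))⁻¹ * ((u n : ℝ) / n) ^ d) atTop
      (nhds (∏ i, (w i : ℝ))⁻¹) := by
    simpa using (hu.pow d).const_mul (∏ i, (w i : ℝ))⁻¹
  have hr : Tendsto (fun n : ℕ => (∏ i, (w i : ℝ))⁻¹ *
      ((u n : ℝ) / n + (∑ i, (w i : ℝ)) / n) ^ d) atTop (nhds (∏ i, (w i : ℝ))⁻¹) := by
    have := tendsto_const_div_atTop_nhds_zero_nat (∑ i, (w i : ℝ))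
    simpa using ((hu.add this).pow d).const_mul (∏ i, (w i : ℝ))⁻¹
  refine tendsto_of_tendsto_of_tendsto_of_le_of_le' hl hr ?_ ?_
  · filter_upwards [eventually_gt_atTop 0] with n hn
    have hn' : (0:ℝ) < n := by exact_mod_cast hn
    have := cnt_lower w hw (u n)
    rw [div_pow, inv_mul_le_iff₀ hP, div_le_iff₀ (by positivity)]
    field_simp
    linarith
  · filter_upwards [eventually_gt_atTop 0] with n hn
    have hn' : (0:ℝ) < n := by exact_mod_cast hn
    have := cnt_upper w hw (u n)
    rw [← add_div, div_pow, le_inv_mul_iff₀ hP, le_div_iff₀ (by positivity)]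
    field_simp
    linarith

lemma shift_add (c : ℕ) : Tendsto (fun n : ℕ => ((n + c : ℕ) : ℝ) / n) atTop (nhds 1) := by
  have h := (tendsto_const_div_atTop_nhds_zero_nat (c : ℝ)).const_add 1
  rw [add_zero] at h
  refine h.congr' ?_
  filter_upwards [eventually_gt_atTop 0] with n hn
  have hn' : (0:ℝ) < n := by exact_mod_cast hn
  push_cast; field_simp

lemma shift_sub (c : ℕ) : Tendsto (fun n : ℕ => ((n - c : ℕ) : ℝ) / n) atTop (nhds 1) := by
  have h := (tendsto_const_div_atTop_nhds_zero_nat (c : ℝ)).const_sub 1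
  rw [sub_zero] at h
  refine h.congr' ?_
  filter_upwards [eventually_gt_atTop c] with n hn
  have hn' : (0:ℝ) < n := by exact_mod_cast (Nat.zero_le c).trans_lt hn
  rw [Nat.cast_sub hn.le]; field_simp

/-- squeeze. -/
lemma squeeze {d : ℕ} (w : Fin d → ℕ) (hw : ∀ i, 0 < w i) (r J D c : ℕ) (g : ℕ → ℕ)
    (hlo : ∀ n, c ≤ n → r * cnt w (n - c) ≤ g n)
    (hup : ∀ n, D ≤ n → g n + J * cnt w (n - D) ≤ r * cnt w n + J * cnt w n) :
    Tendsto (fun n : ℕ => (d.factorial : ℝ) / (n : ℝ) ^ d * g n) atTop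
      (nhds (r * (∏ i, (w i : ℝ))⁻¹)) := by
  have h1 := (cnt_tendsto w hw _ (shift_sub c)).const_mul (r : ℝ)
  have h0 := cnt_tendsto w hw (fun n => n) (by simpa using shift_add 0)
  have h2 := ((h0.const_mul (r : ℝ)).add (h0.const_mul (J : ℝ))).sub
    ((cnt_tendsto w hw _ (shift_sub D)).const_mul (J : ℝ))
  rw [add_sub_cancel_right] at h2
  refine tendsto_of_tendsto_of_tendsto_of_le_of_le' h1 h2 ?_ ?_
  · filter_upwards [eventually_ge_atTop c] with n hn
    have : (r : ℝ) * cnt w (n - c) ≤ g n := by exact_mod_cast hlo n hn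
    have := mul_le_mul_of_nonneg_left this
      (show (0:ℝ) ≤ (d.factorial : ℝ) / (n : ℝ) ^ d by positivity)
    linarith
  · filter_upwards [eventually_ge_atTop D] with n hn
    have : (g n : ℝ) + J * cnt w (n - D) ≤ r * cnt w n + J * cnt w n := by
      exact_mod_cast hup n hn
    have := mul_le_mul_of_nonneg_left this
      (show (0:ℝ) ≤ (d.factorial : ℝ) / (n : ℝ) ^ d by positivity)
    linarith

end HS

namespace HS
open MvPolynomial

section filt
variable {k : Type} [Field k] {d : ℕ}

def Fil (k : Type) [Field k] {d : ℕ} (w : Fin d → ℕ) (n : ℕ) :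
    Submodule k (MvPolynomial (Fin d) k) :=
  restrictSupport k {α | ∑ i, w i * α i ≤ n}

lemma mem_Fil {w : Fin d → ℕ} {n : ℕ} {p : MvPolynomial (Fin d) k} :
    p ∈ Fil k w n ↔ ∀ α ∈ p.support, ∑ i, w i * α i ≤ n := by
  rw [Fil, mem_restrictSupport_iff]; rfl

lemma Fil_mono (w : Fin d → ℕ) {m n : ℕ} (h : m ≤ n) : Fil k w m ≤ Fil k w n :=
  fun _ hp => mem_Fil.2 fun α hα => (mem_Fil.1 hp α hα).trans h

lemma exists_Fil (w : Fin d → ℕ) (p : MvPolynomial (Fin d) k) : ∃ n, p ∈ Fil k w n :=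
  ⟨p.support.sup (fun α => ∑ i, w i * α i), mem_Fil.2 fun _ hα =>
    Finset.le_sup (f := fun α : Fin d →₀ ℕ => ∑ i, w i * α i) hα⟩

lemma Fil_mul {w : Fin d → ℕ} {m n : ℕ} {p q : MvPolynomial (Fin d) k}
    (hp : p ∈ Fil k w m) (hq : q ∈ Fil k w n) : p * q ∈ Fil k w (m + n) := by
  classical
  rw [mem_Fil] at *
  intro α hα
  obtain ⟨β, hβ, γ, hγ, rfl⟩ := Finset.mem_add.1 (support_mul p q hα)
  have := hp β hβ
  have := hq γ hγ
  simp only [Finsupp.add_apply, mul_add, Finset.sum_add_distrib]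
  omega

lemma Fil_set_finite (w : Fin d → ℕ) (hw : ∀ i, 0 < w i) (n : ℕ) :
    {α : Fin d →₀ ℕ | ∑ i, w i * α i ≤ n}.Finite :=
  (cnt_finite w hw n).preimage (f := fun α : Fin d →₀ ℕ => (α : Fin d → ℕ))
    DFunLike.coe_injective.injOn

lemma Fil_finite (w : Fin d → ℕ) (hw : ∀ i, 0 < w i) (n : ℕ) : Module.Finite k (Fil k w n) :=
  have := (Fil_set_finite w hw n).to_subtype
  Module.Finite.of_basis (basisRestrictSupport k _)

lemma finrank_Fil (w : Fin d → ℕ) (n : ℕ) :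
    Module.finrank k (Fil k w n) = cnt w n := by
  rw [Fil, Module.finrank_eq_nat_card_basis (basisRestrictSupport k _), cnt]
  rw [Nat.card_coe_set_eq]
  rw [← Set.ncard_image_of_injective _ (Finsupp.equivFunOnFinite (α := Fin d) (M := ℕ)).injective]
  congr 1
  ext α
  simp only [Set.mem_image, Set.mem_ofPred_eq]
  constructor
  · rintro ⟨β, hβ, rfl⟩; exact hβ
  · intro h; exact ⟨Finsupp.equivFunOnFinite.symm α, by simpa using h, by simp⟩

lemma finrank_le_map_add {M : Type} [AddCommGroup M] [Module k M] (U H : Submodule k M) [Module.Finite k U] [Module.Finite k H] :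
    Module.finrank k U ≤ Module.finrank k (U.map H.mkQ) + Module.finrank k H := by
  have h1 := LinearMap.finrank_range_add_finrank_ker (H.mkQ.domRestrict U)
  rw [LinearMap.range_domRestrict] at h1
  have h3 : Module.finrank k (LinearMap.ker (H.mkQ.domRestrict U)) ≤ Module.finrank k H := by
    have hm : ∀ x : LinearMap.ker (H.mkQ.domRestrict U),
        (U.subtype ∘ₗ Submodule.subtype _) x ∈ H := by
      rintro ⟨x, hx⟩
      rw [LinearMap.mem_ker, LinearMap.domRestrict_apply, Submodule.mkQ_apply,
        Submodule.Quotient.mk_eq_zero] at hx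
      exact hx
    refine LinearMap.finrank_le_finrank_of_injective
      (f := LinearMap.codRestrict H (U.subtype ∘ₗ Submodule.subtype _) hm) ?_
    intro x y h
    have h' : ((x : U) : M) = ((y : U) : M) := congrArg (fun t : H => (t : M)) h
    exact Subtype.ext (Subtype.ext h')
  omega

variable {M : Type} [AddCommGroup M] [Module k M] [Module (MvPolynomial (Fin d) k) M]
  [IsScalarTower k (MvPolynomial (Fin d) k) M]

/-- linear combinations with coefficients in the filtration. -/
def comb {ι : Type} [Fintype ι] (w : Fin d → ℕ) (n : ℕ) (z : ι → M) :
    (ι → Fil k w n) →ₗ[k] M :=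
  ((Fintype.linearCombination (MvPolynomial (Fin d) k) z).restrictScalars k) ∘ₗ
    ((Fil k w n).subtype.compLeft ι)

lemma comb_apply {ι : Type} [Fintype ι] (w : Fin d → ℕ) (n : ℕ) (z : ι → M)
    (p : ι → Fil k w n) : comb w n z p = ∑ i, (p i : MvPolynomial (Fin d) k) • z i := by
  simp [comb, Fintype.linearCombination_apply]

lemma mem_range_comb {ι : Type} [Fintype ι] {w : Fin d → ℕ} {n : ℕ} {z : ι → M} {x : M} :
    x ∈ LinearMap.range (comb (k := k) w n z) ↔ ∃ p : ι → MvPolynomial (Fin d) k,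
      (∀ i, p i ∈ Fil k w n) ∧ ∑ i, p i • z i = x := by
  constructor
  · rintro ⟨p, rfl⟩
    exact ⟨fun i => p i, fun i => (p i).2, (comb_apply _ _ _ _).symm⟩
  · rintro ⟨p, hp, rfl⟩
    exact ⟨fun i => ⟨p i, hp i⟩, comb_apply _ _ _ _⟩

lemma finrank_pi_Fil {ι : Type} [Fintype ι] (w : Fin d → ℕ) (hw : ∀ i, 0 < w i) (n : ℕ) :
    Module.finrank k (ι → Fil k w n) = Fintype.card ι * cnt w n := by
  have := Fil_finite (k := k) w hw n
  rw [Module.finrank_pi_fintype]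
  simp [finrank_Fil]

lemma upper {ι κ : Type} [Fintype ι] [Fintype κ] (w : Fin d → ℕ) (hw : ∀ i, 0 < w i)
    (g : ι → M) (z : κ → M) (a : MvPolynomial (Fin d) k) (ha : a ≠ 0)
    (b : ι → κ → MvPolynomial (Fin d) k) (hb : ∀ i, a • g i = ∑ l, b i l • z l) :
    ∃ D, ∀ n, D ≤ n → Module.finrank k (LinearMap.range (comb (k := k) w n g)) +
      Fintype.card ι * cnt w (n - D) ≤ Fintype.card κ * cnt w n + Fintype.card ι * cnt w n := by
  classical
  obtain ⟨D0, hD0⟩ := exists_Fil w a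
  choose Db hDb using fun i l => exists_Fil w (b i l)
  let D := D0 + ∑ i, ∑ l, Db i l
  have hDa : a ∈ Fil k w D := Fil_mono w (Nat.le_add_right _ _) hD0
  have hDb' : ∀ i l, b i l ∈ Fil k w D := fun i l => by
    refine Fil_mono w ?_ (hDb i l)
    have h1 : Db i l ≤ ∑ l, Db i l :=
      Finset.single_le_sum (f := fun l => Db i l) (fun _ _ => Nat.zero_le _) (Finset.mem_univ l)
    have h2 : ∑ l, Db i l ≤ ∑ i, ∑ l, Db i l :=
      Finset.single_le_sum (f := fun i => ∑ l, Db i l) (fun _ _ => Nat.zero_le _)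
        (Finset.mem_univ i)
    exact (h1.trans h2).trans (Nat.le_add_left _ _)
  refine ⟨D, fun n hn => ?_⟩
  have := Fil_finite (k := k) w hw n
  have := Fil_finite (k := k) w hw (n - D)
  set U := LinearMap.range (comb (k := k) w n g)
  set H := LinearMap.range (comb (k := k) w n z)
  have hH : Module.finrank k H ≤ Fintype.card κ * cnt w n := by
    rw [← finrank_pi_Fil (k := k) w hw n]; exact LinearMap.finrank_range_le _
  -- the map to the quotient
  let L : (ι → Fil k w n) →ₗ[k] (M ⧸ H) := H.mkQ ∘ₗ comb w n g
  have hrn := LinearMap.finrank_range_add_finrank_ker L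
  rw [finrank_pi_Fil w hw n] at hrn
  -- kernel bound
  have hmul : ∀ p : Fil k w (n - D), a * (p : MvPolynomial (Fin d) k) ∈ Fil k w n := fun p => by
    have := Fil_mul hDa p.2
    rwa [Nat.add_sub_cancel' hn] at this
  let μ : Fil k w (n - D) →ₗ[k] Fil k w n :=
    LinearMap.codRestrict _ ((LinearMap.mulLeft k a) ∘ₗ (Fil k w (n - D)).subtype) hmul
  have hμ : Function.Injective μ := by
    intro p q h
    have : a * (p : MvPolynomial (Fin d) k) = a * q := congrArg Subtype.val h
    exact Subtype.ext (mul_left_cancel₀ ha this)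
  have hker : Fintype.card ι * cnt w (n - D) ≤ Module.finrank k (LinearMap.ker L) := by
    rw [← finrank_pi_Fil (k := k) w hw (n - D)]
    let ν : (ι → Fil k w (n - D)) →ₗ[k] LinearMap.ker L :=
      LinearMap.codRestrict _ (μ.compLeft ι) (by
        intro p
        rw [LinearMap.mem_ker]
        simp only [L, LinearMap.comp_apply, Submodule.mkQ_apply, Submodule.Quotient.mk_eq_zero]
        rw [comb_apply]
        refine mem_range_comb.2 ⟨fun l => ∑ i, (p i : MvPolynomial (Fin d) k) * b i l, ?_, ?_⟩
        · intro l
          refine Submodule.sum_mem _ fun i _ => ?_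
          have := Fil_mul (p i).2 (hDb' i l)
          rwa [Nat.sub_add_cancel hn] at this
        · simp only [Finset.sum_smul]
          rw [Finset.sum_comm]
          refine Finset.sum_congr rfl fun i _ => ?_
          have : ((μ.compLeft ι) p i : MvPolynomial (Fin d) k) = p i * a := mul_comm _ _
          rw [this, mul_smul, hb, Finset.smul_sum]
          simp only [mul_smul])
    refine LinearMap.finrank_le_finrank_of_injective (f := ν) ?_
    intro p q h
    have h' : (μ.compLeft ι) p = (μ.compLeft ι) q := congrArg Subtype.val h
    funext i
    have h'' : μ (p i) = μ (q i) := congrFun h' i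
    exact hμ h''
  -- U
  have hU : Module.finrank k U ≤ Module.finrank k (LinearMap.range L) + Module.finrank k H := by
    have h2 : U.map H.mkQ = LinearMap.range L := (LinearMap.range_comp _ _).symm
    rw [← h2]
    exact finrank_le_map_add U H
  omega

set_option linter.unusedSectionVars false in
/-- A maximal linearly independent subfamily. -/
lemma exists_rank {ι : Type} [Fintype ι] (g : ι → M) :
    ∃ (κ : Type) (_ : Fintype κ) (e : κ → ι) (a : MvPolynomial (Fin d) k)
      (b : ι → κ → MvPolynomial (Fin d) k),
      LinearIndependent (MvPolynomial (Fin d) k) (fun l => g (e l)) ∧ a ≠ 0 ∧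
      ∀ i, a • g i = ∑ l, b i l • g (e l) := by
  classical
  obtain ⟨s, hs, hmax⟩ := exists_maximal_linearIndepOn (MvPolynomial (Fin d) k) g
  have : ∀ i, ∃ a : MvPolynomial (Fin d) k, a ≠ 0 ∧
      a • g i ∈ Submodule.span (MvPolynomial (Fin d) k) (g '' s) := by
    intro i
    by_cases hi : i ∈ s
    · exact ⟨1, one_ne_zero, by
        rw [one_smul]; exact Submodule.subset_span ⟨i, hi, rfl⟩⟩
    · obtain ⟨a, ha, h⟩ := hmax i hi
      exact ⟨a, ha, h⟩
  choose a ha h using this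
  refine ⟨s, inferInstance, Subtype.val, ∏ i, a i, ?_⟩
  have hmem : ∀ i, (∏ j, a j) • g i ∈ Submodule.span (MvPolynomial (Fin d) k)
      (Set.range fun l : s => g l) := by
    intro i
    rw [← Finset.prod_erase_mul _ _ (Finset.mem_univ i), mul_smul]
    refine Submodule.smul_mem _ _ ?_
    have := h i
    rwa [Set.image_eq_range] at this
  choose b hb using fun i => (Submodule.mem_span_range_iff_exists_fun _).1 (hmem i)
  exact ⟨b, hs, Finset.prod_ne_zero_iff.2 fun i _ => ha i, fun i => (hb i).symm⟩

lemma order_lemma (a : MvPolynomial (Fin d) k) (ha : a ≠ 0) :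
    ∃ s : ℕ, ∀ (n : ℕ) (p : MvPolynomial (Fin d) k),
      a * p ∈ idealOfVars (Fin d) k ^ (n + s) → p ∈ idealOfVars (Fin d) k ^ n := by
  have ha' : (a : MvPowerSeries (Fin d) k) ≠ 0 := by simpa using ha
  have htop : (a : MvPowerSeries (Fin d) k).order ≠ ⊤ := by
    rwa [ne_eq, MvPowerSeries.order_eq_top_iff]
  obtain ⟨s, hs⟩ := ENat.ne_top_iff_exists.1 htop
  refine ⟨s, fun n p h => ?_⟩
  rw [mem_pow_idealOfVars_iff'] at *
  have h1 : ((n + s : ℕ) : ℕ∞) ≤ ((a * p : MvPolynomial (Fin d) k) : MvPowerSeries (Fin d) k).order := by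
    refine MvPowerSeries.nat_le_order fun x hx => ?_
    rw [coeff_coe]; exact h x hx
  rw [coe_mul, MvPowerSeries.order_mul, ← hs] at h1
  have h2 : (n : ℕ∞) ≤ (p : MvPowerSeries (Fin d) k).order := by
    rw [Nat.cast_add, add_comm] at h1
    exact (ENat.add_le_add_iff_left (ENat.natCast_ne_top s)).1 h1
  intro x hx
  rw [← coeff_coe]
  exact MvPowerSeries.coeff_of_lt_order (lt_of_lt_of_le (by exact_mod_cast hx) h2)

end filt
end HS

namespace HS
open MvPolynomial

section main
set_option linter.unusedSectionVars false
variable {k R : Type} [Field k] [CommRing R] [Algebra k R]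
  {𝒜 : ℤ → Submodule k R} [GradedAlgebra 𝒜] {d : ℕ}

lemma quot_finite [Algebra.FiniteType k R] (I : Ideal R) (hfl : IsFiniteLength R (R ⧸ I)) :
    Module.Finite k (R ⧸ I) := by
  have h := (isFiniteLength_iff_isNoetherian_isArtinian.1 hfl).2
  have : IsArtinianRing (R ⧸ I) := isArtinian_of_tower R h
  exact Module.finite_of_isArtinianRing k (R ⧸ I)

lemma comp_neg (h𝒜neg : ∀ t : ℤ, t < 0 → 𝒜 t = ⊥) (x : R) (i : ℤ) (hi : i < 0) :
    (DirectSum.decompose 𝒜 x i : R) = 0 :=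
  (Submodule.eq_bot_iff _).1 (h𝒜neg i hi) _ (DirectSum.decompose 𝒜 x i).2

lemma sum_comp (𝒜 : ℤ → Submodule k R) [GradedAlgebra 𝒜]
    (h𝒜neg : ∀ t : ℤ, t < 0 → 𝒜 t = ⊥) (S : Submodule k R)
    (h : ∀ n : ℕ, ∀ x ∈ 𝒜 n, x ∈ S) : S = ⊤ := by
  classical
  rw [eq_top_iff]
  intro x _
  rw [← DirectSum.sum_support_decompose 𝒜 x]
  refine Submodule.sum_mem _ fun i _ => ?_
  rcases lt_or_ge i 0 with hi | hi
  · rw [comp_neg h𝒜neg x i hi]; exact S.zero_mem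
  · obtain ⟨n, rfl⟩ := Int.eq_ofNat_of_zero_le hi
    exact h n _ (DirectSum.decompose 𝒜 x n).2

lemma exists_gens (𝒜 : ℤ → Submodule k R) [GradedAlgebra 𝒜]
    (h𝒜neg : ∀ t : ℤ, t < 0 → 𝒜 t = ⊥) (I : Ideal R)
    [Module.Finite k (R ⧸ I)] :
    ∃ (ι : Type) (_ : Fintype ι) (g : ι → R) (c : ι → ℕ), (∀ i, g i ∈ 𝒜 (c i)) ∧
      Submodule.span k (Set.range g) ⊔ I.restrictScalars k = ⊤ := by
  classical
  let H : Set R := {x | ∃ j : ℕ, x ∈ 𝒜 j}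
  let q : R →ₗ[k] (R ⧸ I) := (Ideal.Quotient.mkₐ k I).toLinearMap
  have hq : Function.Surjective q := Ideal.Quotient.mk_surjective
  have hH : Submodule.span k H = ⊤ :=
    sum_comp 𝒜 h𝒜neg _ fun n x hx => Submodule.subset_span ⟨n, hx⟩
  obtain ⟨b, hbs, hspan, hli⟩ := exists_linearIndependent k (q '' H)
  have hbf : b.Finite := hli.set_finite_of_isNoetherian
  have : Fintype b := hbf.fintype
  choose g hgH hg using fun i : b => hbs i.2
  choose c hc using hgH
  refine ⟨b, inferInstance, g, c, hc, ?_⟩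
  rw [eq_top_iff]
  intro x _
  have hx : q x ∈ Submodule.span k b := by
    rw [hspan, Submodule.span_image, hH, Submodule.map_top]
    exact LinearMap.mem_range_self _ _
  have hb : b = q '' Set.range g := by
    rw [← Set.range_comp]
    ext y
    constructor
    · intro hy; exact ⟨⟨y, hy⟩, hg _⟩
    · rintro ⟨i, rfl⟩
      have := hg i
      simp only [Function.comp_apply]
      rw [this]; exact i.2
  rw [hb, Submodule.span_image] at hx
  obtain ⟨u, hu, hux⟩ := hx
  rw [show x = u + (x - u) by ring]
  refine Submodule.add_mem_sup hu ?_
  rw [Submodule.restrictScalars_mem]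
  exact Ideal.Quotient.eq.1 hux.symm

variable [Algebra (MvPolynomial (Fin d) k) R] [IsScalarTower k (MvPolynomial (Fin d) k) R]

lemma range_comb_X {ι : Type} [Fintype ι] {δ : Fin d → ℕ} {m : ℕ} {g : ι → R} {x : R}
    (hx : x ∈ LinearMap.range (comb (k := k) δ m g)) (i : Fin d) :
    algebraMap (MvPolynomial (Fin d) k) R (X i) * x ∈
      LinearMap.range (comb (k := k) δ (m + δ i) g) := by
  classical
  obtain ⟨p, hp, rfl⟩ := mem_range_comb.1 hx
  refine mem_range_comb.2 ⟨fun l => p l * X i, fun l => Fil_mul (hp l) ?_, ?_⟩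
  · rw [mem_Fil]
    intro α hα
    rw [support_X, Finset.mem_singleton] at hα
    subst hα
    simp [Finsupp.single_apply]
  · rw [Finset.mul_sum]
    refine Finset.sum_congr rfl fun l _ => ?_
    change (p l * X i) • g l = _
    rw [mul_comm (p l), mul_smul, Algebra.smul_def]

lemma nakayama (h𝒜neg : ∀ t : ℤ, t < 0 → 𝒜 t = ⊥)
    (f : Fin d → R) (δ : Fin d → ℕ) (hδpos : ∀ j, 0 < δ j)
    (hfhom : ∀ j, f j ∈ 𝒜 (δ j))
    (hX : ∀ i, algebraMap (MvPolynomial (Fin d) k) R (X i) = f i)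
    {ι : Type} [Fintype ι] (g : ι → R) (c : ι → ℕ) (hg : ∀ i, g i ∈ 𝒜 (c i))
    (hspan : Submodule.span k (Set.range g) ⊔ (Ideal.span (Set.range f)).restrictScalars k = ⊤)
    (n : ℕ) : ∀ x ∈ 𝒜 n, x ∈ LinearMap.range (comb (k := k) δ n g) := by
  classical
  induction n using Nat.strong_induction_on with
  | _ n ih =>
    intro x hx
    have hx' : x ∈ Submodule.span k (Set.range g) ⊔
      (Ideal.span (Set.range f)).restrictScalars k := hspan ▸ Submodule.mem_top
    obtain ⟨u, hu, v, hv, huv⟩ := Submodule.mem_sup.1 hx'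
    have hxn : x = (DirectSum.decompose 𝒜 u (n : ℤ) : R) + (DirectSum.decompose 𝒜 v (n : ℤ) : R) := by
      conv_lhs => rw [← DirectSum.decompose_of_mem_same 𝒜 hx, ← huv]
      simp [DirectSum.decompose_add]
    rw [hxn]
    refine Submodule.add_mem _ ?_ ?_
    · clear hxn huv
      induction hu using Submodule.span_induction with
      | mem y hy =>
        obtain ⟨i, rfl⟩ := hy
        by_cases hc : (c i : ℤ) = n
        · rw [DirectSum.decompose_of_mem_same 𝒜 (hc ▸ hg i)]
          refine mem_range_comb.2 ⟨Pi.single i 1, ?_, ?_⟩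
          · intro l
            rw [Pi.single_apply]
            split_ifs
            · rw [mem_Fil]
              intro α hα
              rw [support_one, Finset.mem_singleton] at hα
              subst hα; simp
            · exact Submodule.zero_mem _
          · rw [Finset.sum_eq_single i]
            · simp
            · intro l _ hl; simp [hl]
            · simp
        · rw [DirectSum.decompose_of_mem_ne 𝒜 (hg i) hc]
          exact Submodule.zero_mem _
      | zero => simp
      | add y z _ _ hy hz =>
        rw [DirectSum.decompose_add]
        exact Submodule.add_mem _ hy hz
      | smul t y _ hy =>
        rw [DirectSum.decompose_smul]
        exact Submodule.smul_mem _ _ hy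
    · rw [Submodule.restrictScalars_mem] at hv
      obtain ⟨r, rfl⟩ := (Ideal.mem_span_range_iff_exists_fun).1 hv
      rw [DirectSum.decompose_sum, DFinsupp.finsetSum_apply, AddSubmonoidClass.coe_finsetSum]
      refine Submodule.sum_mem _ fun i _ => ?_
      have h1 := DirectSum.coe_decompose_mul_add_of_right_mem 𝒜 (i := (n : ℤ) - δ i)
        (a := r i) (hfhom i)
      rw [sub_add_cancel] at h1
      rw [h1]
      rcases lt_or_ge ((n : ℤ) - δ i) 0 with hi | hi
      · rw [comp_neg h𝒜neg _ _ hi, zero_mul]; exact Submodule.zero_mem _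
      · obtain ⟨m, hm⟩ := Int.eq_ofNat_of_zero_le hi
        have hmn : n = m + δ i := by omega
        have h2 := ih m (by have := hδpos i; omega) _ (DirectSum.decompose 𝒜 (r i) (m : ℤ)).2
        have h3 := range_comb_X h2 i
        rw [hX, ← hmn, mul_comm] at h3
        rw [hm]; exact h3

lemma gens_top (h𝒜neg : ∀ t : ℤ, t < 0 → 𝒜 t = ⊥) {δ : Fin d → ℕ}
    {ι : Type} [Fintype ι] {g : ι → R}
    (hN : ∀ n : ℕ, ∀ x ∈ 𝒜 n, x ∈ LinearMap.range (comb (k := k) δ n g)) :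
    Submodule.span (MvPolynomial (Fin d) k) (Set.range g) = ⊤ := by
  have := sum_comp 𝒜 h𝒜neg
    ((Submodule.span (MvPolynomial (Fin d) k) (Set.range g)).restrictScalars k) (by
      intro n x hx
      obtain ⟨p, -, rfl⟩ := mem_range_comb.1 (hN n x hx)
      rw [Submodule.restrictScalars_mem]
      exact Submodule.sum_mem _ fun i _ =>
        Submodule.smul_mem _ _ (Submodule.subset_span ⟨i, rfl⟩))
  rw [eq_top_iff]
  intro x _
  have hx : x ∈ (⊤ : Submodule k R) := Submodule.mem_top
  rw [← this] at hx
  exact hx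

/-! ### graded side -/

def toPi (𝒜 : ℤ → Submodule k R) [GradedAlgebra 𝒜] (n : ℕ) :
    R →ₗ[k] ((j : Fin (n + 1)) → 𝒜 (j : ℕ)) :=
  LinearMap.pi fun j => (DirectSum.component k ℤ (fun i => 𝒜 i) ((j : ℕ) : ℤ)) ∘ₗ
    (DirectSum.decomposeLinearEquiv 𝒜).toLinearMap

lemma toPi_apply (n : ℕ) (x : R) (j : Fin (n + 1)) :
    toPi 𝒜 n x j = DirectSum.decompose 𝒜 x ((j : ℕ) : ℤ) := rfl

lemma deg_finite {δ : Fin d → ℕ} (hδpos : ∀ j, 0 < δ j)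
    {ι : Type} [Fintype ι] {g : ι → R}
    (hN : ∀ n : ℕ, ∀ x ∈ 𝒜 n, x ∈ LinearMap.range (comb (k := k) δ n g)) (n : ℕ) :
    Module.Finite k (𝒜 n) := by
  have := Fil_finite (k := k) δ hδpos n
  have hle : 𝒜 n ≤ LinearMap.range (comb (k := k) δ n g) := hN n
  exact Submodule.finiteDimensional_of_le hle

lemma graded_upper {δ : Fin d → ℕ} (hδpos : ∀ j, 0 < δ j)
    {ι : Type} [Fintype ι] {g : ι → R}
    (hN : ∀ n : ℕ, ∀ x ∈ 𝒜 n, x ∈ LinearMap.range (comb (k := k) δ n g)) (n : ℕ) :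
    ∑ j : Fin (n + 1), Module.finrank k (𝒜 ((j : ℕ) : ℤ)) ≤
      Module.finrank k (LinearMap.range (comb (k := k) δ n g)) := by
  classical
  have := Fil_finite (k := k) δ hδpos n
  have := fun j : Fin (n + 1) => deg_finite hδpos hN (j : ℕ)
  rw [← Module.finrank_pi_fintype]
  have hmem : ∀ j : Fin (n + 1), ∀ x : 𝒜 ((j : ℕ) : ℤ),
      (x : R) ∈ LinearMap.range (comb (k := k) δ n g) := by
    intro j x
    obtain ⟨p, hp, hpx⟩ := mem_range_comb.1 (hN j x x.2)
    exact mem_range_comb.2 ⟨p, fun i => Fil_mono δ (by omega) (hp i), hpx⟩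
  let T := (toPi 𝒜 n) ∘ₗ (LinearMap.range (comb (k := k) δ n g)).subtype
  have hT : Function.Surjective T := by
    intro y
    refine ⟨∑ j, ⟨(y j : R), hmem j (y j)⟩, ?_⟩
    rw [map_sum]
    funext l
    rw [Finset.sum_apply, Finset.sum_eq_single l]
    · apply Subtype.ext
      exact DirectSum.decompose_of_mem_same 𝒜 (y l).2
    · intro j _ hj
      apply Subtype.ext
      refine DirectSum.decompose_of_mem_ne 𝒜 (y j).2 ?_
      intro h; apply hj; apply Fin.ext; exact_mod_cast h
    · simp
  exact LinearMap.finrank_le_finrank_of_surjective hT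

lemma comp_vanish (f : Fin d → R) (δ : Fin d → ℕ)
    (hfhom : ∀ j, f j ∈ 𝒜 (δ j))
    (hX : ∀ i, algebraMap (MvPolynomial (Fin d) k) R (X i) = f i)
    {m c : ℕ} {z : R} (hz : z ∈ 𝒜 c) {p : MvPolynomial (Fin d) k} (hp : p ∈ Fil k δ m)
    (j : ℤ) (hj : ((m + c : ℕ) : ℤ) < j) : (DirectSum.decompose 𝒜 (p • z) j : R) = 0 := by
  classical
  rw [p.as_sum, Finset.sum_smul, DirectSum.decompose_sum, DFinsupp.finsetSum_apply,
    AddSubmonoidClass.coe_finsetSum]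
  refine Finset.sum_eq_zero fun α hα => ?_
  have hα' := mem_Fil.1 hp α hα
  have hmem : (∏ i, f i ^ α i) ∈ 𝒜 ((∑ i, δ i * α i : ℕ) : ℤ) := by
    have : ((∑ i, δ i * α i : ℕ) : ℤ) = ∑ i, α i • (δ i : ℤ) := by
      push_cast
      refine Finset.sum_congr rfl fun i _ => ?_
      simp [mul_comm]
    rw [this]
    exact SetLike.prod_mem_graded _ _ _ fun i _ => SetLike.pow_mem_graded _ (hfhom i)
  have h2 : monomial α (coeff α p) • z = coeff α p • ((∏ i, f i ^ α i) * z) := by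
    rw [monomial_eq, Finsupp.prod_fintype _ _ (by simp), ← smul_eq_C_mul, smul_assoc,
      Algebra.smul_def (∏ i, (X i : MvPolynomial (Fin d) k) ^ α i), map_prod]
    simp [hX]
  rw [h2]
  refine DirectSum.decompose_of_mem_ne 𝒜
    (Submodule.smul_mem _ _ (SetLike.mul_mem_graded hmem hz)) ?_
  push_cast at *
  have : (∑ i, (δ i : ℤ) * α i) ≤ m := by exact_mod_cast hα'
  omega

lemma graded_lower (h𝒜neg : ∀ t : ℤ, t < 0 → 𝒜 t = ⊥)
    (f : Fin d → R) (δ : Fin d → ℕ) (hδpos : ∀ j, 0 < δ j)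
    (hfhom : ∀ j, f j ∈ 𝒜 (δ j))
    (hX : ∀ i, algebraMap (MvPolynomial (Fin d) k) R (X i) = f i)
    {ι : Type} [Fintype ι] {g : ι → R}
    (hN : ∀ n : ℕ, ∀ x ∈ 𝒜 n, x ∈ LinearMap.range (comb (k := k) δ n g))
    {κ : Type} [Fintype κ] (z : κ → R) (c : κ → ℕ) (hz : ∀ l, z l ∈ 𝒜 (c l))
    (hli : LinearIndependent (MvPolynomial (Fin d) k) z) (n : ℕ) (hn : ∑ l, c l ≤ n) :
    Fintype.card κ * cnt δ (n - ∑ l, c l) ≤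
      ∑ j : Fin (n + 1), Module.finrank k (𝒜 ((j : ℕ) : ℤ)) := by
  classical
  set m := n - ∑ l, c l with hm
  have := Fil_finite (k := k) δ hδpos m
  have := fun j : Fin (n + 1) => deg_finite hδpos hN (j : ℕ)
  rw [← Module.finrank_pi_fintype, ← finrank_pi_Fil (k := k) δ hδpos m]
  let T := (toPi 𝒜 n) ∘ₗ (comb (k := k) δ m z)
  refine LinearMap.finrank_le_finrank_of_injective (f := T) ?_
  rw [injective_iff_map_eq_zero]
  intro p hp
  have hx : comb (k := k) δ m z p = 0 := by
    rw [← DirectSum.sum_support_decompose 𝒜 (comb (k := k) δ m z p)]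
    refine Finset.sum_eq_zero fun j _ => ?_
    rcases lt_or_ge j 0 with hj | hj
    · exact comp_neg h𝒜neg _ _ hj
    · obtain ⟨j, rfl⟩ := Int.eq_ofNat_of_zero_le hj
      by_cases hjn : j ≤ n
      · have := congrFun hp ⟨j, by omega⟩
        exact congrArg Subtype.val this
      · rw [comb_apply, DirectSum.decompose_sum, DFinsupp.finsetSum_apply,
          AddSubmonoidClass.coe_finsetSum]
        refine Finset.sum_eq_zero fun l _ => ?_
        refine comp_vanish f δ hfhom hX (hz l) (p l).2 _ ?_
        have : c l ≤ ∑ l, c l :=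
          Finset.single_le_sum (f := c) (fun _ _ => Nat.zero_le _) (Finset.mem_univ l)
        omega
  rw [comb_apply] at hx
  have := Fintype.linearIndependent_iff.1 hli _ hx
  funext l
  exact Subtype.ext (this l)

/-! ### the ideal-adic side -/

lemma Fil_sup (n : ℕ) : Fil k (fun _ : Fin d => 1) n ⊔
    (idealOfVars (Fin d) k ^ n).restrictScalars k = ⊤ := by
  rw [eq_top_iff]
  intro p _
  rw [p.as_sum]
  refine Submodule.sum_mem _ fun α hα => ?_
  have hα' : coeff α p ≠ 0 := mem_support_iff.1 hα
  by_cases h : ∑ i, α i ≤ n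
  · refine Submodule.mem_sup_left ?_
    rw [Fil, monomial_mem_restrictSupport]
    left
    simpa using h
  · refine Submodule.mem_sup_right ?_
    rw [Submodule.restrictScalars_mem, monomial_mem_pow_idealOfVars_iff _ _ hα',
      Finsupp.degree_eq_sum]
    omega

lemma adic_map (f : Fin d → R)
    (hX : ∀ i, algebraMap (MvPolynomial (Fin d) k) R (X i) = f i) (n : ℕ) :
    (idealOfVars (Fin d) k ^ n).map (algebraMap (MvPolynomial (Fin d) k) R) =
      Ideal.span (Set.range f) ^ n := by
  rw [Ideal.map_pow, idealOfVars, Ideal.map_span, ← Set.range_comp]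
  congr 3
  funext i; exact hX i

lemma adic_surj (f : Fin d → R)
    (hX : ∀ i, algebraMap (MvPolynomial (Fin d) k) R (X i) = f i)
    {ι : Type} [Fintype ι] {g : ι → R}
    (htop : Submodule.span (MvPolynomial (Fin d) k) (Set.range g) = ⊤) (n : ℕ) :
    Function.Surjective ((Ideal.Quotient.mkₐ k (Ideal.span (Set.range f) ^ n)).toLinearMap ∘ₗ
      (LinearMap.range (comb (k := k) (fun _ : Fin d => 1) n g)).subtype) := by
  intro y
  obtain ⟨x, rfl⟩ := Ideal.Quotient.mk_surjective y
  have hx : x ∈ Submodule.span (MvPolynomial (Fin d) k) (Set.range g) := htop ▸ Submodule.mem_top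
  obtain ⟨p, rfl⟩ := (Submodule.mem_span_range_iff_exists_fun _).1 hx
  have : ∀ i, ∃ q ∈ Fil k (fun _ : Fin d => 1) n, p i - q ∈ idealOfVars (Fin d) k ^ n := by
    intro i
    have hp : p i ∈ Fil k (fun _ : Fin d => 1) n ⊔
      (idealOfVars (Fin d) k ^ n).restrictScalars k := Fil_sup (k := k) (d := d) n ▸ Submodule.mem_top
    obtain ⟨u, hu, v, hv, huv⟩ := Submodule.mem_sup.1 hp
    refine ⟨u, hu, ?_⟩
    rw [← huv, add_sub_cancel_left]; exact hv
  choose q hq hpq using this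
  refine ⟨⟨∑ i, q i • g i, mem_range_comb.2 ⟨q, hq, rfl⟩⟩, ?_⟩
  change Ideal.Quotient.mk _ (∑ i, q i • g i) = Ideal.Quotient.mk _ _
  rw [eq_comm, Ideal.Quotient.eq, ← Finset.sum_sub_distrib]
  refine Ideal.sum_mem _ fun i _ => ?_
  rw [← sub_smul, Algebra.smul_def]
  refine Ideal.mul_mem_right _ _ ?_
  rw [← adic_map f hX]
  exact Ideal.mem_map_of_mem _ (hpq i)

lemma adic_lower (f : Fin d → R)
    (hX : ∀ i, algebraMap (MvPolynomial (Fin d) k) R (X i) = f i)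
    {ι : Type} [Fintype ι] {g : ι → R}
    (htop : Submodule.span (MvPolynomial (Fin d) k) (Set.range g) = ⊤)
    {κ : Type} [Fintype κ] (z : κ → R)
    (hli : LinearIndependent (MvPolynomial (Fin d) k) z)
    (a : MvPolynomial (Fin d) k) (ha : a ≠ 0)
    (b : ι → κ → MvPolynomial (Fin d) k) (hb : ∀ i, a • g i = ∑ l, b i l • z l) :
    ∃ c, ∀ n, c ≤ n → Fintype.card κ * cnt (fun _ : Fin d => 1) (n - c) ≤
      Module.finrank k (R ⧸ Ideal.span (Set.range f) ^ n) := by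
  classical
  obtain ⟨s, hs⟩ := order_lemma a ha
  refine ⟨s + 1, fun n hn => ?_⟩
  have := Fil_finite (k := k) (fun _ : Fin d => 1) (fun _ => one_pos) n
  have := Fil_finite (k := k) (fun _ : Fin d => 1) (fun _ => one_pos) (n - (s + 1))
  have : Module.Finite k (R ⧸ Ideal.span (Set.range f) ^ n) :=
    Module.Finite.of_surjective _ (adic_surj f hX htop n)
  rw [← finrank_pi_Fil (k := k) _ (fun _ => one_pos) _]
  let T := (Ideal.Quotient.mkₐ k (Ideal.span (Set.range f) ^ n)).toLinearMap ∘ₗ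
    (comb (k := k) (fun _ : Fin d => 1) (n - (s + 1)) z)
  refine LinearMap.finrank_le_finrank_of_injective (f := T) ?_
  rw [injective_iff_map_eq_zero]
  intro p hp
  have hx : comb (k := k) (fun _ : Fin d => 1) (n - (s + 1)) z p ∈
      Ideal.span (Set.range f) ^ n := Ideal.Quotient.eq_zero_iff_mem.1 hp
  have hy : ∀ y : R, a • y ∈ Submodule.span (MvPolynomial (Fin d) k) (Set.range z) := by
    intro y
    have hy : y ∈ Submodule.span (MvPolynomial (Fin d) k) (Set.range g) :=
      htop ▸ Submodule.mem_top
    obtain ⟨q, rfl⟩ := (Submodule.mem_span_range_iff_exists_fun _).1 hy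
    rw [Finset.smul_sum]
    refine Submodule.sum_mem _ fun i _ => ?_
    rw [smul_comm, hb]
    exact Submodule.smul_mem _ _ (Submodule.sum_mem _ fun l _ =>
      Submodule.smul_mem _ _ (Submodule.subset_span ⟨l, rfl⟩))
  have hax : ∀ x : R, x ∈ Ideal.span (Set.range f) ^ n →
      a • x ∈ idealOfVars (Fin d) k ^ n •
        Submodule.span (MvPolynomial (Fin d) k) (Set.range z) := by
    intro x hx
    have hx' : x ∈ (idealOfVars (Fin d) k ^ n • ⊤ : Submodule (MvPolynomial (Fin d) k) R) := by
      rw [Ideal.smul_top_eq_map, Submodule.restrictScalars_mem, adic_map f hX]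
      exact hx
    refine Submodule.smul_induction_on hx' ?_ ?_
    · intro r hr y _
      rw [smul_comm]
      exact Submodule.smul_mem_smul hr (hy y)
    · intro x y hx hy
      rw [smul_add]; exact Submodule.add_mem _ hx hy
  obtain ⟨q, hq, hqx⟩ := (Submodule.mem_ideal_smul_span_iff_exists_sum _ _ _).1 (hax _ hx)
  rw [Finsupp.sum_fintype _ _ (by simp), comb_apply, Finset.smul_sum] at hqx
  have h0 : ∑ l, (a * (p l : MvPolynomial (Fin d) k) - q l) • z l = 0 := by
    simp only [sub_smul, mul_smul, Finset.sum_sub_distrib]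
    rw [hqx, sub_self]
  have h1 := Fintype.linearIndependent_iff.1 hli _ h0
  funext l
  apply Subtype.ext
  have h2 : a * (p l : MvPolynomial (Fin d) k) ∈ idealOfVars (Fin d) k ^ ((n - s) + s) := by
    rw [sub_eq_zero.1 (h1 l), Nat.sub_add_cancel (by omega)]
    exact hq l
  have h3 := (mem_pow_idealOfVars_iff _ _).1 (hs _ _ h2)
  have h4 := mem_Fil.1 (p l).2
  change (p l : MvPolynomial (Fin d) k) = 0
  rw [← support_eq_empty, Finset.eq_empty_iff_forall_notMem]
  intro α hα
  have h5 := h3 α hα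
  have h6 := h4 α hα
  rw [Finsupp.degree_eq_sum] at h5
  simp only [one_mul] at h6
  omega

lemma tsum_eq (h𝒜neg : ∀ t : ℤ, t < 0 → 𝒜 t = ⊥) (n : ℕ) :
    ∑' j : ℤ, (if j ≤ (n : ℤ) then (Module.finrank k (𝒜 j) : ℝ) else 0) =
      ((∑ j : Fin (n + 1), Module.finrank k (𝒜 ((j : ℕ) : ℤ)) : ℕ) : ℝ) := by
  classical
  rw [tsum_eq_sum (s := (Finset.range (n + 1)).map Nat.castEmbedding)]
  · rw [Finset.sum_map, Fin.sum_univ_eq_sum_range (fun j => Module.finrank k (𝒜 (j : ℤ)))]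
    push_cast
    refine Finset.sum_congr rfl fun j hj => ?_
    rw [Finset.mem_range] at hj
    rw [if_pos]
    · rfl
    · simp; omega
  · intro j hj
    split_ifs with h
    · rcases lt_or_ge j 0 with h0 | h0
      · rw [h𝒜neg j h0]; simp
      · exfalso
        apply hj
        obtain ⟨m, rfl⟩ := Int.eq_ofNat_of_zero_le h0
        rw [Finset.mem_map]
        exact ⟨m, by simp; omega, rfl⟩
    · rfl

lemma key [Algebra.FiniteType k R]
    (h𝒜neg : ∀ t : ℤ, t < 0 → 𝒜 t = ⊥)
    (f : Fin d → R) (δ : Fin d → ℕ) (hδpos : ∀ j, 0 < δ j)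
    (hfhom : ∀ j, f j ∈ 𝒜 (δ j))
    (hX : ∀ i, algebraMap (MvPolynomial (Fin d) k) R (X i) = f i)
    (hfl : IsFiniteLength R (R ⧸ Ideal.span (Set.range f))) :
    ∃ e : ℝ,
      Tendsto (fun n : ℕ => (d.factorial : ℝ) / (n : ℝ) ^ d *
          ∑' j : ℤ, (if j ≤ (n : ℤ) then (Module.finrank k (𝒜 j) : ℝ) else 0))
        atTop (nhds e) ∧
      Tendsto (fun n : ℕ => (d.factorial : ℝ) / (n : ℝ) ^ d *
          (Module.finrank k (R ⧸ (Ideal.span (Set.range f)) ^ n) : ℝ))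
        atTop (nhds ((∏ j : Fin d, (δ j : ℝ)) * e)) := by
  classical
  have := quot_finite (k := k) _ hfl
  obtain ⟨ι, _, g, c, hg, hspan⟩ := exists_gens 𝒜 h𝒜neg (Ideal.span (Set.range f))
  have hN := nakayama h𝒜neg f δ hδpos hfhom hX g c hg hspan
  have htop := gens_top h𝒜neg hN
  obtain ⟨κ, _, e, a, b, hli, ha, hb⟩ := exists_rank (k := k) (d := d) g
  refine ⟨Fintype.card κ * (∏ i, (δ i : ℝ))⁻¹, ?_, ?_⟩
  · simp only [tsum_eq h𝒜neg]
    obtain ⟨D, hD⟩ := upper δ hδpos g (fun l => g (e l)) a ha b hb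
    refine squeeze δ hδpos _ (Fintype.card ι) D (∑ l, c (e l)) _ ?_ ?_
    · intro n hn
      exact graded_lower h𝒜neg f δ hδpos hfhom hX hN _ (fun l => c (e l)) (fun l => hg _) hli n hn
    · intro n hn
      have := hD n hn
      have := graded_upper hδpos hN n
      omega
  · have hP : (∏ i, (δ i : ℝ)) ≠ 0 :=
      Finset.prod_ne_zero_iff.2 fun i _ => by exact_mod_cast (hδpos i).ne'
    rw [show (∏ i, (δ i : ℝ)) * (Fintype.card κ * (∏ i, (δ i : ℝ))⁻¹) =
      Fintype.card κ * (∏ i : Fin d, (((fun _ => 1 : Fin d → ℕ) i : ℕ) : ℝ))⁻¹ by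
        simp; field_simp]
    obtain ⟨D, hD⟩ := upper (fun _ : Fin d => 1) (fun _ => one_pos) g (fun l => g (e l)) a ha b hb
    obtain ⟨s, hs⟩ := adic_lower f hX htop (fun l => g (e l)) hli a ha b hb
    refine squeeze (fun _ : Fin d => 1) (fun _ => one_pos) _ (Fintype.card ι) D s _ hs ?_
    intro n hn
    have h1 := hD n hn
    have := Fil_finite (k := k) (fun _ : Fin d => 1) (fun _ => one_pos) n
    have := LinearMap.finrank_le_finrank_of_surjective (adic_surj f hX htop n)
    omega

end main
end HS

theorem hilbert_samuel_multiplicity_wrt_hsop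
    (k R : Type) [Field k] [CommRing R] [Algebra k R] [Algebra.FiniteType k R]
    (𝒜 : ℤ → Submodule k R) [GradedAlgebra 𝒜]
    (h𝒜neg : ∀ t : ℤ, t < 0 → 𝒜 t = ⊥)
    (h𝒜zero : ∀ x ∈ 𝒜 0, ∃ c : k, algebraMap k R c = x)
    (d : ℕ) (hd : ringKrullDim R = d)
    (f : Fin d → R) (δ : Fin d → ℕ) (hδpos : ∀ j, 0 < δ j)
    (hfhom : ∀ j, f j ∈ 𝒜 (δ j))
    (hfl : IsFiniteLength R (R ⧸ Ideal.span (Set.range f))) :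
    ∃ e : ℝ,
      Tendsto (fun n : ℕ => (d.factorial : ℝ) / (n : ℝ) ^ d *
          ∑' j : ℤ, (if j ≤ (n : ℤ) then (Module.finrank k (𝒜 j) : ℝ) else 0))
        atTop (nhds e) ∧
      Tendsto (fun n : ℕ => (d.factorial : ℝ) / (n : ℝ) ^ d *
          (Module.finrank k (R ⧸ (Ideal.span (Set.range f)) ^ n) : ℝ))
        atTop (nhds ((∏ j : Fin d, (δ j : ℝ)) * e)) := by
  letI : Algebra (MvPolynomial (Fin d) k) R := (MvPolynomial.aeval f).toAlgebra
  haveI : IsScalarTower k (MvPolynomial (Fin d) k) R :=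
    IsScalarTower.of_algebraMap_eq fun x => ((MvPolynomial.aeval f).commutes x).symm
  exact HS.key h𝒜neg f δ hδpos hfhom (fun i => MvPolynomial.aeval_X f i) hfl

end
end
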